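/- Let α, β ∈ ℝ and let f : ℝ² → ℝ be a smooth function whose 4-jet at the origin is j⁴f(0) = xy² + x³ + αx³y + βy⁴ (a flat umbilic of class Π^f_1 whose cubic part has one real root direction). Let δ = f_xy² − f_xx·f_yy. Then δ(0) = 0, ∇δ(0) = (0,0), and the 2-jet of δ at the origin equals 4y² − 12x², so the Hessian of δ at 0 is indefinite and the parabolic set of f has a node (two transverse smooth branches) at the origin. Moreover, the asymptotic BDE of f is topologically equivalent at 0 to the 1-saddle BDE y dy² + 2x dxdy + y dx² = 0, i.e. the BDE with coefficients (a,b,c) = (y, x, y). -/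

import Mathlib

open Asymptotics Filter Set

noncomputable section

/-- Partial derivative in the first variable (∂/∂x). -/
def pdx (f : ℝ × ℝ → ℝ) (p : ℝ × ℝ) : ℝ := deriv (fun s => f (s, p.2)) p.1

/-- Partial derivative in the second variable (∂/∂y). -/
def pdy (f : ℝ × ℝ → ℝ) (p : ℝ × ℝ) : ℝ := deriv (fun s => f (p.1, s)) p.2

/-- f_xx -/
def fxx (f : ℝ × ℝ → ℝ) : ℝ × ℝ → ℝ := pdx (pdx f)
/-- f_xy -/
def fxy (f : ℝ × ℝ → ℝ) : ℝ × ℝ → ℝ := pdy (pdx f)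
/-- f_yy -/
def fyy (f : ℝ × ℝ → ℝ) : ℝ × ℝ → ℝ := pdy (pdy f)

/-- The discriminant δ = f_xy² − f_xx·f_yy of the asymptotic BDE of `f`. -/
def bdeDiscr (f : ℝ × ℝ → ℝ) : ℝ × ℝ → ℝ := fun p => (fxy f p) ^ 2 - fxx f p * fyy f p

/-- The BDE `a dy² + 2b dxdy + c dx² = 0`, regarded as the family of quadratic
forms `ω_p(v) = a(p)v₂² + 2b(p)v₁v₂ + c(p)v₁²`. -/
def BDE (a b c : ℝ × ℝ → ℝ) : (ℝ × ℝ) → (ℝ × ℝ) → ℝ :=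
  fun p v => a p * v.2 ^ 2 + 2 * b p * v.1 * v.2 + c p * v.1 ^ 2

/-- The asymptotic BDE `f_yy dy² + 2 f_xy dxdy + f_xx dx² = 0` of the surface `z = f(x,y)`. -/
def asymBDE (f : ℝ × ℝ → ℝ) : (ℝ × ℝ) → (ℝ × ℝ) → ℝ := BDE (fyy f) (fxy f) (fxx f)

/-- `j^k f(0) = P` : the degree-k Taylor polynomial of `f` at the origin is `P`,
i.e. `f − P = o(‖(x,y)‖^k)` as `(x,y) → 0`. -/
def HasJetAt0 (f P : ℝ × ℝ → ℝ) (k : ℕ) : Prop :=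
  (fun p => f p - P p) =o[nhds (0 : ℝ × ℝ)] fun p => ‖p‖ ^ k

/-- `γ` is an integral curve of the BDE `ω` on the open interval `I`:
`γ` is C¹ on `I` with nowhere-vanishing derivative annihilating `ω`. -/
def IsIntegralCurveOnBDE (ω : (ℝ × ℝ) → (ℝ × ℝ) → ℝ) (γ : ℝ → ℝ × ℝ) (I : Set ℝ) : Prop :=
  (∃ a b : ℝ, I = Set.Ioo a b) ∧
  ∃ dγ : ℝ → ℝ × ℝ, ContinuousOn dγ I ∧
    ∀ t ∈ I, HasDerivAt γ (dγ t) t ∧ dγ t ≠ 0 ∧ ω (γ t) (dγ t) = 0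

/-- Topological equivalence of two BDEs at the origin: a local homeomorphism
fixing `0` sending integral curves of one to integral curves of the other. -/
def TopEquivAt0 (ω Ω : (ℝ × ℝ) → (ℝ × ℝ) → ℝ) : Prop :=
  ∃ (U V : Set (ℝ × ℝ)) (h hinv : ℝ × ℝ → ℝ × ℝ),
    IsOpen U ∧ IsOpen V ∧ (0 : ℝ × ℝ) ∈ U ∧ (0 : ℝ × ℝ) ∈ V ∧ h 0 = 0 ∧
    ContinuousOn h U ∧ ContinuousOn hinv V ∧
    Set.BijOn h U V ∧ Set.InvOn hinv h U V ∧
    (∀ γ I, IsIntegralCurveOnBDE ω γ I → Set.MapsTo γ I U →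
      ∃ σ J, IsIntegralCurveOnBDE Ω σ J ∧ h '' (γ '' I) = σ '' J) ∧
    (∀ σ J, IsIntegralCurveOnBDE Ω σ J → Set.MapsTo σ J V →
      ∃ γ I, IsIntegralCurveOnBDE ω γ I ∧ hinv '' (σ '' J) = γ '' I)

/-- Smooth equivalence of two BDEs at the origin: a local C^∞ diffeomorphism `h`
fixing `0` pulling one family of quadratic forms back to a nonvanishing multiple
of the other. -/
def SmoothEquivAt0 (ω Ω : (ℝ × ℝ) → (ℝ × ℝ) → ℝ) : Prop :=
  ∃ (U V : Set (ℝ × ℝ)) (h hinv : ℝ × ℝ → ℝ × ℝ) (ρ : ℝ × ℝ → ℝ),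
    IsOpen U ∧ IsOpen V ∧ (0 : ℝ × ℝ) ∈ U ∧ (0 : ℝ × ℝ) ∈ V ∧ h 0 = 0 ∧
    ContDiffOn ℝ (⊤ : ℕ∞) h U ∧ ContDiffOn ℝ (⊤ : ℕ∞) hinv V ∧
    Set.BijOn h U V ∧ Set.InvOn hinv h U V ∧
    ContDiffOn ℝ (⊤ : ℕ∞) ρ U ∧ (∀ p ∈ U, ρ p ≠ 0) ∧
    (∀ p ∈ U, ∀ v : ℝ × ℝ, Ω (h p) (fderiv ℝ h p v) = ρ p * ω p v)

/-- Fiber topological equivalence at `0` of two 2-parameter families of BDEs: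
a homeomorphism `φ` of parameter spaces (onto its image), fixing `0`, such that
corresponding members of the families are topologically equivalent at `0`. -/
def FiberTopEquivAt0 (ω Ω : (ℝ × ℝ) → (ℝ × ℝ) → (ℝ × ℝ) → ℝ) : Prop :=
  ∃ (W : Set (ℝ × ℝ)) (φ ψ : ℝ × ℝ → ℝ × ℝ),
    W ∈ nhds (0 : ℝ × ℝ) ∧ φ 0 = 0 ∧
    ContinuousOn φ W ∧ ContinuousOn ψ (φ '' W) ∧
    Set.InvOn ψ φ W (φ '' W) ∧
    ∀ q ∈ W, TopEquivAt0 (ω q) (Ω (φ q))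

/-!
A smooth function that is `o(‖p‖ ^ (n + 1))` has derivative `o(‖p‖ ^ n)`, so the 3-jet `xy² + x³`
determines the linear parts `2x`, `2y`, `6x` of `f_yy`, `f_xy`, `f_xx`, and with them the 2-jet of
`δ`. In linear coordinates adapted to the tangents `y = ±√3 x` of `{δ = 0}` the form is, up to a
constant, `x dx² + y dy²` to first order. By the implicit function theorem the degenerate locus has
two smooth branches, each with a smooth kernel field; straightening both at once and applying
Hadamard's lemma brings the form to `x α dx² + 2 x y β dxdy + y γ dy²` with `α 0 = γ 0 = 1`. The
discriminant then vanishes exactly on the coordinate axes, which is the node.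

Such a form is definite where `xy > 0`. Where `xy < 0`, the coordinates `U = sign(x)|x|^{3/2}` and
`S = -sign(y)|y|^{3/2}` turn its two null directions into `dU = F(U, S) dS`, for one positive
continuous field `F`, and its reflection in `S`. The field is not Lipschitz, but its oscillation in
`U` is bounded by that of a cube root, a monotone function, and this still forces unique
integrability. The two integral curves through a point are labelled by their intersections with an
axis; matching labels gives a homeomorphism between any two such saddles that respects the integral
curves, including the ones that cross the origin. The 1-saddle `y dy² + 2x dxdy + y dx²` has the
same normal form.
-/

/-! ### Scalar equations controlled by a monotone function -/

/-- A bounded time-dependent scalar field `F x t` with `0 < m ≤ F ≤ M` whose oscillation in `x` is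
at most `K` times that of a monotone function `c` with `|c| ≤ r`, where `K r` is small against `m`.
This is the substitute for a Lipschitz condition: `F` may have infinite slope where `c` has. -/
structure IsMonotoneControlled (F : ℝ → ℝ → ℝ) (c : ℝ → ℝ) (K r m M : ℝ) : Prop where
  continuous_field : Continuous fun p : ℝ × ℝ => F p.1 p.2
  continuous_control : Continuous c
  monotone_control : Monotone c
  abs_control_le (x : ℝ) : |c x| ≤ r
  nonneg : 0 ≤ K
  pos : 0 < m
  le_field (x t : ℝ) : m ≤ F x t
  field_le (x t : ℝ) : F x t ≤ M
  abs_sub_le (x y t : ℝ) : |F x t - F y t| ≤ K * |c x - c y|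
  small : 8 * K * r ≤ m

/-- The Picard iterates for `x' = F x t`, `x t₀ = x₀`, started from a line of slope `m`. -/
def picardIterate (F : ℝ → ℝ → ℝ) (m t₀ x₀ : ℝ) : ℕ → ℝ → ℝ
  | 0 => fun t => x₀ + m * (t - t₀)
  | n + 1 => fun t => x₀ + ∫ τ in t₀..t, F (picardIterate F m t₀ x₀ n τ) τ

namespace IsMonotoneControlled

variable {F : ℝ → ℝ → ℝ} {c : ℝ → ℝ} {K r m M : ℝ}

lemma abs_field_le (h : IsMonotoneControlled F c K r m M) (x t : ℝ) : |F x t| ≤ M := by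
  rw [abs_of_nonneg (h.pos.le.trans (h.le_field x t))]
  exact h.field_le x t

lemma le_bound (h : IsMonotoneControlled F c K r m M) : m ≤ M :=
  (h.le_field 0 0).trans (h.field_le 0 0)

lemma continuous_field_along (h : IsMonotoneControlled F c K r m M) {x : ℝ → ℝ}
    (hx : Continuous x) : Continuous fun t => F (x t) t :=
  h.continuous_field.comp (hx.prodMk continuous_id)

lemma abs_sub_le_mul_osc (h : IsMonotoneControlled F c K r m M) {x y d : ℝ} (hxy : |x - y| ≤ d)
    (t : ℝ) : |F x t - F y t| ≤ K * (c (y + d) - c (y - d)) := by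
  obtain ⟨hlo, hhi⟩ := abs_le.mp hxy
  refine (h.abs_sub_le x y t).trans (mul_le_mul_of_nonneg_left ?_ h.nonneg)
  rw [abs_le]
  have hx₁ := h.monotone_control (by linarith : x ≤ y + d)
  have hx₂ := h.monotone_control (by linarith : y - d ≤ x)
  have hy₁ := h.monotone_control (by linarith : y ≤ y + d)
  have hy₂ := h.monotone_control (by linarith : y - d ≤ y)
  constructor <;> linarith

-- Along `y` the oscillation of `c` is paid for by the motion: integrated against `y'`, it
-- telescopes into a difference of values of the antiderivative of `c`, which is `r`-Lipschitz.
lemma abs_integral_osc_le (h : IsMonotoneControlled F c K r m M) {y y' : ℝ → ℝ}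
    (hy : ∀ t, HasDerivAt y (y' t) t) (hy' : Continuous y') {d : ℝ} (hd : 0 ≤ d) (t₀ t : ℝ) :
    |∫ τ in t₀..t, (c (y τ + d) - c (y τ - d)) * y' τ| ≤ 4 * r * d := by
  have hyc : Continuous y := continuous_iff_continuousAt.mpr fun τ => (hy τ).continuousAt
  have hc := h.continuous_control
  set P : ℝ → ℝ := fun z => ∫ q in (0 : ℝ)..z, c q
  have hP (z : ℝ) : HasDerivAt P (c z) z := hc.integral_hasStrictDerivAt 0 z |>.hasDerivAt
  have hPlip (a : ℝ) : |P (a + d) - P (a - d)| ≤ r * (2 * d) := by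
    have := convex_univ.norm_image_sub_le_of_norm_hasDerivWithin_le
      (fun z _ => (hP z).hasDerivWithinAt) (fun z _ => h.abs_control_le z)
      (mem_univ (a - d)) (mem_univ (a + d))
    rwa [show a + d - (a - d) = 2 * d by ring, Real.norm_eq_abs, Real.norm_eq_abs,
      abs_of_nonneg (by positivity : 0 ≤ 2 * d)] at this
  have hderiv (τ : ℝ) : HasDerivAt (fun τ => P (y τ + d) - P (y τ - d))
      ((c (y τ + d) - c (y τ - d)) * y' τ) τ := by
    rw [sub_mul]
    exact ((hP _).comp τ ((hy τ).add_const d)).fun_sub ((hP _).comp τ ((hy τ).sub_const d))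
  rw [intervalIntegral.integral_eq_sub_of_hasDerivAt (fun τ _ => hderiv τ)
    ((by fun_prop : Continuous _).intervalIntegrable t₀ t)]
  calc _ ≤ |P (y t + d) - P (y t - d)| + |P (y t₀ + d) - P (y t₀ - d)| := abs_sub _ _
    _ ≤ 4 * r * d := by linarith [hPlip (y t), hPlip (y t₀)]

lemma abs_integral_sub_le (h : IsMonotoneControlled F c K r m M) {x y y' : ℝ → ℝ}
    (hy : ∀ t, HasDerivAt y (y' t) t) (hy' : Continuous y') (hm : ∀ t, m ≤ y' t)
    {d t₀ t : ℝ} (hxy : ∀ τ ∈ uIcc t₀ t, |x τ - y τ| ≤ d) :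
    |∫ τ in t₀..t, F (x τ) τ - F (y τ) τ| ≤ d / 2 := by
  have hd : 0 ≤ d := (abs_nonneg _).trans (hxy t₀ left_mem_uIcc)
  have hyc : Continuous y := continuous_iff_continuousAt.mpr fun τ => (hy τ).continuousAt
  have hc := h.continuous_control
  have hosc (τ : ℝ) : 0 ≤ c (y τ + d) - c (y τ - d) :=
    sub_nonneg.mpr (h.monotone_control (by linarith))
  have hbound (τ : ℝ) (hτ : τ ∈ uIcc t₀ t) : ‖F (x τ) τ - F (y τ) τ‖ ≤
      K / m * ((c (y τ + d) - c (y τ - d)) * y' τ) :=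
    calc ‖F (x τ) τ - F (y τ) τ‖ ≤ K * (c (y τ + d) - c (y τ - d)) :=
          h.abs_sub_le_mul_osc (hxy τ hτ) τ
      _ = K / m * ((c (y τ + d) - c (y τ - d)) * m) := by have := h.pos; field_simp
      _ ≤ _ := by
          have := h.nonneg; have := h.pos.le; have := hosc τ
          gcongr; exact hm τ
  calc |∫ τ in t₀..t, F (x τ) τ - F (y τ) τ|
      ≤ |∫ τ in t₀..t, K / m * ((c (y τ + d) - c (y τ - d)) * y' τ)| :=
        intervalIntegral.norm_integral_le_abs_of_norm_le
          (MeasureTheory.ae_restrict_of_forall_mem measurableSet_uIoc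
            fun τ hτ => hbound τ (uIoc_subset_uIcc hτ))
          ((by fun_prop : Continuous _).intervalIntegrable _ _)
    _ ≤ K / m * (4 * r * d) := by
        have hKm : 0 ≤ K / m := div_nonneg h.nonneg h.pos.le
        rw [intervalIntegral.integral_const_mul, abs_mul, abs_of_nonneg hKm]
        gcongr
        exact h.abs_integral_osc_le hy hy' hd t₀ t
    _ = (8 * K * r) * d / (2 * m) := by ring
    _ ≤ m * d / (2 * m) := by have := h.pos; gcongr; exact h.small
    _ = d / 2 := by have := h.pos; field_simp

lemma exists_hasDerivAt_picardIterate (h : IsMonotoneControlled F c K r m M) (t₀ x₀ : ℝ) (n : ℕ) :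
    ∃ y' : ℝ → ℝ, Continuous y' ∧ (∀ t, m ≤ y' t ∧ y' t ≤ M) ∧
      ∀ t, HasDerivAt (picardIterate F m t₀ x₀ n) (y' t) t := by
  induction n with
  | zero =>
    refine ⟨fun _ => m, continuous_const, fun _ => ⟨le_rfl, h.le_bound⟩, fun t => ?_⟩
    simpa [picardIterate] using! (((hasDerivAt_id t).sub_const t₀).const_mul m).const_add x₀
  | succ n ih =>
    obtain ⟨y', -, -, hy⟩ := ih
    have hF := h.continuous_field_along
      (continuous_iff_continuousAt.mpr fun t => (hy t).continuousAt)
    exact ⟨_, hF, fun t => ⟨h.le_field _ t, h.field_le _ t⟩,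
      fun t => (hF.integral_hasStrictDerivAt t₀ t).hasDerivAt.const_add x₀⟩

lemma continuous_picardIterate (h : IsMonotoneControlled F c K r m M) (t₀ x₀ : ℝ) (n : ℕ) :
    Continuous (picardIterate F m t₀ x₀ n) := by
  obtain ⟨y', -, -, hy⟩ := h.exists_hasDerivAt_picardIterate t₀ x₀ n
  exact continuous_iff_continuousAt.mpr fun t => (hy t).continuousAt

lemma lipschitzWith_picardIterate (h : IsMonotoneControlled F c K r m M) (t₀ x₀ : ℝ) (n : ℕ) :
    LipschitzWith M.toNNReal (picardIterate F m t₀ x₀ n) := by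
  obtain ⟨y', -, hy', hy⟩ := h.exists_hasDerivAt_picardIterate t₀ x₀ n
  refine lipschitzWith_of_nnnorm_deriv_le (fun t => (hy t).differentiableAt) fun t => ?_
  rw [(hy t).deriv, ← NNReal.coe_le_coe, Real.coe_toNNReal _ (h.pos.le.trans h.le_bound),
    coe_nnnorm,
    Real.norm_of_nonneg (h.pos.le.trans (hy' t).1)]
  exact (hy' t).2

lemma abs_picardIterate_succ_sub_le (h : IsMonotoneControlled F c K r m M) (t₀ x₀ : ℝ) (n : ℕ)
    (t : ℝ) : |picardIterate F m t₀ x₀ (n + 1) t - picardIterate F m t₀ x₀ n t| ≤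
      (M - m) * |t - t₀| * (1 / 2) ^ n := by
  have hF (k : ℕ) : Continuous fun τ => F (picardIterate F m t₀ x₀ k τ) τ :=
    h.continuous_field_along (h.continuous_picardIterate t₀ x₀ k)
  induction n generalizing t with
  | zero =>
    have hdiff : picardIterate F m t₀ x₀ 1 t - picardIterate F m t₀ x₀ 0 t =
        ∫ τ in t₀..t, F (picardIterate F m t₀ x₀ 0 τ) τ - m := by
      rw [intervalIntegral.integral_sub ((hF 0).intervalIntegrable _ _) (by simp)]
      simp only [picardIterate, intervalIntegral.integral_const, smul_eq_mul]
      ring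
    rw [hdiff, pow_zero, mul_one, ← Real.norm_eq_abs]
    refine intervalIntegral.norm_integral_le_of_norm_le_const fun τ _ => ?_
    rw [Real.norm_of_nonneg (sub_nonneg.mpr (h.le_field _ _))]
    exact sub_le_sub_right (h.field_le _ _) m
  | succ n ih =>
    obtain ⟨y', hy', hbound, hy⟩ := h.exists_hasDerivAt_picardIterate t₀ x₀ n
    have hdiff : picardIterate F m t₀ x₀ (n + 2) t - picardIterate F m t₀ x₀ (n + 1) t =
        ∫ τ in t₀..t, F (picardIterate F m t₀ x₀ (n + 1) τ) τ -
          F (picardIterate F m t₀ x₀ n τ) τ := by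
      rw [intervalIntegral.integral_sub ((hF _).intervalIntegrable _ _)
        ((hF _).intervalIntegrable _ _)]
      exact add_sub_add_left_eq_sub _ _ _
    rw [hdiff, pow_succ, ← mul_assoc, mul_one_div]
    refine h.abs_integral_sub_le hy hy' (fun τ => (hbound τ).1)
      fun τ hτ => (ih τ).trans ?_
    have := sub_nonneg.mpr h.le_bound
    exact mul_le_mul_of_nonneg_right
      (mul_le_mul_of_nonneg_left (abs_sub_left_of_mem_uIcc hτ) this) (by positivity)

lemma exists_tendsto_picardIterate (h : IsMonotoneControlled F c K r m M) (t₀ x₀ t : ℝ) :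
    ∃ x, Tendsto (fun n => picardIterate F m t₀ x₀ n t) atTop (nhds x) :=
  cauchySeq_tendsto_of_complete <|
    cauchySeq_of_le_geometric (1 / 2) ((M - m) * |t - t₀|) (by norm_num) fun n => by
      rw [dist_comm]
      exact h.abs_picardIterate_succ_sub_le t₀ x₀ n t

theorem exists_isIntegralCurve (h : IsMonotoneControlled F c K r m M) (t₀ x₀ : ℝ) :
    ∃ x : ℝ → ℝ, x t₀ = x₀ ∧ IsIntegralCurve x (fun t x => F x t) := by
  choose x hx using h.exists_tendsto_picardIterate t₀ x₀
  have hxcont : Continuous x :=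
    (LipschitzWith.of_dist_le_mul fun s t => le_of_tendsto ((hx s).dist (hx t)) <|
      .of_forall fun n => (h.lipschitzWith_picardIterate t₀ x₀ n).dist_le_mul s t).continuous
  have hFx := h.continuous_field_along hxcont
  have hintegral (t : ℝ) : x t = x₀ + ∫ τ in t₀..t, F (x τ) τ := by
    refine tendsto_nhds_unique ((tendsto_add_atTop_iff_nat 1).mpr (hx t)) <|
      tendsto_const_nhds.add <|
        intervalIntegral.tendsto_integral_filter_of_dominated_convergence (fun _ => M)
          (.of_forall fun n => (h.continuous_field_along
            (h.continuous_picardIterate t₀ x₀ n)).aestronglyMeasurable)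
          (.of_forall fun n => .of_forall fun τ _ => h.abs_field_le _ _) (by simp)
          (.of_forall fun τ _ =>
            (h.continuous_field.tendsto (x τ, τ)).comp ((hx τ).prodMk_nhds tendsto_const_nhds))
  refine ⟨x, by simpa using hintegral t₀, fun t => ?_⟩
  rw [funext hintegral]
  simpa only [← hintegral] using (hFx.integral_hasStrictDerivAt t₀ t).hasDerivAt.const_add x₀

theorem abs_sub_le_two_mul (h : IsMonotoneControlled F c K r m M) {x y : ℝ → ℝ}
    (hx : IsIntegralCurve x fun t x => F x t) (hy : IsIntegralCurve y fun t x => F x t) (s t : ℝ) :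
    |x s - y s| ≤ 2 * |x t - y t| := by
  have hxc : Continuous x := continuous_iff_continuousAt.mpr fun τ => (hx τ).continuousAt
  have hyc : Continuous y := continuous_iff_continuousAt.mpr fun τ => (hy τ).continuousAt
  have hFx := h.continuous_field_along hxc
  have hFy := h.continuous_field_along hyc
  obtain ⟨τ, hτ, hmax⟩ := (isCompact_uIcc (a := t) (b := s)).exists_isMaxOn nonempty_uIcc
    (by fun_prop : Continuous fun τ => |x τ - y τ|).continuousOn
  have hincr : ∫ σ in t..τ, F (x σ) σ - F (y σ) σ = (x τ - y τ) - (x t - y t) :=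
    intervalIntegral.integral_eq_sub_of_hasDerivAt (fun σ _ => (hx σ).sub (hy σ))
      ((hFx.sub hFy).intervalIntegrable _ _)
  have hhalf : |(x τ - y τ) - (x t - y t)| ≤ |x τ - y τ| / 2 := by
    rw [← hincr]
    exact h.abs_integral_sub_le hy hFy (fun σ => h.le_field _ σ) fun σ hσ =>
      hmax (uIcc_subset_uIcc left_mem_uIcc hτ hσ)
  calc |x s - y s| ≤ |x τ - y τ| := hmax right_mem_uIcc
    _ ≤ 2 * |x t - y t| := by
      linarith [abs_sub_abs_le_abs_sub (x τ - y τ) (x t - y t)]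

theorem eq_of_eq_at (h : IsMonotoneControlled F c K r m M) {x y : ℝ → ℝ}
    (hx : IsIntegralCurve x fun t x => F x t) (hy : IsIntegralCurve y fun t x => F x t) {t : ℝ}
    (hxy : x t = y t) : x = y := by
  funext s
  have := h.abs_sub_le_two_mul hx hy s t
  rw [hxy, sub_self, abs_zero, mul_zero] at this
  exact sub_eq_zero.mp (abs_nonpos_iff.mp this)

end IsMonotoneControlled

/-- The flow of a positive bounded scalar field `F`, together with its inverse: `u w s` is the value
at time `s` of the integral curve with value `w` at time `0`, and `l U s` is the value at time `0`
(the label) of the integral curve through `U` at time `s`. -/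
structure IsGlobalFlow (F u l : ℝ → ℝ → ℝ) : Prop where
  continuous_field : Continuous fun p : ℝ × ℝ => F p.1 p.2
  exists_pos_le : ∃ m > 0, ∀ U s, m ≤ F U s
  exists_le : ∃ M, ∀ U s, F U s ≤ M
  field_zero : F 0 0 = 1
  u_zero (w : ℝ) : u w 0 = w
  hasDerivAt_u (w s : ℝ) : HasDerivAt (u w) (F (u w s) s) s
  l_u (w s : ℝ) : l (u w s) s = w
  u_l (U s : ℝ) : u (l U s) s = U
  abs_u_sub_le (w w' s : ℝ) : |u w s - u w' s| ≤ 2 * |w - w'|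
  abs_l_sub_le (U U' s : ℝ) : |l U s - l U' s| ≤ 2 * |U - U'|
  strictMono_l (s : ℝ) : StrictMono fun U => l U s
  l_neg_neg (U s : ℝ) : l (-U) (-s) = -l U s

lemma isIntegralCurve_neg_comp_neg {F : ℝ → ℝ → ℝ}
    (heven : ∀ U s, F (-U) (-s) = F U s) {x : ℝ → ℝ} (hx : IsIntegralCurve x fun t x => F x t) :
    IsIntegralCurve (fun t => -x (-t)) fun t x => F x t := fun t => by
  have hreflect : F (-x (-t)) t = F (x (-t)) (-t) := by simpa using heven (x (-t)) (-t)
  simp only [hreflect]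
  simpa [Function.comp_def] using ((hx (-t)).comp t (hasDerivAt_neg t)).fun_neg

namespace IsMonotoneControlled

variable {F : ℝ → ℝ → ℝ} {c : ℝ → ℝ} {K r m M : ℝ}

lemma lt_of_lt_at (h : IsMonotoneControlled F c K r m M) {x y : ℝ → ℝ}
    (hx : IsIntegralCurve x fun t x => F x t) (hy : IsIntegralCurve y fun t x => F x t) {s : ℝ}
    (hxy : x s < y s) (t : ℝ) : x t < y t := by
  by_contra! hle
  have hcont : Continuous fun τ => y τ - x τ :=
    continuous_iff_continuousAt.mpr fun τ => (hy τ).continuousAt.sub (hx τ).continuousAt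
  obtain ⟨τ, -, hτ⟩ := intermediate_value_uIcc (a := t) (b := s) hcont.continuousOn
    (mem_uIcc.mpr (Or.inl ⟨sub_nonpos.mpr hle, (sub_pos.mpr hxy).le⟩))
  exact hxy.ne (congrFun (h.eq_of_eq_at hx hy (sub_eq_zero.mp hτ).symm) s)

theorem exists_isGlobalFlow (h : IsMonotoneControlled F c K r m M)
    (heven : ∀ U s, F (-U) (-s) = F U s) (hzero : F 0 0 = 1) : ∃ u l, IsGlobalFlow F u l := by
  choose X hX hXcurve using h.exists_isIntegralCurve
  refine ⟨X 0, fun U s => X s U 0, ⟨h.continuous_field, ⟨m, h.pos, h.le_field⟩, ⟨M, h.field_le⟩,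
    hzero, hX 0, fun w => hXcurve 0 w, fun w s => ?_, fun U s => ?_, fun w w' s => ?_,
    fun U U' s => ?_, fun s U U' hU => ?_, fun U s => ?_⟩⟩
  · rw [h.eq_of_eq_at (hXcurve s (X 0 w s)) (hXcurve 0 w) (hX s _), hX]
  · rw [h.eq_of_eq_at (hXcurve 0 (X s U 0)) (hXcurve s U) (hX 0 _), hX]
  · simpa only [hX] using h.abs_sub_le_two_mul (hXcurve 0 w) (hXcurve 0 w') s 0
  · simpa only [hX] using h.abs_sub_le_two_mul (hXcurve s U) (hXcurve s U') 0 s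
  · exact h.lt_of_lt_at (hXcurve s U) (hXcurve s U') (s := s) (by rwa [hX, hX]) 0
  · have hneg := isIntegralCurve_neg_comp_neg heven (hXcurve s U)
    simp [h.eq_of_eq_at (hXcurve (-s) (-U)) hneg (t := -s) (by simp [hX])]

end IsMonotoneControlled

namespace IsGlobalFlow

variable {F u l : ℝ → ℝ → ℝ}

lemma l_zero (h : IsGlobalFlow F u l) (U : ℝ) : l U 0 = U := by
  simpa only [h.u_zero] using h.l_u U 0

lemma strictMono_u (h : IsGlobalFlow F u l) (w : ℝ) : StrictMono (u w) := by
  obtain ⟨m, hm, hF⟩ := h.exists_pos_le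
  exact strictMono_of_hasDerivAt_pos (h.hasDerivAt_u w) fun s => hm.trans_le (hF _ _)

lemma strictAnti_l (h : IsGlobalFlow F u l) (U : ℝ) : StrictAnti (l U) := fun s s' hs => by
  have hU : U < u (l U s) s' := by simpa only [h.u_l] using h.strictMono_u (l U s) hs
  simpa only [h.l_u] using h.strictMono_l s' hU

lemma continuous_u_right (h : IsGlobalFlow F u l) (w : ℝ) : Continuous (u w) :=
  continuous_iff_continuousAt.mpr fun s => (h.hasDerivAt_u w s).continuousAt

lemma exists_abs_u_sub_le (h : IsGlobalFlow F u l) :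
    ∃ M, ∀ w s s', |u w s - u w s'| ≤ M * |s - s'| := by
  obtain ⟨m, hm, hmF⟩ := h.exists_pos_le
  obtain ⟨M, hFM⟩ := h.exists_le
  refine ⟨M, fun w s s' => convex_univ.norm_image_sub_le_of_norm_hasDerivWithin_le
    (fun z _ => (h.hasDerivAt_u w z).hasDerivWithinAt) (fun z _ => ?_) (mem_univ s') (mem_univ s)⟩
  rw [Real.norm_of_nonneg (hm.le.trans (hmF _ _))]
  exact hFM _ _

lemma exists_pos_mul_le_u_sub (h : IsGlobalFlow F u l) :
    ∃ m > 0, ∀ w s s', s ≤ s' → m * (s' - s) ≤ u w s' - u w s := by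
  obtain ⟨m, hm, hF⟩ := h.exists_pos_le
  refine ⟨m, hm, fun w s s' hs => ?_⟩
  have hmono : Monotone fun t => u w t - m * t :=
    monotone_of_hasDerivAt_nonneg (f' := fun t => F (u w t) t - m)
      (fun t => by simpa using (h.hasDerivAt_u w t).fun_sub ((hasDerivAt_id t).const_mul m))
      (fun t => sub_nonneg.mpr (hF _ _))
  linarith [hmono hs]

lemma continuous_l (h : IsGlobalFlow F u l) : Continuous fun p : ℝ × ℝ => l p.1 p.2 := by
  obtain ⟨M, hM⟩ := h.exists_abs_u_sub_le
  refine continuous_iff_continuousAt.mpr fun p => tendsto_iff_dist_tendsto_zero.mpr <|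
    squeeze_zero (g := fun q : ℝ × ℝ => 2 * |q.1 - p.1| + 2 * (M * |p.2 - q.2|))
      (fun _ => dist_nonneg) (fun q => ?_) ?_
  · calc dist (l q.1 q.2) (l p.1 p.2)
        ≤ |l q.1 q.2 - l p.1 q.2| + |l p.1 q.2 - l (u (l p.1 p.2) q.2) q.2| := by
          rw [h.l_u]; exact abs_sub_le _ _ _
      _ ≤ 2 * |q.1 - p.1| + 2 * |u (l p.1 p.2) p.2 - u (l p.1 p.2) q.2| := by
          rw [h.u_l]; exact add_le_add (h.abs_l_sub_le _ _ _) (h.abs_l_sub_le _ _ _)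
      _ ≤ _ := by gcongr; exact hM _ _ _
  · have : Continuous fun q : ℝ × ℝ => 2 * |q.1 - p.1| + 2 * (M * |p.2 - q.2|) := by fun_prop
    simpa using this.tendsto p

lemma continuous_u (h : IsGlobalFlow F u l) : Continuous fun p : ℝ × ℝ => u p.1 p.2 := by
  obtain ⟨M, hM⟩ := h.exists_abs_u_sub_le
  refine continuous_iff_continuousAt.mpr fun p => tendsto_iff_dist_tendsto_zero.mpr <|
    squeeze_zero (g := fun q : ℝ × ℝ => 2 * |q.1 - p.1| + M * |q.2 - p.2|)
      (fun _ => dist_nonneg) (fun q => ?_) ?_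
  · exact (abs_sub_le _ (u p.1 q.2) _).trans (add_le_add (h.abs_u_sub_le _ _ _) (hM _ _ _))
  · have : Continuous fun q : ℝ × ℝ => 2 * |q.1 - p.1| + M * |q.2 - p.2| := by fun_prop
    simpa using this.tendsto p

lemma exists_meeting_time (h : IsGlobalFlow F u l) (w v : ℝ) : ∃ S, u w S = u v (-S) := by
  obtain ⟨m, hm, hgrowth⟩ := h.exists_pos_mul_le_u_sub
  set T := |w - v| / m with hT
  have hT₀ : 0 ≤ T := by positivity
  have hmT : m * T = |w - v| := by rw [hT]; field_simp
  have hforward (w : ℝ) : w + m * T ≤ u w T := by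
    linarith [hgrowth w 0 T hT₀, h.u_zero w]
  have hbackward (w : ℝ) : u w (-T) ≤ w - m * T := by
    linarith [hgrowth w (-T) 0 (neg_nonpos.mpr hT₀), h.u_zero w]
  have hcont : Continuous fun S => u w S - u v (-S) :=
    (h.continuous_u_right w).sub ((h.continuous_u_right v).comp continuous_neg)
  have hsign : (0 : ℝ) ∈ Icc (u w (-T) - u v (- -T)) (u w T - u v (-T)) := by
    rw [neg_neg]
    constructor <;>
      linarith [hforward w, hforward v, hbackward w, hbackward v, neg_abs_le (w - v),
        le_abs_self (w - v)]
  obtain ⟨S, -, hS⟩ := intermediate_value_Icc (by linarith : -T ≤ T) hcont.continuousOn hsign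
  exact ⟨S, sub_eq_zero.mp hS⟩

lemma meeting_time_unique (h : IsGlobalFlow F u l) {w v S S' : ℝ} (hS : u w S = u v (-S))
    (hS' : u w S' = u v (-S')) : S = S' := by
  have hmono : StrictMono fun S => u w S - u v (-S) := fun a b hab =>
    sub_lt_sub (h.strictMono_u w hab) (h.strictMono_u v (neg_lt_neg hab))
  exact hmono.injective (by simp only [hS, hS', sub_self])

lemma continuous_meeting_time (h : IsGlobalFlow F u l) {R : ℝ → ℝ → ℝ}
    (hR : ∀ w v, u w (R w v) = u v (-R w v)) : Continuous fun p : ℝ × ℝ => R p.1 p.2 := by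
  obtain ⟨m, hm, hgrowth⟩ := h.exists_pos_mul_le_u_sub
  refine continuous_iff_continuousAt.mpr fun p => tendsto_iff_dist_tendsto_zero.mpr <|
    squeeze_zero (g := fun q : ℝ × ℝ => (2 * |q.1 - p.1| + 2 * |q.2 - p.2|) / m)
      (fun _ => dist_nonneg) (fun q => ?_) ?_
  · rw [Real.dist_eq, le_div_iff₀ hm]
    obtain ⟨hlo₁, hhi₁⟩ := abs_le.mp (h.abs_u_sub_le q.1 p.1 (R p.1 p.2))
    obtain ⟨hlo₂, hhi₂⟩ := abs_le.mp (h.abs_u_sub_le q.2 p.2 (-R p.1 p.2))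
    rcases le_total (R q.1 q.2) (R p.1 p.2) with hle | hle
    · rw [abs_of_nonpos (sub_nonpos.mpr hle)]
      linarith [hgrowth q.1 _ _ hle, (h.strictMono_u q.2).monotone (neg_le_neg hle), hR q.1 q.2,
        hR p.1 p.2]
    · rw [abs_of_nonneg (sub_nonneg.mpr hle)]
      linarith [hgrowth q.1 _ _ hle, (h.strictMono_u q.2).monotone (neg_le_neg hle), hR q.1 q.2,
        hR p.1 p.2]
  · have : Continuous fun q : ℝ × ℝ => (2 * |q.1 - p.1| + 2 * |q.2 - p.2|) / m := by fun_prop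
    simpa using this.tendsto p

-- The point `(U, S)` is recovered from the labels of the two curves through it: they meet there.
theorem exists_straightening_homeomorph (h : IsGlobalFlow F u l) :
    ∃ H : (ℝ × ℝ) ≃ₜ (ℝ × ℝ), ∀ U S,
      (H (U, S)).1 - (H (U, S)).2 = l U S ∧ (H (U, S)).1 + (H (U, S)).2 = l U (-S) := by
  choose R hR using h.exists_meeting_time
  have hl := h.continuous_l
  have hl' : Continuous fun p : ℝ × ℝ => l p.1 (-p.2) :=
    hl.comp (by fun_prop : Continuous fun p : ℝ × ℝ => (p.1, -p.2))
  have hR' : Continuous fun q : ℝ × ℝ => R (q.1 - q.2) (q.1 + q.2) :=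
    (h.continuous_meeting_time hR).comp
      (by fun_prop : Continuous fun q : ℝ × ℝ => (q.1 - q.2, q.1 + q.2))
  have hu : Continuous fun q : ℝ × ℝ => u (q.1 - q.2) (R (q.1 - q.2) (q.1 + q.2)) :=
    h.continuous_u.comp ((by fun_prop : Continuous fun q : ℝ × ℝ => q.1 - q.2).prodMk hR')
  have hdiff (U S : ℝ) : (l U S + l U (-S)) / 2 - (l U (-S) - l U S) / 2 = l U S := by ring
  have hsum (U S : ℝ) : (l U S + l U (-S)) / 2 + (l U (-S) - l U S) / 2 = l U (-S) := by ring
  let H : (ℝ × ℝ) ≃ₜ (ℝ × ℝ) :=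
    { toFun := fun p => ((l p.1 p.2 + l p.1 (-p.2)) / 2, (l p.1 (-p.2) - l p.1 p.2) / 2)
      invFun := fun q => (u (q.1 - q.2) (R (q.1 - q.2) (q.1 + q.2)), R (q.1 - q.2) (q.1 + q.2))
      left_inv := fun ⟨U, S⟩ => by
        have hmeet : R (l U S) (l U (-S)) = S :=
          h.meeting_time_unique (hR _ _) (by simp only [h.u_l])
        simp only [hdiff, hsum, hmeet, h.u_l]
      right_inv := fun ⟨x, y⟩ => by
        simp only [h.l_u]
        rw [hR, h.l_u]
        ext <;> simp only <;> ring
      continuous_toFun := ((hl.add hl').div_const 2).prodMk ((hl'.sub hl).div_const 2)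
      continuous_invFun := hu.prodMk hR' }
  exact ⟨H, fun U S => ⟨hdiff U S, hsum U S⟩⟩

end IsGlobalFlow

/-- The odd power `x ↦ sign(x)|x|^{3/2}`. It turns the singular field `√|x| dx = ± √|y| dy` into a
regular one. -/
def semicube (x : ℝ) : ℝ := x * √|x|

lemma continuous_semicube : Continuous semicube := by unfold semicube; fun_prop

lemma semicube_neg (x : ℝ) : semicube (-x) = -semicube x := by simp [semicube]

lemma semicube_zero : semicube 0 = 0 := by simp [semicube]

lemma semicube_one : semicube 1 = 1 := by simp [semicube]

lemma semicube_mul (x y : ℝ) : semicube (x * y) = semicube x * semicube y := by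
  simp only [semicube, abs_mul, Real.sqrt_mul (abs_nonneg x)]; ring

lemma hasDerivAt_semicube_of_pos {x : ℝ} (hx : 0 < x) :
    HasDerivAt semicube (3 / 2 * √|x|) x := by
  have hderiv : HasDerivAt (fun y : ℝ => y * √y) (1 * √x + x * (1 / (2 * √x))) x :=
    (hasDerivAt_id x).mul ((hasDerivAt_id x).sqrt hx.ne')
  have heq : semicube =ᶠ[nhds x] fun y : ℝ => y * √y := by
    filter_upwards [lt_mem_nhds hx] with y hy
    simp only [semicube, abs_of_pos hy]
  refine (hderiv.congr_of_eventuallyEq heq).congr_deriv ?_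
  have hsqrt : √x ≠ 0 := (Real.sqrt_pos.mpr hx).ne'
  have hsq : √x ^ 2 = x := Real.sq_sqrt hx.le
  rw [abs_of_pos hx]
  field_simp
  linarith

lemma hasDerivAt_semicube_zero : HasDerivAt semicube 0 0 := by
  rw [hasDerivAt_iff_tendsto_slope]
  have hcont : Continuous fun y : ℝ => √|y| := by fun_prop
  have hlim : Tendsto (fun y : ℝ => √|y|) (nhdsWithin 0 {0}ᶜ) (nhds 0) := by
    simpa using (hcont.tendsto 0).mono_left nhdsWithin_le_nhds
  refine hlim.congr' ?_
  filter_upwards [self_mem_nhdsWithin] with y (hy : y ≠ 0)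
  simp [slope, semicube, hy]

lemma hasDerivAt_semicube (x : ℝ) : HasDerivAt semicube (3 / 2 * √|x|) x := by
  rcases lt_trichotomy x 0 with hx | rfl | hx
  · have hodd : semicube = fun y => -semicube (-y) := by simp [semicube_neg]
    rw [hodd]
    have hneg := hasDerivAt_semicube_of_pos (neg_pos.mpr hx)
    simpa [Function.comp_def] using (hneg.comp x (hasDerivAt_neg x)).fun_neg
  · simpa using hasDerivAt_semicube_zero
  · exact hasDerivAt_semicube_of_pos hx

lemma strictMono_semicube : StrictMono semicube := by
  refine strictMono_of_odd_strictMonoOn_nonneg semicube_neg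
    fun x (hx : 0 ≤ x) y (hy : 0 ≤ y) hxy => ?_
  simp only [semicube, abs_of_nonneg hx, abs_of_nonneg hy]
  exact mul_lt_mul'' hxy (Real.sqrt_lt_sqrt hx hxy) hx (Real.sqrt_nonneg x)

lemma surjective_semicube : Function.Surjective semicube := by
  have htop : Tendsto semicube atTop atTop := by
    refine tendsto_atTop_mono' _ ?_ tendsto_id
    filter_upwards [eventually_ge_atTop (1 : ℝ)] with x hx
    have hx₀ : 0 ≤ x := zero_le_one.trans hx
    simpa only [semicube, id, abs_of_nonneg hx₀] using
      le_mul_of_one_le_right hx₀ (Real.one_le_sqrt.mpr hx)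
  refine continuous_semicube.surjective htop ?_
  refine (tendsto_neg_atTop_atBot.comp (htop.comp tendsto_neg_atBot_atTop)).congr fun x => ?_
  simp [semicube_neg]

/-- `semicube` as a homeomorphism of the line. -/
def semicubeHomeomorph : ℝ ≃ₜ ℝ :=
  (strictMono_semicube.orderIsoOfSurjective semicube surjective_semicube).toHomeomorph

/-- The inverse `y ↦ sign(y)|y|^{2/3}` of `semicube`. -/
def semicubeInv (y : ℝ) : ℝ := semicubeHomeomorph.symm y

lemma semicube_semicubeInv (y : ℝ) : semicube (semicubeInv y) = y :=
  semicubeHomeomorph.apply_symm_apply y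

lemma semicubeInv_semicube (x : ℝ) : semicubeInv (semicube x) = x :=
  semicubeHomeomorph.symm_apply_apply x

lemma continuous_semicubeInv : Continuous semicubeInv := semicubeHomeomorph.symm.continuous

lemma semicube_eq_zero {x : ℝ} : semicube x = 0 ↔ x = 0 := by
  simpa only [semicube_zero] using strictMono_semicube.injective.eq_iff (a := x) (b := 0)

lemma semicube_pos {x : ℝ} : 0 < semicube x ↔ 0 < x := by
  simpa only [semicube_zero] using strictMono_semicube.lt_iff_lt (a := 0) (b := x)

lemma semicube_lt_zero {x : ℝ} : semicube x < 0 ↔ x < 0 := by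
  simpa only [semicube_zero] using strictMono_semicube.lt_iff_lt (a := x) (b := 0)

lemma semicubeInv_zero : semicubeInv 0 = 0 := by
  simpa only [semicube_zero] using semicubeInv_semicube 0

lemma semicubeInv_one : semicubeInv 1 = 1 := by
  simpa only [semicube_one] using semicubeInv_semicube 1

lemma semicubeInv_div_semicube (x : ℝ) {y : ℝ} (hy : y ≠ 0) :
    semicubeInv (x / semicube y) = semicubeInv x / y := by
  apply strictMono_semicube.injective
  rw [semicube_semicubeInv, div_eq_iff (mt semicube_eq_zero.mp hy), ← semicube_mul,
    div_mul_cancel₀ _ hy, semicube_semicubeInv]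

lemma hasDerivAt_semicubeInv {y : ℝ} (hy : semicubeInv y ≠ 0) :
    HasDerivAt semicubeInv (3 / 2 * √|semicubeInv y|)⁻¹ y := by
  refine (hasDerivAt_semicube (semicubeInv y)).of_local_left_inverse
    continuous_semicubeInv.continuousAt ?_ (Eventually.of_forall semicube_semicubeInv)
  have : 0 < √|semicubeInv y| := Real.sqrt_pos.mpr (abs_pos.mpr hy)
  positivity

lemma IsGlobalFlow.hasDerivAt_label_of_tangent {F u l : ℝ → ℝ → ℝ} (h : IsGlobalFlow F u l)
    {U s : ℝ → ℝ} {U' s' t : ℝ} (hU : HasDerivAt U U' t) (hs : HasDerivAt s s' t)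
    (htangent : U' = F (U t) (s t) * s') : HasDerivAt (fun t => l (U t) (s t)) 0 t := by
  obtain ⟨w, hlabel⟩ : ∃ w, l (U t) (s t) = w := ⟨_, rfl⟩
  have hw : u w (s t) = U t := by rw [← hlabel, h.u_l]
  have hdist : HasDerivAt (fun r => U r - u w (s r)) 0 t := by
    refine (hU.fun_sub ((h.hasDerivAt_u w (s t)).comp t hs)).congr_deriv ?_
    rw [hw, htangent, sub_self]
  rw [hasDerivAt_iff_isLittleO] at hdist ⊢
  simp only [hw, hlabel, sub_self, smul_zero, sub_zero] at hdist ⊢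
  refine IsBigO.trans_isLittleO (IsBigO.of_bound 2 (Eventually.of_forall fun r => ?_)) hdist
  simpa only [h.l_u, Real.norm_eq_abs] using h.abs_l_sub_le (U r) (u w (s r)) (s r)

lemma exists_eq_Ioo_of_isOpen_of_isPreconnected {R : Set ℝ} (hopen : IsOpen R)
    (hconn : IsPreconnected R) (hbdd : Bornology.IsBounded R) : ∃ a b, R = Ioo a b := by
  rcases R.eq_empty_or_nonempty with rfl | hne
  · exact ⟨0, 0, (Ioo_self 0).symm⟩
  · have hsub : R ⊆ Icc (sInf R) (sSup R) := subset_Icc_csInf_csSup hbdd.bddBelow hbdd.bddAbove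
    refine ⟨sInf R, sSup R, Subset.antisymm ?_
      (IsConnected.Ioo_csInf_csSup_subset ⟨hne, hconn⟩ hbdd.bddBelow hbdd.bddAbove)⟩
    simpa only [interior_Icc] using interior_maximal hsub hopen

lemma frequently_mul_pos_of_hasDerivAt {f g : ℝ → ℝ} {f' t : ℝ} (hf : HasDerivAt f f' t)
    (hft : f t = 0) (hf' : f' ≠ 0) (hg : ContinuousAt g t) (hgt : g t ≠ 0) :
    ∃ᶠ r in nhds t, 0 < f r * g r := by
  intro hnonpos
  have hmax : IsLocalMax (fun r => f r * g t) t := by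
    have hpos : ∀ᶠ r in nhds t, 0 < g r * g t :=
      (hg.mul_const (g t)).eventually_const_lt (mul_self_pos.mpr hgt)
    filter_upwards [hnonpos, hpos] with r hr hpos
    rw [hft, zero_mul]
    have hprod : f r * g t * (g r * g r) ≤ 0 := by
      calc f r * g t * (g r * g r) = f r * g r * (g r * g t) := by ring
        _ ≤ 0 := mul_nonpos_of_nonpos_of_nonneg (not_lt.mp hr) hpos.le
    exact nonpos_of_mul_nonpos_left hprod (mul_self_pos.mpr (left_ne_zero_of_mul hpos.ne'))
  exact mul_ne_zero hf' hgt (hmax.hasDerivAt_eq_zero (hf.mul_const (g t)))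

/-! ### Integral curves in the sectors of a saddle -/

/-- The sign `1` for `true` and `-1` for `false`. -/
def signOf (b : Bool) : ℝ := if b then 1 else -1

@[simp] lemma signOf_true : signOf true = 1 := rfl

@[simp] lemma signOf_false : signOf false = -1 := rfl

lemma signOf_mul_self (b : Bool) : signOf b * signOf b = 1 := by cases b <;> norm_num

lemma exists_forall_of_signOf_mul_pos {X : Type*} [TopologicalSpace X] {s : Set X}
    (hs : IsPreconnected s) {g : X → ℝ} (hg : ContinuousOn g s) {P : X → Bool → Prop}
    (hP : ∀ x ∈ s, ∃ b, P x b) (hsign : ∀ x ∈ s, ∀ b, P x b → 0 < signOf b * g x) :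
    ∃ b, ∀ x ∈ s, P x b := by
  by_contra! hcon
  obtain ⟨x, hx, hxP⟩ := hcon true
  obtain ⟨y, hy, hyP⟩ := hcon false
  have hxneg : g x < 0 := by
    obtain ⟨b, hb⟩ := hP x hx
    cases b
    · simpa using hsign x hx _ hb
    · exact absurd hb hxP
  have hypos : 0 < g y := by
    obtain ⟨b, hb⟩ := hP y hy
    cases b
    · exact absurd hb hyP
    · simpa using hsign y hy _ hb
  obtain ⟨z, hz, hz₀⟩ := hs.intermediate_value hx hy hg ⟨hxneg.le, hypos.le⟩
  obtain ⟨b, hb⟩ := hP z hz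
  simpa [hz₀] using hsign z hz b hb

/-- The open quadrants `x > 0 > y` (for `true`) and `x < 0 < y` (for `false`), in which the forms
`x dx² + y dy²` are hyperbolic. -/
def sector (b : Bool) : Set (ℝ × ℝ) := {p | 0 < signOf b * p.1 ∧ signOf b * p.2 < 0}

lemma isOpen_sector (b : Bool) : IsOpen (sector b) :=
  (isOpen_lt continuous_const (continuous_const.mul continuous_fst)).inter
    (isOpen_lt (continuous_const.mul continuous_snd) continuous_const)

lemma fst_ne_zero_of_mem_sector {b : Bool} {p : ℝ × ℝ} (h : p ∈ sector b) : p.1 ≠ 0 :=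
  right_ne_zero_of_mul h.1.ne'

lemma snd_ne_zero_of_mem_sector {b : Bool} {p : ℝ × ℝ} (h : p ∈ sector b) : p.2 ≠ 0 :=
  right_ne_zero_of_mul h.2.ne

lemma exists_mem_sector_of_mul_neg {p : ℝ × ℝ} (h : p.1 * p.2 < 0) : ∃ b, p ∈ sector b := by
  rcases mul_neg_iff.mp h with ⟨h₁, h₂⟩ | ⟨h₁, h₂⟩
  · exact ⟨true, by simpa [sector] using ⟨h₁, h₂⟩⟩
  · exact ⟨false, by simpa [sector] using ⟨h₁, h₂⟩⟩

/-- The linear form in `w` whose kernel is the direction of the family `κ` at the point `p` of the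
sector `b`: it is `√|x| dx + κ F(U, κS) √|y| dy` in the coordinates `U = semicube x` and
`S = semicube (-y)`, in which the directions of the family satisfy `dU = F(U, κS) d(κS)`. -/
def nullFactor (F : Bool → ℝ → ℝ → ℝ) (b κ : Bool) (p w : ℝ × ℝ) : ℝ :=
  √|p.1| * w.1 + signOf κ * F b (semicube p.1) (signOf κ * semicube (-p.2)) * √|p.2| * w.2

/-- On a bounded neighbourhood `N` of `0` the quadratic forms `ω` are of saddle type: they vanish at
`0`, are definite where `xy > 0`, and in each sector their null directions are those of the two
families defined by a globally integrable field `F b`, whose flow is `u b` with labels `l b`. -/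
structure HasSectorFlows (ω : ℝ × ℝ → ℝ × ℝ → ℝ) (N : Set (ℝ × ℝ)) (F u l : Bool → ℝ → ℝ → ℝ) :
    Prop where
  flow (b : Bool) : IsGlobalFlow (F b) (u b) (l b)
  isOpen : IsOpen N
  isBounded : Bornology.IsBounded N
  zero_mem : (0 : ℝ × ℝ) ∈ N
  null_zero (w : ℝ × ℝ) : ω 0 w = 0
  null_iff {b : Bool} {p : ℝ × ℝ} (w : ℝ × ℝ) (hp : p ∈ N) (hb : p ∈ sector b) :
    ω p w = 0 ↔ ∃ κ, nullFactor F b κ p w = 0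
  eq_zero_of_mul_pos {p w : ℝ × ℝ} (hp : p ∈ N) (hpos : 0 < p.1 * p.2) (hw : ω p w = 0) : w = 0
  snd_eq_zero {p w : ℝ × ℝ} (hp : p ∈ N) (h₁ : p.1 = 0) (h₂ : p.2 ≠ 0) (hw : ω p w = 0) : w.2 = 0
  fst_eq_zero {p w : ℝ × ℝ} (hp : p ∈ N) (h₁ : p.1 ≠ 0) (h₂ : p.2 = 0) (hw : ω p w = 0) : w.1 = 0

/-- The curve of label `w` of the family `κ` in the sector `b`. -/
def leaf (l : Bool → ℝ → ℝ → ℝ) (b κ : Bool) (w : ℝ) : Set (ℝ × ℝ) :=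
  {p | p ∈ sector b ∧ l b (semicube p.1) (signOf κ * semicube (-p.2)) = w}

/-- The curve formed by the origin and the two leaves, one in each sector, that end there. -/
def separatrix (l : Bool → ℝ → ℝ → ℝ) : Set (ℝ × ℝ) := {p | p = 0 ∨ ∃ b, p ∈ leaf l b true 0}

/-- A maximal solution curve: a leaf of one of the sectors or the separatrix. -/
def IsLeaf (l : Bool → ℝ → ℝ → ℝ) (L : Set (ℝ × ℝ)) : Prop :=
  (∃ b κ w, L = leaf l b κ w) ∨ L = separatrix l

/-- A relatively open connected piece of a maximal solution curve. -/
def IsArc (l : Bool → ℝ → ℝ → ℝ) (T : Set (ℝ × ℝ)) : Prop :=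
  ∃ L O, IsLeaf l L ∧ IsOpen O ∧ T = O ∩ L ∧ IsPreconnected T

/-- `γ` is a `C¹` curve in `N` on the open interval `I` whose derivative `γ'` is nonzero and null
for `ω`. -/
structure IsNullCurve (ω : ℝ × ℝ → ℝ × ℝ → ℝ) (N : Set (ℝ × ℝ)) (γ γ' : ℝ → ℝ × ℝ) (I : Set ℝ) :
    Prop where
  isOpen : IsOpen I
  isPreconnected : IsPreconnected I
  continuousOn_deriv : ContinuousOn γ' I
  hasDerivAt {t : ℝ} (ht : t ∈ I) : HasDerivAt γ (γ' t) t
  deriv_ne_zero {t : ℝ} (ht : t ∈ I) : γ' t ≠ 0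
  null {t : ℝ} (ht : t ∈ I) : ω (γ t) (γ' t) = 0
  mem {t : ℝ} (ht : t ∈ I) : γ t ∈ N

namespace IsNullCurve

variable {ω : ℝ × ℝ → ℝ × ℝ → ℝ} {N : Set (ℝ × ℝ)} {γ γ' : ℝ → ℝ × ℝ} {I J : Set ℝ}

lemma inter (hγ : IsNullCurve ω N γ γ' I) (hJ : IsOpen J) (hJ' : IsPreconnected J) :
    IsNullCurve ω N γ γ' (I ∩ J) where
  isOpen := hγ.isOpen.inter hJ
  isPreconnected :=
    (hγ.isPreconnected.ordConnected.inter hJ'.ordConnected).isPreconnected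
  continuousOn_deriv := hγ.continuousOn_deriv.mono inter_subset_left
  hasDerivAt ht := hγ.hasDerivAt ht.1
  deriv_ne_zero ht := hγ.deriv_ne_zero ht.1
  null ht := hγ.null ht.1
  mem ht := hγ.mem ht.1

lemma continuousOn (hγ : IsNullCurve ω N γ γ' I) : ContinuousOn γ I :=
  fun _ ht => (hγ.hasDerivAt ht).continuousAt.continuousWithinAt

lemma hasDerivAt_fst (hγ : IsNullCurve ω N γ γ' I) {t : ℝ} (ht : t ∈ I) :
    HasDerivAt (fun r => (γ r).1) (γ' t).1 t :=
  (hasFDerivAt_fst (𝕜 := ℝ) (p := γ t)).comp_hasDerivAt t (hγ.hasDerivAt ht)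

lemma hasDerivAt_snd (hγ : IsNullCurve ω N γ γ' I) {t : ℝ} (ht : t ∈ I) :
    HasDerivAt (fun r => (γ r).2) (γ' t).2 t :=
  (hasFDerivAt_snd (𝕜 := ℝ) (p := γ t)).comp_hasDerivAt t (hγ.hasDerivAt ht)

end IsNullCurve

namespace IsGlobalFlow

variable {F u l : Bool → ℝ → ℝ → ℝ} {b κ : Bool}

lemma field_pos {F u l : ℝ → ℝ → ℝ} (h : IsGlobalFlow F u l) (U s : ℝ) : 0 < F U s := by
  obtain ⟨m, hm, hF⟩ := h.exists_pos_le
  exact hm.trans_le (hF U s)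

lemma signOf_mul_pos_of_nullFactor_eq_zero (h : IsGlobalFlow (F b) (u b) (l b)) {p w : ℝ × ℝ}
    (hp : p ∈ sector b) (hw : w ≠ 0) (hnull : nullFactor F b κ p w = 0) :
    0 < signOf κ * -(w.1 * w.2) := by
  have hA : 0 < √|p.1| := Real.sqrt_pos.mpr (abs_pos.mpr (fst_ne_zero_of_mem_sector hp))
  have hB : 0 < F b (semicube p.1) (signOf κ * semicube (-p.2)) * √|p.2| :=
    mul_pos (h.field_pos _ _)
      (Real.sqrt_pos.mpr (abs_pos.mpr (snd_ne_zero_of_mem_sector hp)))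
  rw [nullFactor, mul_assoc (signOf κ)] at hnull
  generalize F b (semicube p.1) (signOf κ * semicube (-p.2)) * √|p.2| = B at hB hnull
  have hw₂ : w.2 ≠ 0 := fun h₂ => hw (Prod.ext (by simpa [h₂, hA.ne'] using hnull) h₂)
  refine pos_of_mul_pos_right (a := √|p.1|) ?_ hA.le
  calc 0 < B * (w.2 * w.2) := mul_pos hB (mul_self_pos.mpr hw₂)
    _ = √|p.1| * (signOf κ * -(w.1 * w.2)) := by
      linear_combination signOf κ * w.2 * hnull - B * w.2 ^ 2 * signOf_mul_self κ

lemma eq_true_of_leaf_zero (h : IsGlobalFlow (F b) (u b) (l b)) {p : ℝ × ℝ}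
    (hp : p ∈ leaf l b κ 0) : κ = true := by
  obtain ⟨⟨h₁, h₂⟩, hlabel⟩ := hp
  have hanti := h.strictAnti_l (semicube p.1)
  have hzero := h.l_zero (semicube p.1)
  by_contra hκ
  rw [Bool.not_eq_true] at hκ
  subst hκ
  cases b
  · have hU : semicube p.1 < 0 := semicube_lt_zero.mpr (by simpa using h₁)
    have hS : 0 < -semicube (-p.2) := neg_pos.mpr (semicube_lt_zero.mpr (by simpa using h₂))
    have := hanti hS
    simp only [signOf_false, neg_one_mul] at hlabel
    linarith
  · have hU : 0 < semicube p.1 := semicube_pos.mpr (by simpa using h₁)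
    have hS : -semicube (-p.2) < 0 := neg_lt_zero.mpr (semicube_pos.mpr (by simpa using h₂))
    have := hanti hS
    simp only [signOf_false, neg_one_mul] at hlabel
    linarith

lemma label_eq_zero_of_tendsto_zero (h : IsGlobalFlow (F b) (u b) (l b)) {X : Type*}
    {f : Filter X} [f.NeBot] {γ : X → ℝ × ℝ} (hγ : Tendsto γ f (nhds 0)) {w : ℝ}
    (hleaf : ∀ᶠ t in f, γ t ∈ leaf l b κ w) : w = 0 := by
  have hcont : Continuous fun p : ℝ × ℝ =>
      l b (semicube p.1) (signOf κ * semicube (-p.2)) :=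
    h.continuous_l.comp ((continuous_semicube.comp continuous_fst).prodMk
      (continuous_const.mul (continuous_semicube.comp continuous_snd.neg)))
  have hlim := (hcont.tendsto 0).comp hγ
  simp only [Prod.fst_zero, Prod.snd_zero, neg_zero, semicube_zero, mul_zero, h.l_zero] at hlim
  exact tendsto_nhds_unique
    (tendsto_const_nhds.congr' (hleaf.mono fun t ht => ht.2.symm)) hlim

lemma exists_abs_fst_le_of_mem_leaf (h : IsGlobalFlow (F b) (u b) (l b)) :
    ∃ C, ∀ p ∈ leaf l b true 0, |p.1| ≤ C * |p.2| := by
  obtain ⟨M, hM⟩ := h.exists_abs_u_sub_le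
  have habs (x : ℝ) : |semicube x| = semicube |x| := by
    simp only [semicube, abs_mul, abs_abs, abs_of_nonneg (Real.sqrt_nonneg _)]
  refine ⟨semicubeInv M, fun p hp => strictMono_semicube.le_iff_le.mp ?_⟩
  have hflow : u b 0 (semicube (-p.2)) = semicube p.1 := by
    simpa [← hp.2] using h.u_l (semicube p.1) (semicube (-p.2))
  simpa only [semicube_mul, semicube_semicubeInv, hflow, h.u_zero, sub_zero, habs, abs_neg] using
    hM 0 (semicube (-p.2)) 0

end IsGlobalFlow

namespace HasSectorFlows

variable {ω : ℝ × ℝ → ℝ × ℝ → ℝ} {N : Set (ℝ × ℝ)} {F u l : Bool → ℝ → ℝ → ℝ}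
  {γ γ' : ℝ → ℝ × ℝ} {I : Set ℝ} {t : ℝ}

lemma fst_mul_snd_nonpos (h : HasSectorFlows ω N F u l) (hγ : IsNullCurve ω N γ γ' I)
    (ht : t ∈ I) : (γ t).1 * (γ t).2 ≤ 0 :=
  not_lt.mp fun hpos =>
    hγ.deriv_ne_zero ht (h.eq_zero_of_mul_pos (hγ.mem ht) hpos (hγ.null ht))

-- On an axis the null direction is transverse to it, so the curve would enter `xy > 0`.
lemma exists_mem_sector (h : HasSectorFlows ω N F u l) (hγ : IsNullCurve ω N γ γ' I)
    (ht : t ∈ I) (hne : γ t ≠ 0) : ∃ b, γ t ∈ sector b := by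
  have hnonpos : ∀ᶠ r in nhds t, (γ r).1 * (γ r).2 ≤ 0 :=
    (hγ.isOpen.eventually_mem ht).mono fun r hr => h.fst_mul_snd_nonpos hγ hr
  have h₁ := hγ.hasDerivAt_fst ht
  have h₂ := hγ.hasDerivAt_snd ht
  have hfst : (γ t).1 ≠ 0 := fun hfst => by
    have hsnd : (γ t).2 ≠ 0 := fun hsnd => hne (Prod.ext hfst hsnd)
    have hdsnd := h.snd_eq_zero (hγ.mem ht) hfst hsnd (hγ.null ht)
    have hdfst : (γ' t).1 ≠ 0 := fun hd => hγ.deriv_ne_zero ht (Prod.ext hd hdsnd)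
    obtain ⟨r, hpos, hr⟩ := ((frequently_mul_pos_of_hasDerivAt h₁ hfst hdfst h₂.continuousAt
      hsnd).and_eventually hnonpos).exists
    exact hpos.not_ge hr
  have hsnd : (γ t).2 ≠ 0 := fun hsnd => by
    have hdfst := h.fst_eq_zero (hγ.mem ht) hfst hsnd (hγ.null ht)
    have hdsnd : (γ' t).2 ≠ 0 := fun hd => hγ.deriv_ne_zero ht (Prod.ext hdfst hd)
    obtain ⟨r, hpos, hr⟩ := ((frequently_mul_pos_of_hasDerivAt h₂ hsnd hdsnd h₁.continuousAt
      hfst).and_eventually hnonpos).exists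
    exact hpos.not_ge (mul_comm (γ r).2 _ ▸ hr)
  exact exists_mem_sector_of_mul_neg
    ((h.fst_mul_snd_nonpos hγ ht).lt_of_ne (mul_ne_zero hfst hsnd))

lemma exists_forall_mem_sector (h : HasSectorFlows ω N F u l) (hγ : IsNullCurve ω N γ γ' I)
    (hne : ∀ t ∈ I, γ t ≠ 0) : ∃ b, ∀ t ∈ I, γ t ∈ sector b :=
  exists_forall_of_signOf_mul_pos hγ.isPreconnected
    (continuous_fst.comp_continuousOn hγ.continuousOn)
    (fun t ht => h.exists_mem_sector hγ ht (hne t ht)) fun _ _ _ hb => hb.1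

lemma exists_forall_nullFactor_eq_zero (h : HasSectorFlows ω N F u l)
    (hγ : IsNullCurve ω N γ γ' I) {b : Bool} (hb : ∀ t ∈ I, γ t ∈ sector b) :
    ∃ κ, ∀ t ∈ I, nullFactor F b κ (γ t) (γ' t) = 0 :=
  exists_forall_of_signOf_mul_pos hγ.isPreconnected
    (g := fun t => -((γ' t).1 * (γ' t).2))
    ((continuous_fst.comp_continuousOn hγ.continuousOn_deriv).mul
      (continuous_snd.comp_continuousOn hγ.continuousOn_deriv)).neg
    (fun t ht => (h.null_iff _ (hγ.mem ht) (hb t ht)).mp (hγ.null ht))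
    fun t ht _ hnull =>
      (h.flow b).signOf_mul_pos_of_nullFactor_eq_zero (hb t ht) (hγ.deriv_ne_zero ht) hnull

lemma hasDerivAt_label (h : HasSectorFlows ω N F u l) (hγ : IsNullCurve ω N γ γ' I)
    (ht : t ∈ I) {b κ : Bool} (hnull : nullFactor F b κ (γ t) (γ' t) = 0) :
    HasDerivAt (fun t => l b (semicube (γ t).1) (signOf κ * semicube (-(γ t).2))) 0 t := by
  have hU := (hasDerivAt_semicube (γ t).1).comp t (hγ.hasDerivAt_fst ht)
  have hS := ((hasDerivAt_semicube (-(γ t).2)).comp t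
    (hγ.hasDerivAt_snd ht).fun_neg).const_mul (signOf κ)
  refine (h.flow b).hasDerivAt_label_of_tangent hU hS ?_
  simp only [abs_neg]
  unfold nullFactor at hnull
  linear_combination 3 / 2 * hnull

lemma exists_forall_mem_leaf (h : HasSectorFlows ω N F u l) (hγ : IsNullCurve ω N γ γ' I)
    (hne : ∀ t ∈ I, γ t ≠ 0) : ∃ b κ w, ∀ t ∈ I, γ t ∈ leaf l b κ w := by
  obtain ⟨b, hb⟩ := h.exists_forall_mem_sector hγ hne
  obtain ⟨κ, hκ⟩ := h.exists_forall_nullFactor_eq_zero hγ hb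
  have hderiv := fun t ht => h.hasDerivAt_label hγ ht (hκ t ht)
  obtain ⟨w, hw⟩ := hγ.isOpen.exists_is_const_of_deriv_eq_zero hγ.isPreconnected
    (fun t ht => (hderiv t ht).differentiableAt.differentiableWithinAt)
    fun t ht => (hderiv t ht).deriv
  exact ⟨b, κ, w, fun t ht => ⟨hb t ht, hw t ht⟩⟩

lemma exists_forall_mem_leaf_true_zero (h : HasSectorFlows ω N F u l)
    (hγ : IsNullCurve ω N γ γ' I) (hne : ∀ t ∈ I, γ t ≠ 0) {f : Filter ℝ} [f.NeBot]
    (hI : I ∈ f) (hlim : Tendsto γ f (nhds 0)) : ∃ b, ∀ t ∈ I, γ t ∈ leaf l b true 0 := by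
  obtain ⟨b, κ, w, hleaf⟩ := h.exists_forall_mem_leaf hγ hne
  obtain rfl := (h.flow b).label_eq_zero_of_tendsto_zero hlim (mem_of_superset hI hleaf)
  obtain ⟨t, ht⟩ := f.nonempty_of_mem hI
  obtain rfl := (h.flow b).eq_true_of_leaf_zero (hleaf t ht)
  exact ⟨b, hleaf⟩

lemma deriv_snd_ne_zero_of_eq_zero (h : HasSectorFlows ω N F u l) (hγ : IsNullCurve ω N γ γ' I)
    (ht : t ∈ I) (hzero : γ t = 0) : (γ' t).2 ≠ 0 := by
  have hright : nhdsWithin t (Ioi t) ≤ nhdsWithin t {t}ᶜ :=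
    nhdsWithin_mono t fun r (hr : t < r) => hr.ne'
  have hne : ∀ᶠ r in nhdsWithin t (Ioi t), γ r ≠ 0 :=
    (hγ.hasDerivAt ht).eventually_ne (hγ.deriv_ne_zero ht) |>.filter_mono hright
  obtain ⟨c, hc, hsub⟩ := mem_nhdsGT_iff_exists_Ioo_subset.mp hne
  have hJ : I ∩ Ioo t c ∈ nhdsWithin t (Ioi t) :=
    inter_mem (mem_nhdsWithin_of_mem_nhds (hγ.isOpen.mem_nhds ht)) (Ioo_mem_nhdsGT hc)
  have hlim : Tendsto γ (nhdsWithin t (Ioi t)) (nhds 0) :=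
    hzero ▸ (hγ.hasDerivAt ht).continuousAt.tendsto.mono_left nhdsWithin_le_nhds
  obtain ⟨b, hleaf⟩ := h.exists_forall_mem_leaf_true_zero (hγ.inter isOpen_Ioo isPreconnected_Ioo)
    (fun r hr => hsub hr.2) hJ hlim
  obtain ⟨C, hC⟩ := (h.flow b).exists_abs_fst_le_of_mem_leaf
  have hslope₁ := (hasDerivAt_iff_tendsto_slope.mp (hγ.hasDerivAt_fst ht)).mono_left hright
  have hslope₂ := (hasDerivAt_iff_tendsto_slope.mp (hγ.hasDerivAt_snd ht)).mono_left hright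
  have hle : |(γ' t).1| ≤ C * |(γ' t).2| := by
    refine le_of_tendsto_of_tendsto hslope₁.abs (hslope₂.abs.const_mul C) ?_
    filter_upwards [hJ] with r hr
    simp only [slope, hzero, vsub_eq_sub, sub_zero, smul_eq_mul, abs_mul, Prod.fst_zero,
      Prod.snd_zero]
    calc |(r - t)⁻¹| * |(γ r).1| ≤ |(r - t)⁻¹| * (C * |(γ r).2|) := by
          gcongr; exact hC _ (hleaf r hr)
      _ = C * (|(r - t)⁻¹| * |(γ r).2|) := by ring
  intro hsnd
  rw [hsnd, abs_zero, mul_zero] at hle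
  exact hγ.deriv_ne_zero ht (Prod.ext (abs_nonpos_iff.mp hle) hsnd)

lemma deriv_snd_ne_zero (h : HasSectorFlows ω N F u l) (hγ : IsNullCurve ω N γ γ' I)
    (ht : t ∈ I) : (γ' t).2 ≠ 0 := by
  by_cases hzero : γ t = 0
  · exact h.deriv_snd_ne_zero_of_eq_zero hγ ht hzero
  · obtain ⟨b, hb⟩ := h.exists_mem_sector hγ ht hzero
    obtain ⟨κ, hκ⟩ := (h.null_iff _ (hγ.mem ht) hb).mp (hγ.null ht)
    intro hsnd
    simpa [hsnd] using
      (h.flow b).signOf_mul_pos_of_nullFactor_eq_zero hb (hγ.deriv_ne_zero ht) hκ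

lemma injOn_snd (h : HasSectorFlows ω N F u l) (hγ : IsNullCurve ω N γ γ' I) :
    InjOn (fun t => (γ t).2) I := by
  intro r hr s hs heq
  by_contra hne
  wlog hlt : r < s generalizing r s
  · exact this hs hr heq.symm (Ne.symm hne) (lt_of_le_of_ne (not_lt.mp hlt) (Ne.symm hne))
  have hsub : Icc r s ⊆ I := hγ.isPreconnected.ordConnected.out hr hs
  obtain ⟨c, hc, hc₀⟩ := exists_hasDerivAt_eq_zero hlt
    (fun z hz => (hγ.hasDerivAt_snd (hsub hz)).continuousAt.continuousWithinAt) heq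
    fun z hz => hγ.hasDerivAt_snd (hsub (Ioo_subset_Icc_self hz))
  exact h.deriv_snd_ne_zero hγ (hsub (Ioo_subset_Icc_self hc)) hc₀

lemma forall_mem_separatrix (h : HasSectorFlows ω N F u l) (hγ : IsNullCurve ω N γ γ' I)
    {t₀ : ℝ} (ht₀ : t₀ ∈ I) (hzero : γ t₀ = 0) : ∀ t ∈ I, γ t ∈ separatrix l := by
  have hne (t : ℝ) (ht : t ∈ I) (htt₀ : t ≠ t₀) : γ t ≠ 0 := fun htzero =>
    htt₀ (h.injOn_snd hγ ht ht₀ (by simp only [htzero, hzero]))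
  have hlim (s : Set ℝ) : Tendsto γ (nhdsWithin t₀ s) (nhds 0) :=
    hzero ▸ (hγ.hasDerivAt ht₀).continuousAt.tendsto.mono_left nhdsWithin_le_nhds
  have hmem (s : Set ℝ) : I ∩ s ∈ nhdsWithin t₀ s :=
    inter_mem (mem_nhdsWithin_of_mem_nhds (hγ.isOpen.mem_nhds ht₀)) self_mem_nhdsWithin
  intro t ht
  rcases lt_trichotomy t t₀ with hlt | rfl | hgt
  · obtain ⟨b, hb⟩ := h.exists_forall_mem_leaf_true_zero (hγ.inter isOpen_Iio isPreconnected_Iio)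
      (fun r hr => hne r hr.1 (ne_of_lt hr.2)) (hmem _) (hlim _)
    exact Or.inr ⟨b, hb t ⟨ht, hlt⟩⟩
  · exact Or.inl hzero
  · obtain ⟨b, hb⟩ := h.exists_forall_mem_leaf_true_zero (hγ.inter isOpen_Ioi isPreconnected_Ioi)
      (fun r hr => hne r hr.1 (ne_of_gt hr.2)) (hmem _) (hlim _)
    exact Or.inr ⟨b, hb t ⟨ht, hgt⟩⟩

lemma exists_isLeaf (h : HasSectorFlows ω N F u l) (hγ : IsNullCurve ω N γ γ' I) :
    ∃ L, IsLeaf l L ∧ ∀ t ∈ I, γ t ∈ L := by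
  by_cases hzero : ∃ t₀ ∈ I, γ t₀ = 0
  · obtain ⟨t₀, ht₀, hzero⟩ := hzero
    exact ⟨_, Or.inr rfl, h.forall_mem_separatrix hγ ht₀ hzero⟩
  · push Not at hzero
    obtain ⟨b, κ, w, hleaf⟩ := h.exists_forall_mem_leaf hγ hzero
    exact ⟨_, Or.inl ⟨b, κ, w, rfl⟩, hleaf⟩

lemma isOpen_image_snd (h : HasSectorFlows ω N F u l) (hγ : IsNullCurve ω N γ γ' I) :
    IsOpen ((fun t => (γ t).2) '' I) := by
  rw [isOpen_iff_mem_nhds]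
  rintro _ ⟨t, ht, rfl⟩
  have hI := hγ.isOpen.mem_nhds ht
  have hstrict : HasStrictDerivAt (fun t => (γ t).2) (γ' t).2 t := by
    refine hasStrictDerivAt_of_hasDerivAt_of_continuousAt (f' := fun t => (γ' t).2) ?_
      ((continuous_snd.comp_continuousOn hγ.continuousOn_deriv).continuousAt hI)
    filter_upwards [hI] with r hr using hγ.hasDerivAt_snd hr
  rw [← hstrict.map_nhds_eq (h.deriv_snd_ne_zero hγ ht)]
  exact image_mem_map hI

end HasSectorFlows

/-- `L` is the graph `x = g(-y)`, over an open set `D`, of a `C¹` function with derivative `g'`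
whose tangents inside `N` are null for `ω`. -/
structure IsNullGraph (ω : ℝ × ℝ → ℝ × ℝ → ℝ) (N L : Set (ℝ × ℝ)) (D : Set ℝ) (g g' : ℝ → ℝ) :
    Prop where
  isOpen : IsOpen D
  eq_image : L = (fun t => (g t, -t)) '' D
  continuousOn_deriv : ContinuousOn g' D
  hasDerivAt {t : ℝ} (ht : t ∈ D) : HasDerivAt g (g' t) t
  null {t : ℝ} (ht : t ∈ D) (hN : (g t, -t) ∈ N) : ω (g t, -t) (g' t, -1) = 0

namespace IsNullGraph

variable {ω : ℝ × ℝ → ℝ × ℝ → ℝ} {N L : Set (ℝ × ℝ)} {D : Set ℝ} {g g' : ℝ → ℝ}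

lemma eq_of_snd_eq (hL : IsNullGraph ω N L D g g') {p q : ℝ × ℝ} (hp : p ∈ L) (hq : q ∈ L)
    (hpq : p.2 = q.2) : p = q := by
  rw [hL.eq_image] at hp hq
  obtain ⟨t, -, rfl⟩ := hp
  obtain ⟨s, -, rfl⟩ := hq
  rw [neg_inj.mp hpq]

lemma exists_isIntegralCurveOnBDE (hL : IsNullGraph ω N L D g g') {O : Set (ℝ × ℝ)}
    (hN : Bornology.IsBounded N) (hO : IsOpen O) (hconn : IsPreconnected (O ∩ L))
    (hsub : O ∩ L ⊆ N) : ∃ σ J, IsIntegralCurveOnBDE ω σ J ∧ O ∩ L = σ '' J := by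
  set G : ℝ → ℝ × ℝ := fun t => (g t, -t) with hG
  have hGcont : ContinuousOn G D := fun t ht =>
    ((hL.hasDerivAt ht).continuousAt.prodMk continuousAt_neg).continuousWithinAt
  have himage : O ∩ L = G '' (D ∩ G ⁻¹' O) := by
    rw [image_inter_preimage, ← hL.eq_image, inter_comm]
  have hJ : D ∩ G ⁻¹' O = (fun p : ℝ × ℝ => -p.2) '' (O ∩ L) := by
    rw [himage, image_image]
    simp [hG]
  have hJbdd : Bornology.IsBounded (D ∩ G ⁻¹' O) := by
    rw [hJ, ← image_image Neg.neg Prod.snd, image_neg_eq_neg]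
    exact (hN.subset hsub).image_snd.neg
  have hJconn : IsPreconnected (D ∩ G ⁻¹' O) :=
    hJ ▸ hconn.image _ continuous_snd.neg.continuousOn
  refine ⟨G, D ∩ G ⁻¹' O, ⟨exists_eq_Ioo_of_isOpen_of_isPreconnected
    (hGcont.isOpen_inter_preimage hL.isOpen hO) hJconn hJbdd, fun t => (g' t, -1),
    (hL.continuousOn_deriv.prodMk continuousOn_const).mono inter_subset_left,
    fun t ht => ⟨(hL.hasDerivAt ht.1).prodMk (hasDerivAt_neg t), ?_,
      hL.null ht.1 (hsub (himage ▸ mem_image_of_mem G ht))⟩⟩, himage⟩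
  exact fun hzero => by simpa using congrArg Prod.snd hzero

end IsNullGraph

/-- The function `g` with `(g t, -t)` in the leaf of label `w`. -/
def leafGraph (u : Bool → ℝ → ℝ → ℝ) (b κ : Bool) (w t : ℝ) : ℝ :=
  semicubeInv (u b w (signOf κ * semicube t))

/-- The derivative of `leafGraph`, where the latter is nonzero. -/
def leafSlope (F u : Bool → ℝ → ℝ → ℝ) (b κ : Bool) (w t : ℝ) : ℝ :=
  signOf κ * F b (semicube (leafGraph u b κ w t)) (signOf κ * semicube t) * √|t| /
    √|leafGraph u b κ w t|

namespace IsGlobalFlow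

variable {F u l : Bool → ℝ → ℝ → ℝ} {b : Bool} (κ : Bool) (w : ℝ) {t : ℝ}

lemma continuous_leafGraph (h : IsGlobalFlow (F b) (u b) (l b)) : Continuous (leafGraph u b κ w) :=
  continuous_semicubeInv.comp
    ((h.continuous_u_right w).comp (continuous_const.mul continuous_semicube))

lemma continuous_field_leafGraph (h : IsGlobalFlow (F b) (u b) (l b)) :
    Continuous fun t => F b (semicube (leafGraph u b κ w t)) (signOf κ * semicube t) :=
  h.continuous_field.comp ((continuous_semicube.comp (h.continuous_leafGraph κ w)).prodMk
    (continuous_const.mul continuous_semicube))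

variable {κ w}

lemma continuousAt_leafSlope (h : IsGlobalFlow (F b) (u b) (l b)) (ht : leafGraph u b κ w t ≠ 0) :
    ContinuousAt (leafSlope F u b κ w) t := by
  have hg := h.continuous_leafGraph κ w
  have hF := h.continuous_field_leafGraph κ w
  exact ContinuousAt.div ((continuous_const.mul hF).mul (by fun_prop)).continuousAt (by fun_prop)
    (Real.sqrt_pos.mpr (abs_pos.mpr ht)).ne'

lemma hasDerivAt_leafGraph (h : IsGlobalFlow (F b) (u b) (l b)) (ht : leafGraph u b κ w t ≠ 0) :
    HasDerivAt (leafGraph u b κ w) (leafSlope F u b κ w t) t := by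
  have hu := (h.hasDerivAt_u w (signOf κ * semicube t)).comp t
    ((hasDerivAt_semicube t).const_mul (signOf κ))
  refine ((hasDerivAt_semicubeInv ht).comp t hu).congr_deriv ?_
  have hsqrt : √|leafGraph u b κ w t| ≠ 0 := (Real.sqrt_pos.mpr (abs_pos.mpr ht)).ne'
  rw [leafSlope, show semicube (leafGraph u b κ w t) = u b w (signOf κ * semicube t) from
    semicube_semicubeInv _]
  change (3 / 2 * √|leafGraph u b κ w t|)⁻¹ * _ = _
  field_simp

lemma mem_leaf_iff (h : IsGlobalFlow (F b) (u b) (l b)) {p : ℝ × ℝ} :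
    p ∈ leaf l b κ w ↔ p ∈ sector b ∧ leafGraph u b κ w (-p.2) = p.1 := by
  refine and_congr_right fun _ => ⟨fun hlabel => ?_, fun hgraph => ?_⟩
  · rw [leafGraph, ← hlabel, h.u_l, semicubeInv_semicube]
  · rw [← hgraph, leafGraph, semicube_semicubeInv, h.l_u]

end IsGlobalFlow

lemma nullFactor_leafGraph {F u : Bool → ℝ → ℝ → ℝ} {b κ : Bool} {w t : ℝ}
    (ht : leafGraph u b κ w t ≠ 0) :
    nullFactor F b κ (leafGraph u b κ w t, -t) (leafSlope F u b κ w t, -1) = 0 := by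
  have hsqrt : √|leafGraph u b κ w t| ≠ 0 := (Real.sqrt_pos.mpr (abs_pos.mpr ht)).ne'
  simp only [nullFactor, leafSlope, neg_neg, abs_neg]
  field_simp
  ring

namespace IsGlobalFlow

variable {F u l : Bool → ℝ → ℝ → ℝ} {b : Bool} {t : ℝ}

lemma leafGraph_true_zero (h : IsGlobalFlow (F b) (u b) (l b)) : leafGraph u b true 0 0 = 0 := by
  simp [leafGraph, semicube_zero, h.u_zero, semicubeInv_zero]

lemma strictMono_leafGraph_true (h : IsGlobalFlow (F b) (u b) (l b)) (w : ℝ) :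
    StrictMono (leafGraph u b true w) := fun s t hst => by
  apply strictMono_semicube.lt_iff_lt.mp
  simpa [leafGraph, semicube_semicubeInv] using h.strictMono_u w (strictMono_semicube hst)

lemma leafGraph_true_ne_zero (h : IsGlobalFlow (F b) (u b) (l b)) (ht : t ≠ 0) :
    leafGraph u b true 0 t ≠ 0 :=
  fun hzero => ht ((h.strictMono_leafGraph_true 0).injective
    (hzero.trans h.leafGraph_true_zero.symm))

lemma tendsto_leafGraph_div (h : IsGlobalFlow (F b) (u b) (l b)) :
    Tendsto (fun t => leafGraph u b true 0 t / t) (nhdsWithin 0 {0}ᶜ) (nhds 1) := by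
  have hpunctured : Tendsto semicube (nhdsWithin 0 {0}ᶜ) (nhdsWithin 0 {0}ᶜ) :=
    tendsto_nhdsWithin_iff.mpr ⟨by
      simpa only [semicube_zero] using
        (continuous_semicube.tendsto 0).mono_left (nhdsWithin_le_nhds (s := {0}ᶜ)),
      by filter_upwards [self_mem_nhdsWithin] with t ht h0 using ht (semicube_eq_zero.mp h0)⟩
  have hslope := (hasDerivAt_iff_tendsto_slope.mp (h.hasDerivAt_u 0 0)).comp hpunctured
  rw [h.u_zero, h.field_zero] at hslope
  have hlim := (continuous_semicubeInv.tendsto 1).comp hslope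
  rw [semicubeInv_one] at hlim
  refine hlim.congr' ?_
  filter_upwards [self_mem_nhdsWithin] with t (ht : t ≠ 0)
  simp only [Function.comp, slope, vsub_eq_sub, sub_zero, smul_eq_mul, h.u_zero, leafGraph,
    signOf_true, one_mul, ← semicubeInv_div_semicube _ ht]
  congr 1
  ring

lemma tendsto_leafSlope (h : IsGlobalFlow (F b) (u b) (l b)) :
    Tendsto (leafSlope F u b true 0) (nhdsWithin 0 {0}ᶜ) (nhds 1) := by
  have hF := ((h.continuous_field_leafGraph true 0).tendsto 0).mono_left
    (nhdsWithin_le_nhds (s := {0}ᶜ))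
  rw [h.leafGraph_true_zero, semicube_zero, mul_zero, h.field_zero] at hF
  have hquot := hF.div h.tendsto_leafGraph_div.abs.sqrt (by simp)
  simp only [abs_one, Real.sqrt_one, div_one] at hquot
  refine hquot.congr' ?_
  filter_upwards [self_mem_nhdsWithin] with t (ht : t ≠ 0)
  have hg : √|leafGraph u b true 0 t| ≠ 0 :=
    (Real.sqrt_pos.mpr (abs_pos.mpr (h.leafGraph_true_ne_zero ht))).ne'
  have ht' : √|t| ≠ 0 := (Real.sqrt_pos.mpr (abs_pos.mpr ht)).ne'
  simp only [leafSlope, Pi.div_apply, signOf_true, one_mul, abs_div, Real.sqrt_div (abs_nonneg _)]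
  field_simp

lemma mem_sector_leafGraph (h : ∀ b, IsGlobalFlow (F b) (u b) (l b)) (ht : t ≠ 0) :
    (leafGraph u (decide (0 < t)) true 0 t, -t) ∈ sector (decide (0 < t)) := by
  have hmono := (h (decide (0 < t))).strictMono_leafGraph_true 0
  have hzero := (h (decide (0 < t))).leafGraph_true_zero
  rcases ht.lt_or_gt with hneg | hpos
  · have := hmono hneg
    rw [hzero] at this
    simp only [not_lt.mpr hneg.le, decide_false] at this ⊢
    simpa [sector, hneg] using this
  · have := hmono hpos
    rw [hzero] at this
    simp only [hpos, decide_true] at this ⊢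
    simpa [sector, hpos] using this

end IsGlobalFlow

/-- The function `g` with `(g t, -t)` in the separatrix. -/
def separatrixGraph (u : Bool → ℝ → ℝ → ℝ) (t : ℝ) : ℝ := leafGraph u (decide (0 < t)) true 0 t

/-- The derivative of `separatrixGraph`. -/
def separatrixSlope (F u : Bool → ℝ → ℝ → ℝ) : ℝ → ℝ :=
  Function.update (fun t => leafSlope F u (decide (0 < t)) true 0 t) 0 1

lemma separatrixSlope_of_ne (F u : Bool → ℝ → ℝ → ℝ) {t : ℝ} (ht : t ≠ 0) :
    separatrixSlope F u t = leafSlope F u (decide (0 < t)) true 0 t :=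
  Function.update_of_ne ht ..

lemma eventually_decide_pos_eq {t : ℝ} (ht : t ≠ 0) :
    ∀ᶠ r in nhds t, decide (0 < r) = decide (0 < t) := by
  rcases ht.lt_or_gt with hneg | hpos
  · filter_upwards [gt_mem_nhds hneg] with r hr
    simp [hr.le.not_gt, hneg.le.not_gt]
  · filter_upwards [lt_mem_nhds hpos] with r hr
    simp [hr, hpos]

section Separatrix

variable {F u l : Bool → ℝ → ℝ → ℝ}

lemma separatrixGraph_zero (h : ∀ b, IsGlobalFlow (F b) (u b) (l b)) : separatrixGraph u 0 = 0 :=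
  (h _).leafGraph_true_zero

lemma continuousAt_separatrixGraph_zero (h : ∀ b, IsGlobalFlow (F b) (u b) (l b)) :
    ContinuousAt (separatrixGraph u) 0 := by
  have hlim (b : Bool) : Tendsto (leafGraph u b true 0) (nhds 0) (nhds 0) := by
    simpa only [(h b).leafGraph_true_zero] using ((h b).continuous_leafGraph true 0).tendsto 0
  rw [ContinuousAt, separatrixGraph_zero h]
  refine ((hlim true).if' (p := fun t => 0 < t) (hlim false)).congr fun t => ?_
  by_cases ht : 0 < t <;> simp [separatrixGraph, ht]

lemma continuous_separatrixSlope (h : ∀ b, IsGlobalFlow (F b) (u b) (l b)) :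
    Continuous (separatrixSlope F u) := by
  refine continuous_iff_continuousAt.mpr fun t => ?_
  rcases eq_or_ne t 0 with rfl | ht
  · refine continuousAt_update_same.mpr ?_
    refine ((h true).tendsto_leafSlope.if' (p := fun t => 0 < t)
      (h false).tendsto_leafSlope).congr fun t => ?_
    by_cases ht : 0 < t <;> simp [ht]
  · refine (continuousAt_update_of_ne ht).mpr ?_
    refine ((h (decide (0 < t))).continuousAt_leafSlope
      ((h _).leafGraph_true_ne_zero ht)).congr ?_
    filter_upwards [eventually_decide_pos_eq ht] with r hr
    rw [hr]

lemma hasDerivAt_separatrixGraph (h : ∀ b, IsGlobalFlow (F b) (u b) (l b)) (t : ℝ) :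
    HasDerivAt (separatrixGraph u) (separatrixSlope F u t) t := by
  have hne (t : ℝ) (ht : t ≠ 0) : HasDerivAt (separatrixGraph u) (separatrixSlope F u t) t := by
    rw [separatrixSlope_of_ne F u ht]
    refine ((h _).hasDerivAt_leafGraph ((h _).leafGraph_true_ne_zero ht)).congr_of_eventuallyEq ?_
    filter_upwards [eventually_decide_pos_eq ht] with r hr
    rw [separatrixGraph, hr]
  rcases eq_or_ne t 0 with rfl | ht
  · exact hasDerivAt_of_hasDerivAt_of_ne (hne · ·) (continuousAt_separatrixGraph_zero h)
      (continuous_separatrixSlope h).continuousAt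
  · exact hne t ht

lemma separatrix_eq_image (h : ∀ b, IsGlobalFlow (F b) (u b) (l b)) :
    separatrix l = (fun t => (separatrixGraph u t, -t)) '' univ := by
  ext p
  simp only [image_univ, mem_range]
  constructor
  · rintro (rfl | ⟨b, hp⟩)
    · exact ⟨0, by simp [separatrixGraph_zero h]⟩
    · have hb : decide (0 < -p.2) = b := by
        have hsign := hp.1.2
        cases b
        · simpa using (by simpa using hsign : 0 < p.2).le
        · simpa using hsign
      exact ⟨-p.2, Prod.ext (by rw [separatrixGraph, hb]; exact ((h b).mem_leaf_iff.mp hp).2)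
        (neg_neg _)⟩
  · rintro ⟨t, rfl⟩
    rcases eq_or_ne t 0 with rfl | ht
    · exact Or.inl (by simp [separatrixGraph_zero h])
    · exact Or.inr ⟨_, (h _).mem_leaf_iff.mpr ⟨IsGlobalFlow.mem_sector_leafGraph h ht, by
        rw [neg_neg, separatrixGraph]⟩⟩

end Separatrix

namespace HasSectorFlows

variable {ω : ℝ × ℝ → ℝ × ℝ → ℝ} {N : Set (ℝ × ℝ)} {F u l : Bool → ℝ → ℝ → ℝ}

lemma null_leafGraph (h : HasSectorFlows ω N F u l) {b κ : Bool} {w t : ℝ}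
    (hN : (leafGraph u b κ w t, -t) ∈ N) (hb : (leafGraph u b κ w t, -t) ∈ sector b) :
    ω (leafGraph u b κ w t, -t) (leafSlope F u b κ w t, -1) = 0 :=
  (h.null_iff _ hN hb).mpr ⟨κ, nullFactor_leafGraph (fst_ne_zero_of_mem_sector hb)⟩

lemma isNullGraph_leaf (h : HasSectorFlows ω N F u l) (b κ : Bool) (w : ℝ) :
    IsNullGraph ω N (leaf l b κ w) {t | (leafGraph u b κ w t, -t) ∈ sector b}
      (leafGraph u b κ w) (leafSlope F u b κ w) where
  isOpen := (isOpen_sector b).preimage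
    (((h.flow b).continuous_leafGraph κ w).prodMk continuous_neg)
  eq_image := by
    ext p
    rw [(h.flow b).mem_leaf_iff]
    constructor
    · rintro ⟨hp, hgraph⟩
      have hpair : (leafGraph u b κ w (-p.2), - -p.2) = p := Prod.ext hgraph (neg_neg _)
      exact ⟨-p.2, by rwa [mem_ofPred_eq, hpair], hpair⟩
    · rintro ⟨t, ht, rfl⟩
      exact ⟨ht, by rw [neg_neg]⟩
  continuousOn_deriv _ ht :=
    ((h.flow b).continuousAt_leafSlope (fst_ne_zero_of_mem_sector ht)).continuousWithinAt
  hasDerivAt ht := (h.flow b).hasDerivAt_leafGraph (fst_ne_zero_of_mem_sector ht)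
  null ht hN := h.null_leafGraph hN ht

lemma isNullGraph_separatrix (h : HasSectorFlows ω N F u l) :
    IsNullGraph ω N (separatrix l) univ (separatrixGraph u) (separatrixSlope F u) where
  isOpen := isOpen_univ
  eq_image := separatrix_eq_image h.flow
  continuousOn_deriv := (continuous_separatrixSlope h.flow).continuousOn
  hasDerivAt _ := hasDerivAt_separatrixGraph h.flow _
  null {t} _ hN := by
    rcases eq_or_ne t 0 with rfl | ht
    · rw [separatrixGraph_zero h.flow, neg_zero]
      exact h.null_zero _
    · rw [separatrixSlope_of_ne F u ht]
      exact h.null_leafGraph hN (IsGlobalFlow.mem_sector_leafGraph h.flow ht)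

lemma exists_isNullGraph (h : HasSectorFlows ω N F u l) {L : Set (ℝ × ℝ)} (hL : IsLeaf l L) :
    ∃ D g g', IsNullGraph ω N L D g g' := by
  rcases hL with ⟨b, κ, w, rfl⟩ | rfl
  · exact ⟨_, _, _, h.isNullGraph_leaf b κ w⟩
  · exact ⟨_, _, _, h.isNullGraph_separatrix⟩

theorem exists_isIntegralCurveOnBDE_of_isArc (h : HasSectorFlows ω N F u l) {T : Set (ℝ × ℝ)}
    (hT : IsArc l T) (hN : T ⊆ N) : ∃ σ J, IsIntegralCurveOnBDE ω σ J ∧ T = σ '' J := by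
  obtain ⟨L, O, hL, hO, rfl, hconn⟩ := hT
  obtain ⟨D, g, g', hgraph⟩ := h.exists_isNullGraph hL
  exact hgraph.exists_isIntegralCurveOnBDE h.isBounded hO hconn hN

theorem isArc_image_of_isIntegralCurveOnBDE (h : HasSectorFlows ω N F u l) {γ : ℝ → ℝ × ℝ}
    {I : Set ℝ} (hγ : IsIntegralCurveOnBDE ω γ I) (hN : MapsTo γ I N) : IsArc l (γ '' I) := by
  obtain ⟨⟨a, b, rfl⟩, γ', hcont, hderiv⟩ := hγ
  have hnull : IsNullCurve ω N γ γ' (Ioo a b) :=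
    ⟨isOpen_Ioo, isPreconnected_Ioo, hcont, fun ht => (hderiv _ ht).1,
      fun ht => (hderiv _ ht).2.1, fun ht => (hderiv _ ht).2.2, fun ht => hN ht⟩
  obtain ⟨L, hL, hmem⟩ := h.exists_isLeaf hnull
  obtain ⟨D, g, g', hgraph⟩ := h.exists_isNullGraph hL
  refine ⟨L, _, hL, (h.isOpen_image_snd hnull).preimage continuous_snd,
    Subset.antisymm ?_ ?_, isPreconnected_Ioo.image _ hnull.continuousOn⟩
  · rintro _ ⟨t, ht, rfl⟩
    exact ⟨⟨t, ht, rfl⟩, hmem t ht⟩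
  · rintro p ⟨⟨t, ht, hsnd⟩, hp⟩
    exact ⟨t, ht, hgraph.eq_of_snd_eq (hmem t ht) hp hsnd⟩

end HasSectorFlows

lemma IsArc.image_homeomorph {l l' : Bool → ℝ → ℝ → ℝ} {H : (ℝ × ℝ) ≃ₜ (ℝ × ℝ)} (hzero : H 0 = 0)
    (hleaf : ∀ b κ w p, H p ∈ leaf l' b κ w ↔ p ∈ leaf l b κ w) {T : Set (ℝ × ℝ)}
    (hT : IsArc l T) : IsArc l' (H '' T) := by
  obtain ⟨L, O, hL, hO, rfl, hconn⟩ := hT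
  refine ⟨H '' L, H '' O, ?_, H.isOpenMap _ hO, image_inter H.injective,
    hconn.image _ H.continuous.continuousOn⟩
  have himage {A B : Set (ℝ × ℝ)} (hAB : ∀ p, H p ∈ B ↔ p ∈ A) : H '' A = B := by
    rw [← show H ⁻¹' B = A from ext hAB, image_preimage_eq B H.surjective]
  rcases hL with ⟨b, κ, w, rfl⟩ | rfl
  · exact Or.inl ⟨b, κ, w, himage (hleaf b κ w)⟩
  · refine Or.inr (himage fun p => ?_)
    have hp : H p = 0 ↔ p = 0 := by rw [← H.injective.eq_iff (a := p), hzero]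
    simp only [separatrix, mem_ofPred_eq, hp, hleaf]

theorem HasSectorFlows.topEquivAt0 {ω ω' : ℝ × ℝ → ℝ × ℝ → ℝ} {N N' : Set (ℝ × ℝ)}
    {F u l F' u' l' : Bool → ℝ → ℝ → ℝ} (h : HasSectorFlows ω N F u l)
    (h' : HasSectorFlows ω' N' F' u' l') (H : (ℝ × ℝ) ≃ₜ (ℝ × ℝ)) (hzero : H 0 = 0)
    (hleaf : ∀ b κ w p, H p ∈ leaf l' b κ w ↔ p ∈ leaf l b κ w) : TopEquivAt0 ω ω' := by
  have hzero' : H.symm 0 = 0 := by rw [H.symm_apply_eq, hzero]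
  have hleaf' : ∀ b κ w p, H.symm p ∈ leaf l b κ w ↔ p ∈ leaf l' b κ w := fun b κ w p => by
    rw [← hleaf, H.apply_symm_apply]
  refine ⟨N ∩ H ⁻¹' N', N' ∩ H.symm ⁻¹' N, H, H.symm,
    h.isOpen.inter (h'.isOpen.preimage H.continuous),
    h'.isOpen.inter (h.isOpen.preimage H.symm.continuous),
    ⟨h.zero_mem, by simpa [hzero] using h'.zero_mem⟩,
    ⟨h'.zero_mem, by simpa [hzero'] using h.zero_mem⟩, hzero,
    H.continuous.continuousOn, H.symm.continuous.continuousOn,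
    ⟨fun p hp => ⟨hp.2, by simpa using hp.1⟩, H.injective.injOn, fun q hq =>
      ⟨H.symm q, ⟨hq.2, by simpa using hq.1⟩, by simp⟩⟩,
    ⟨fun p _ => by simp, fun p _ => by simp⟩, fun γ I hγ hmaps => ?_, fun σ J hσ hmaps => ?_⟩
  · refine h'.exists_isIntegralCurveOnBDE_of_isArc ((h.isArc_image_of_isIntegralCurveOnBDE hγ
      fun t ht => (hmaps ht).1).image_homeomorph hzero hleaf) ?_
    rintro _ ⟨_, ⟨t, ht, rfl⟩, rfl⟩
    exact (hmaps ht).2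
  · refine h.exists_isIntegralCurveOnBDE_of_isArc ((h'.isArc_image_of_isIntegralCurveOnBDE hσ
      fun t ht => (hmaps ht).1).image_homeomorph hzero' hleaf') ?_
    rintro _ ⟨_, ⟨t, ht, rfl⟩, rfl⟩
    exact (hmaps ht).2

lemma sign_apply_eq_of_strictMono {g : ℝ → ℝ} (hg : StrictMono g) (hzero : g 0 = 0) (x : ℝ) :
    SignType.sign (g x) = SignType.sign x := by
  rcases lt_trichotomy x 0 with hx | rfl | hx
  · rw [sign_neg hx, sign_neg (hzero ▸ hg hx)]
  · rw [hzero]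
  · rw [sign_pos hx, sign_pos (hzero ▸ hg hx)]

lemma mul_pos_iff_of_sign_eq {x y : ℝ} (h : SignType.sign x = SignType.sign y) (c : ℝ) :
    0 < c * x ↔ 0 < c * y := by
  rw [← sign_eq_one_iff, ← sign_eq_one_iff, sign_mul, sign_mul, h]

namespace IsGlobalFlow

variable {F u l : ℝ → ℝ → ℝ} {p q : ℝ × ℝ}

lemma sign_fst_eq (h : IsGlobalFlow F u l) (hsub : q.1 - q.2 = l p.1 p.2)
    (hadd : q.1 + q.2 = l p.1 (-p.2)) : SignType.sign q.1 = SignType.sign p.1 := by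
  have hmono : StrictMono fun U => (l U p.2 + l U (-p.2)) / 2 := fun U U' hU =>
    div_lt_div_of_pos_right (add_lt_add (h.strictMono_l _ hU) (h.strictMono_l _ hU)) two_pos
  have hzero : (l 0 p.2 + l 0 (-p.2)) / 2 = 0 := by
    have hodd := h.l_neg_neg 0 p.2
    rw [neg_zero] at hodd
    rw [hodd, add_neg_cancel, zero_div]
  rw [← sign_apply_eq_of_strictMono hmono hzero p.1, ← hsub, ← hadd]
  ring_nf

lemma sign_snd_eq (h : IsGlobalFlow F u l) (hsub : q.1 - q.2 = l p.1 p.2)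
    (hadd : q.1 + q.2 = l p.1 (-p.2)) : SignType.sign q.2 = SignType.sign p.2 := by
  have hmono : StrictMono fun S => (l p.1 (-S) - l p.1 S) / 2 := fun S S' hS =>
    div_lt_div_of_pos_right (sub_lt_sub (h.strictAnti_l _ (neg_lt_neg hS)) (h.strictAnti_l _ hS))
      two_pos
  rw [← sign_apply_eq_of_strictMono hmono (by simp) p.2, ← hsub, ← hadd]
  ring_nf

lemma eq_of_snd_eq_zero (h : IsGlobalFlow F u l) (hsub : q.1 - q.2 = l p.1 p.2)
    (hadd : q.1 + q.2 = l p.1 (-p.2)) (hp : p.2 = 0) : q = p := by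
  rw [hp, h.l_zero] at hsub
  rw [hp, neg_zero, h.l_zero] at hadd
  exact Prod.ext (by linarith) (by linarith)

end IsGlobalFlow

lemma exists_homeomorph_ite {X : Type*} [TopologicalSpace X] {φ : X → ℝ} (hφ : Continuous φ)
    (A B : X ≃ₜ X) (hA : ∀ p, SignType.sign (φ (A p)) = SignType.sign (φ p))
    (hB : ∀ p, SignType.sign (φ (B p)) = SignType.sign (φ p)) (hAB : ∀ p, φ p = 0 → A p = B p) :
    ∃ C : X ≃ₜ X, ∀ p, C p = if 0 ≤ φ p then A p else B p := by
  have hnonneg {D : X ≃ₜ X} (hD : ∀ p, SignType.sign (φ (D p)) = SignType.sign (φ p)) (p : X) :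
      0 ≤ φ (D p) ↔ 0 ≤ φ p := by
    rw [← sign_nonneg_iff, hD, sign_nonneg_iff]
  have hnonneg_symm {D : X ≃ₜ X} (hD : ∀ p, SignType.sign (φ (D p)) = SignType.sign (φ p))
      (p : X) : 0 ≤ φ (D.symm p) ↔ 0 ≤ φ p := by
    rw [← hnonneg hD, D.apply_symm_apply]
  have hsymm (p : X) (hp : φ p = 0) : A.symm p = B.symm p := by
    have hzero : φ (A.symm p) = 0 := by
      rw [← sign_eq_zero_iff, ← hA, A.apply_symm_apply, sign_eq_zero_iff, hp]
    rw [B.eq_symm_apply, ← hAB _ hzero, A.apply_symm_apply]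
  exact ⟨{
    toFun p := if 0 ≤ φ p then A p else B p
    invFun p := if 0 ≤ φ p then A.symm p else B.symm p
    left_inv p := by
      by_cases hp : 0 ≤ φ p
      · simp [hp, (hnonneg hA p).mpr hp]
      · simp [hp, mt (hnonneg hB p).mp hp]
    right_inv p := by
      by_cases hp : 0 ≤ φ p
      · simp [hp, (hnonneg_symm hA p).mpr hp]
      · simp [hp, mt (hnonneg_symm hB p).mp hp]
    continuous_toFun := A.continuous.if_le B.continuous continuous_const hφ
      fun p hp => hAB p hp.symm
    continuous_invFun := A.symm.continuous.if_le B.symm.continuous continuous_const hφ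
      fun p hp => hsymm p hp.symm }, fun _ => rfl⟩

lemma mem_sector_iff_semicube {b : Bool} {p : ℝ × ℝ} :
    p ∈ sector b ↔ 0 < signOf b * semicube p.1 ∧ 0 < signOf b * semicube (-p.2) := by
  rw [mul_pos_iff_of_sign_eq (sign_apply_eq_of_strictMono strictMono_semicube semicube_zero _),
    mul_pos_iff_of_sign_eq (sign_apply_eq_of_strictMono strictMono_semicube semicube_zero _),
    mul_neg, neg_pos]
  rfl

theorem exists_straightening_homeomorph_of_sectors {F u l : Bool → ℝ → ℝ → ℝ}
    (h : ∀ b, IsGlobalFlow (F b) (u b) (l b)) :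
    ∃ C : (ℝ × ℝ) ≃ₜ (ℝ × ℝ), C 0 = 0 ∧
      (∀ q b, 0 < signOf b * (C q).1 ↔ 0 < signOf b * q.1) ∧
      (∀ q b, 0 < signOf b * (C q).2 ↔ 0 < signOf b * q.2) ∧
      ∀ q b, 0 < signOf b * q.2 → ∀ κ, (C q).1 - signOf κ * (C q).2 = l b q.1 (signOf κ * q.2) := by
  choose A hA using fun b => (h b).exists_straightening_homeomorph
  have hfst b (q : ℝ × ℝ) := (h b).sign_fst_eq (hA b q.1 q.2).1 (hA b q.1 q.2).2
  have hsnd b (q : ℝ × ℝ) := (h b).sign_snd_eq (hA b q.1 q.2).1 (hA b q.1 q.2).2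
  have haxis b (q : ℝ × ℝ) := (h b).eq_of_snd_eq_zero (hA b q.1 q.2).1 (hA b q.1 q.2).2
  obtain ⟨C, hC⟩ := exists_homeomorph_ite continuous_snd (A true) (A false) (hsnd true)
    (hsnd false) fun q hq => (haxis true q hq).trans (haxis false q hq).symm
  have hmem q : ∃ b, C q = A b q := by
    rw [hC]
    split_ifs
    exacts [⟨true, rfl⟩, ⟨false, rfl⟩]
  refine ⟨C, ?_, fun q b => ?_, fun q b => ?_, fun q b hq κ => ?_⟩
  · rw [hC, if_pos (show (0 : ℝ) ≤ (0 : ℝ × ℝ).2 from le_rfl)]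
    exact haxis true 0 rfl
  · obtain ⟨b', hb'⟩ := hmem q
    rw [hb', mul_pos_iff_of_sign_eq (hfst b' q)]
  · obtain ⟨b', hb'⟩ := hmem q
    rw [hb', mul_pos_iff_of_sign_eq (hsnd b' q)]
  · have hCb : C q = A b q := by
      rw [hC]
      cases b
      · exact if_neg (by simpa using hq)
      · exact if_pos (by simpa using hq.le)
    rw [hCb]
    cases κ
    · simpa using (hA b q.1 q.2).2
    · simpa using (hA b q.1 q.2).1

theorem exists_homeomorph_leaf_linear {F u l : Bool → ℝ → ℝ → ℝ}
    (h : ∀ b, IsGlobalFlow (F b) (u b) (l b)) :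
    ∃ H : (ℝ × ℝ) ≃ₜ (ℝ × ℝ), H 0 = 0 ∧
      ∀ b κ w p, H p ∈ leaf (fun _ U s => U - s) b κ w ↔ p ∈ leaf l b κ w := by
  obtain ⟨C, hzero, hfst, hsnd, hlabel⟩ := exists_straightening_homeomorph_of_sectors h
  let Q : (ℝ × ℝ) ≃ₜ (ℝ × ℝ) :=
    semicubeHomeomorph.prodCongr ((Homeomorph.neg ℝ).trans semicubeHomeomorph)
  have hQ (p : ℝ × ℝ) : Q p = (semicube p.1, semicube (-p.2)) := rfl
  have hQzero : Q 0 = 0 := by simp [hQ, semicube_zero]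
  have hconj (p : ℝ × ℝ) : Q ((Q.trans C |>.trans Q.symm) p) = C (Q p) := by simp
  refine ⟨(Q.trans C).trans Q.symm, ?_, fun b κ w p => ?_⟩
  · simp only [Homeomorph.trans_apply, hQzero, hzero, Q.symm_apply_eq]
  · have hC₁ := congrArg Prod.fst (hconj p)
    have hC₂ := congrArg Prod.snd (hconj p)
    simp only [hQ] at hC₁ hC₂
    simp only [leaf, mem_ofPred_eq, mem_sector_iff_semicube, hC₁, hC₂, hfst, hsnd]
    exact and_congr_right fun hp => by rw [hlabel _ b hp.2 κ]

/-! ### Saddle forms -/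

/-- The odd extension of the square root to the real line. -/
def signedSqrt (x : ℝ) : ℝ := √x - √(-x)

lemma continuous_signedSqrt : Continuous signedSqrt := by unfold signedSqrt; fun_prop

lemma signedSqrt_neg (x : ℝ) : signedSqrt (-x) = -signedSqrt x := by simp [signedSqrt]

lemma signedSqrt_signOf_mul (b : Bool) (x : ℝ) :
    signedSqrt (signOf b * x) = signOf b * signedSqrt x := by
  cases b <;> simp [signedSqrt_neg]

lemma semicube_signOf_mul (b : Bool) (x : ℝ) :
    semicube (signOf b * x) = signOf b * semicube x := by
  cases b <;> simp [semicube_neg]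

lemma monotone_signedSqrt : Monotone signedSqrt := fun _ _ h =>
  sub_le_sub (Real.sqrt_le_sqrt h) (Real.sqrt_le_sqrt (neg_le_neg h))

lemma signedSqrt_of_nonneg {x : ℝ} (h : 0 ≤ x) : signedSqrt x = √|x| := by
  simp [signedSqrt, Real.sqrt_eq_zero_of_nonpos (neg_nonpos.mpr h), abs_of_nonneg h]

lemma signedSqrt_eq_of_signOf_mul_pos {b : Bool} {x : ℝ} (h : 0 < signOf b * x) :
    signedSqrt x = signOf b * √|x| := by
  cases b
  · have hx : 0 ≤ -x := by simpa using h.le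
    rw [← neg_neg x, signedSqrt_neg, signedSqrt_of_nonneg hx, signOf_false, neg_one_mul, neg_neg,
      abs_neg]
  · rw [signedSqrt_of_nonneg (by simpa using h.le), signOf_true, one_mul]

lemma abs_signedSqrt (x : ℝ) : |signedSqrt x| = √|x| := by
  rcases le_total 0 x with h | h
  · rw [signedSqrt_of_nonneg h, abs_of_nonneg (Real.sqrt_nonneg _)]
  · rw [← abs_neg, ← signedSqrt_neg, signedSqrt_of_nonneg (neg_nonneg.mpr h), abs_neg x,
      abs_of_nonneg (Real.sqrt_nonneg _)]

lemma signedSqrt_sq (x : ℝ) : signedSqrt x ^ 2 = |x| := by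
  rw [← sq_abs, abs_signedSqrt, Real.sq_sqrt (abs_nonneg _)]

/-- The cube root of `U`, written as the square root of `semicubeInv U`, truncated to `[-r, r]`. -/
def truncatedCbrt (r U : ℝ) : ℝ := max (-r) (min r (signedSqrt (semicubeInv U)))

lemma continuous_truncatedCbrt (r : ℝ) : Continuous (truncatedCbrt r) :=
  continuous_const.max (continuous_const.min (continuous_signedSqrt.comp continuous_semicubeInv))

lemma monotone_truncatedCbrt (r : ℝ) : Monotone (truncatedCbrt r) := fun U V h =>
  max_le_max le_rfl (min_le_min le_rfl (monotone_signedSqrt (by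
    rwa [← strictMono_semicube.le_iff_le, semicube_semicubeInv, semicube_semicubeInv])))

lemma abs_truncatedCbrt_le {r : ℝ} (hr : 0 ≤ r) (U : ℝ) : |truncatedCbrt r U| ≤ r :=
  abs_le.mpr ⟨le_max_left _ _, max_le (by linarith) (min_le_left _ _)⟩

lemma truncatedCbrt_neg {r : ℝ} (hr : 0 ≤ r) (U : ℝ) :
    truncatedCbrt r (-U) = -truncatedCbrt r U := by
  have hodd : semicubeInv (-U) = -semicubeInv U := strictMono_semicube.injective (by
    rw [semicube_neg, semicube_semicubeInv, semicube_semicubeInv])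
  rw [truncatedCbrt, truncatedCbrt, hodd, signedSqrt_neg, max_def, max_def, min_def, min_def]
  split_ifs <;> linarith

lemma truncatedCbrt_zero {r : ℝ} (hr : 0 ≤ r) : truncatedCbrt r 0 = 0 := by
  have hodd := truncatedCbrt_neg hr 0
  rw [neg_zero] at hodd
  linarith

lemma truncatedCbrt_semicube {r x : ℝ} (hr : 0 ≤ r) (hx : |x| ≤ r ^ 2) :
    truncatedCbrt r (semicube x) = signedSqrt x := by
  have hle : |signedSqrt x| ≤ r := by
    rw [abs_signedSqrt]
    exact Real.sqrt_le_iff.mpr ⟨hr, hx⟩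
  rw [truncatedCbrt, semicubeInv_semicube, min_eq_right (abs_le.mp hle).2,
    max_eq_right (abs_le.mp hle).1]

lemma isMonotoneControlled_truncatedCbrt {η : ℝ × ℝ → ℝ} {s : Set (ℝ × ℝ)} {K : NNReal} {r : ℝ}
    (hr : 0 ≤ r) (hs : Metric.closedBall 0 r ⊆ s) (hη : LipschitzOnWith K η s)
    (hle : ∀ p ∈ s, 1 / 2 ≤ η p) (hge : ∀ p ∈ s, η p ≤ 2) (hsmall : 8 * K * r ≤ 1 / 2) :
    IsMonotoneControlled (fun U S => η (truncatedCbrt r U, truncatedCbrt r S)) (truncatedCbrt r)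
      K r (1 / 2) 2 := by
  have hmem U S : (truncatedCbrt r U, truncatedCbrt r S) ∈ s := hs (by
    rw [mem_closedBall_zero_iff]
    exact max_le (abs_truncatedCbrt_le hr U) (abs_truncatedCbrt_le hr S))
  exact {
    continuous_field := hη.continuousOn.comp_continuous
      (((continuous_truncatedCbrt r).comp continuous_fst).prodMk
        ((continuous_truncatedCbrt r).comp continuous_snd)) fun p => hmem p.1 p.2
    continuous_control := continuous_truncatedCbrt r
    monotone_control := monotone_truncatedCbrt r
    abs_control_le := abs_truncatedCbrt_le hr
    nonneg := K.coe_nonneg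
    pos := by norm_num
    le_field := fun U S => hle _ (hmem U S)
    field_le := fun U S => hge _ (hmem U S)
    abs_sub_le := fun U V S => by
      simpa [Prod.dist_eq, Real.dist_eq] using hη.dist_le_mul _ (hmem U S) _ (hmem V S)
    small := hsmall }

theorem exists_isGlobalFlow_of_even {η : ℝ × ℝ → ℝ} (hη : ContDiffAt ℝ 1 η 0) (hzero : η 0 = 1)
    (heven : ∀ p, η (-p) = η p) :
    ∃ r > 0, ∃ F u l, IsGlobalFlow F u l ∧ ∀ x y : ℝ, |x| ≤ r → |y| ≤ r →
      F (semicube x) (semicube y) = η (signedSqrt x, signedSqrt y) := by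
  obtain ⟨K, s, hs, hlip⟩ := hη.exists_lipschitzOnWith
  have hbounds : ∀ᶠ p in nhds (0 : ℝ × ℝ), η p ∈ Icc (1 / 2) 2 :=
    hη.continuousAt.tendsto (by rw [hzero]; exact Icc_mem_nhds (by norm_num) (by norm_num))
  obtain ⟨e, he, hball⟩ := Metric.nhds_basis_closedBall.mem_iff.mp (inter_mem hs hbounds)
  obtain ⟨r, hr, hre, hrK⟩ : ∃ r > 0, r ≤ e ∧ 8 * (K : ℝ) * r ≤ 1 / 2 := by
    refine ⟨min e (1 / (16 * (K + 1))), lt_min he (by positivity), min_le_left _ _, ?_⟩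
    calc 8 * (K : ℝ) * min e (1 / (16 * (K + 1)))
        ≤ 8 * (K + 1) * (1 / (16 * (K + 1))) := by
          gcongr
          exacts [le_add_of_nonneg_right zero_le_one, min_le_right _ _]
      _ = 1 / 2 := by field_simp; norm_num
  have hcontrol := isMonotoneControlled_truncatedCbrt hr.le
    ((Metric.closedBall_subset_closedBall hre).trans hball) (hlip.mono inter_subset_left)
    (fun p hp => hp.2.1) (fun p hp => hp.2.2) hrK
  obtain ⟨u, l, hflow⟩ := hcontrol.exists_isGlobalFlow
    (fun U S => by
      rw [truncatedCbrt_neg hr.le, truncatedCbrt_neg hr.le, ← heven (truncatedCbrt r U, _)]; rfl)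
    (by rw [truncatedCbrt_zero hr.le]; exact hzero)
  exact ⟨r ^ 2, by positivity, _, u, l, hflow, fun x y hx hy => by
    rw [truncatedCbrt_semicube hr.le hx, truncatedCbrt_semicube hr.le hy]⟩

/-- The quadratic forms `x α dx² + 2 x y β dx dy + y γ dy²`. -/
def saddleForm (α β γ : ℝ × ℝ → ℝ) (p w : ℝ × ℝ) : ℝ :=
  p.1 * α p * w.1 ^ 2 + 2 * (p.1 * p.2 * β p) * w.1 * w.2 + p.2 * γ p * w.2 ^ 2

/-- The point `(±m₁², ∓m₂²)` of the sector `b`. -/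
def foldPoint (b : Bool) (m : ℝ × ℝ) : ℝ × ℝ := (signOf b * m.1 ^ 2, -(signOf b * m.2 ^ 2))

/-- The field `η` such that, at `foldPoint b m`, the null directions of `saddleForm α β γ` are
`m₁ dx + η(m₁, m₂) m₂ dy = 0` and `m₁ dx - η(m₁, -m₂) m₂ dy = 0`; it is smooth at `m = 0` because
the square roots of `|x|` and `|y|` have become the coordinates. -/
def sectorField (α β γ : ℝ × ℝ → ℝ) (b : Bool) (m : ℝ × ℝ) : ℝ :=
  (-(signOf b * (m.1 * m.2) * β (foldPoint b m)) +
    √((m.1 * m.2 * β (foldPoint b m)) ^ 2 + α (foldPoint b m) * γ (foldPoint b m))) /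
      α (foldPoint b m)

lemma foldPoint_zero (b : Bool) : foldPoint b 0 = 0 := by simp [foldPoint]

lemma foldPoint_neg (b : Bool) (m : ℝ × ℝ) : foldPoint b (-m) = foldPoint b m := by
  simp [foldPoint]

lemma contDiff_foldPoint (b : Bool) : ContDiff ℝ 1 (foldPoint b) := by
  unfold foldPoint
  fun_prop

lemma fst_eq_of_mem_sector {b : Bool} {p : ℝ × ℝ} (h : p ∈ sector b) : p.1 = signOf b * |p.1| := by
  cases b
  · simp [abs_of_neg (show p.1 < 0 by simpa using h.1)]
  · simp [abs_of_pos (show 0 < p.1 by simpa using h.1)]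

lemma snd_eq_of_mem_sector {b : Bool} {p : ℝ × ℝ} (h : p ∈ sector b) :
    p.2 = -(signOf b * |p.2|) := by
  cases b
  · simp [abs_of_pos (show 0 < p.2 by simpa using h.2)]
  · simp [abs_of_neg (show p.2 < 0 by simpa using h.2)]

lemma foldPoint_signedSqrt {b : Bool} {p : ℝ × ℝ} (h : p ∈ sector b) (κ : Bool) :
    foldPoint b (signedSqrt p.1, signOf κ * signedSqrt (-p.2)) = p := by
  refine Prod.ext ?_ ?_
  · rw [foldPoint, signedSqrt_sq, ← fst_eq_of_mem_sector h]
  · simp only [foldPoint, mul_pow, sq (signOf κ), signOf_mul_self, one_mul, signedSqrt_sq, abs_neg]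
    exact (snd_eq_of_mem_sector h).symm

section SaddleForm

variable {α β γ : ℝ × ℝ → ℝ} {p w : ℝ × ℝ}

lemma sectorField_zero (hα₀ : α 0 = 1) (hγ₀ : γ 0 = 1) (b : Bool) :
    sectorField α β γ b 0 = 1 := by
  simp [sectorField, foldPoint_zero, hα₀, hγ₀]

lemma sectorField_neg (b : Bool) (m : ℝ × ℝ) :
    sectorField α β γ b (-m) = sectorField α β γ b m := by
  simp [sectorField, foldPoint_neg]

lemma contDiffAt_sectorField (hα : ContDiff ℝ 1 α) (hβ : ContDiff ℝ 1 β) (hγ : ContDiff ℝ 1 γ)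
    (hα₀ : α 0 = 1) (hγ₀ : γ 0 = 1) (b : Bool) : ContDiffAt ℝ 1 (sectorField α β γ b) 0 := by
  have hfold := contDiff_foldPoint b
  unfold sectorField
  refine ContDiffAt.div (ContDiffAt.add (ContDiff.contDiffAt (by fun_prop)) (ContDiffAt.sqrt
    (ContDiff.contDiffAt (by fun_prop)) ?_)) (ContDiff.contDiffAt (by fun_prop)) ?_
  · simp [foldPoint_zero, hα₀, hγ₀]
  · simp [foldPoint_zero, hα₀]

lemma sectorField_signedSqrt {b : Bool} (hp : p ∈ sector b) (κ : Bool) :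
    sectorField α β γ b (signedSqrt p.1, signOf κ * signedSqrt (-p.2)) =
      (-(signOf b * signOf κ * (√|p.1| * √|p.2|) * β p) +
        √((√|p.1| * √|p.2| * β p) ^ 2 + α p * γ p)) / α p := by
  have hsqrt : signedSqrt p.1 * signedSqrt (-p.2) = √|p.1| * √|p.2| := by
    rw [signedSqrt_eq_of_signOf_mul_pos hp.1,
      signedSqrt_eq_of_signOf_mul_pos (show 0 < signOf b * -p.2 by linarith [hp.2]), abs_neg]
    linear_combination √|p.1| * √|p.2| * signOf_mul_self b
  rw [sectorField, foldPoint_signedSqrt hp, mul_left_comm (signedSqrt p.1), hsqrt]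
  cases κ <;> simp

lemma saddleForm_factorization {b : Bool} {D : ℝ}
    (hD : D ^ 2 = (√|p.1| * √|p.2| * β p) ^ 2 + α p * γ p) (hp : p ∈ sector b) :
    signOf b * α p * saddleForm α β γ p w =
      (α p * √|p.1| * w.1 + (-(signOf b * (√|p.1| * √|p.2|) * β p) + D) * √|p.2| * w.2) *
        (α p * √|p.1| * w.1 - (signOf b * (√|p.1| * √|p.2|) * β p + D) * √|p.2| * w.2) := by
  have hp₁ := fst_eq_of_mem_sector hp
  have hp₂ := snd_eq_of_mem_sector hp
  rw [← Real.sq_sqrt (abs_nonneg p.1)] at hp₁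
  rw [← Real.sq_sqrt (abs_nonneg p.2)] at hp₂
  have hs := signOf_mul_self b
  rw [saddleForm]
  set s := signOf b
  set X := √|p.1|
  set Y := √|p.2|
  linear_combination
    s * α p * (α p * w.1 ^ 2 + 2 * p.2 * β p * w.1 * w.2) * hp₁ +
    s * α p * (2 * s * X ^ 2 * β p * w.1 * w.2 + γ p * w.2 ^ 2) * hp₂ +
    (α p ^ 2 * X ^ 2 * w.1 ^ 2 - 2 * s * α p * X ^ 2 * Y ^ 2 * β p * w.1 * w.2 -
      α p * γ p * Y ^ 2 * w.2 ^ 2 - (X * Y * β p) ^ 2 * Y ^ 2 * w.2 ^ 2) * hs +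
    Y ^ 2 * w.2 ^ 2 * hD

lemma saddleForm_eq_zero_iff_of_mem_sector {b : Bool} (hα : 0 < α p) (hγ : 0 < γ p)
    (hp : p ∈ sector b) : saddleForm α β γ p w = 0 ↔ ∃ κ, √|p.1| * w.1 + signOf κ *
      sectorField α β γ b (signedSqrt p.1, signOf κ * signedSqrt (-p.2)) * √|p.2| * w.2 = 0 := by
  simp only [sectorField_signedSqrt hp, Bool.exists_bool]
  have hfactor := saddleForm_factorization (w := w)
    (Real.sq_sqrt (show 0 ≤ (√|p.1| * √|p.2| * β p) ^ 2 + α p * γ p by positivity)) hp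
  set D := √((√|p.1| * √|p.2| * β p) ^ 2 + α p * γ p)
  have hs : signOf b * α p ≠ 0 :=
    mul_ne_zero (left_ne_zero_of_mul_eq_one (signOf_mul_self b)) hα.ne'
  rw [← mul_eq_zero_iff_left hs, hfactor, mul_eq_zero, or_comm]
  refine or_congr ?_ ?_ <;>
  · conv_rhs => rw [← mul_eq_zero_iff_left hα.ne']
    simp only [signOf_true, signOf_false, sub_eq_add_neg]
    field_simp

lemma eq_zero_of_saddleForm_eq_zero_of_mul_pos (hα : α p ≠ 0)
    (hdet : 0 < α p * γ p - p.1 * p.2 * β p ^ 2) (hp : 0 < p.1 * p.2)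
    (hw : saddleForm α β γ p w = 0) : w = 0 := by
  have hsquare : (p.1 * α p * w.1 + p.1 * p.2 * β p * w.2) ^ 2 +
      p.1 * p.2 * (α p * γ p - p.1 * p.2 * β p ^ 2) * w.2 ^ 2 = 0 := by
    rw [saddleForm] at hw
    linear_combination p.1 * α p * hw
  have hw₂ : w.2 = 0 := by
    by_contra hne
    have hpos : 0 < p.1 * p.2 * (α p * γ p - p.1 * p.2 * β p ^ 2) * w.2 ^ 2 := by positivity
    linarith [sq_nonneg (p.1 * α p * w.1 + p.1 * p.2 * β p * w.2)]
  refine Prod.ext ?_ hw₂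
  simpa [saddleForm, hw₂, hα, left_ne_zero_of_mul hp.ne'] using hw

end SaddleForm

theorem exists_hasSectorFlows {ω : ℝ × ℝ → ℝ × ℝ → ℝ} {α β γ : ℝ × ℝ → ℝ} (hα : ContDiff ℝ 1 α)
    (hβ : ContDiff ℝ 1 β) (hγ : ContDiff ℝ 1 γ) (hα₀ : α 0 = 1) (hγ₀ : γ 0 = 1)
    (hω : ∀ᶠ p in nhds 0, ω p = saddleForm α β γ p) : ∃ N F u l, HasSectorFlows ω N F u l := by
  choose r hr F u l hflow hF using fun b => exists_isGlobalFlow_of_even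
    (contDiffAt_sectorField hα hβ hγ hα₀ hγ₀ b) (sectorField_zero hα₀ hγ₀ b) (sectorField_neg b)
  have hnear : ∀ᶠ p in nhds (0 : ℝ × ℝ), ω p = saddleForm α β γ p ∧ 0 < α p ∧ 0 < γ p ∧
      0 < α p * γ p - p.1 * p.2 * β p ^ 2 ∧ ∀ b, ‖p‖ < r b := by
    have hcα := hα.continuous
    have hcβ := hβ.continuous
    have hcγ := hγ.continuous
    have hdet : Continuous fun p : ℝ × ℝ => α p * γ p - p.1 * p.2 * β p ^ 2 := by fun_prop
    refine hω.and ((hcα.tendsto 0).eventually_const_lt (by simp [hα₀]) |>.and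
      ((hcγ.tendsto 0).eventually_const_lt (by simp [hγ₀]) |>.and
      ((hdet.tendsto 0).eventually_const_lt (by simp [hα₀, hγ₀]) |>.and
      (eventually_all.mpr fun b => (continuous_norm.tendsto 0).eventually_lt_const ?_))))
    simpa using hr b
  obtain ⟨e, he, hball⟩ := Metric.mem_nhds_iff.mp hnear
  refine ⟨Metric.ball 0 e, F, u, l, hflow, Metric.isOpen_ball, Metric.isBounded_ball,
    Metric.mem_ball_self he, fun w => ?_, fun {b p} w hp hb => ?_, fun hp hpos hw => ?_,
    fun hp h₁ h₂ hw => ?_, fun hp h₁ h₂ hw => ?_⟩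
  · simp [(hball (Metric.mem_ball_self he)).1, saddleForm]
  · obtain ⟨hωp, hαp, hγp, -, hnorm⟩ := hball hp
    rw [hωp, saddleForm_eq_zero_iff_of_mem_sector hαp hγp hb]
    refine exists_congr fun κ => ?_
    have habs : |signOf κ * -p.2| ≤ r b := by
      rw [abs_mul, abs_neg, show |signOf κ| = 1 by cases κ <;> simp, one_mul]
      exact (norm_snd_le p).trans (hnorm b).le
    rw [nullFactor, ← semicube_signOf_mul,
      hF b _ _ ((norm_fst_le p).trans (hnorm b).le) habs, signedSqrt_signOf_mul]
  · obtain ⟨hωp, hαp, -, hdet, -⟩ := hball hp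
    exact eq_zero_of_saddleForm_eq_zero_of_mul_pos hαp.ne' hdet hpos (hωp ▸ hw)
  · obtain ⟨hωp, -, hγp, -⟩ := hball hp
    simpa [hωp, saddleForm, h₁, h₂, hγp.ne'] using hw
  · obtain ⟨hωp, hαp, -⟩ := hball hp
    simpa [hωp, saddleForm, h₁, h₂, hαp.ne'] using hw

theorem HasSectorFlows.topEquivAt0_of_hasSectorFlows {ω ω' : ℝ × ℝ → ℝ × ℝ → ℝ} {N N' : Set (ℝ × ℝ)}
    {F u l F' u' l' : Bool → ℝ → ℝ → ℝ} (h : HasSectorFlows ω N F u l)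
    (h' : HasSectorFlows ω' N' F' u' l') : TopEquivAt0 ω ω' := by
  obtain ⟨H, hzero, hleaf⟩ := exists_homeomorph_leaf_linear h.flow
  obtain ⟨H', hzero', hleaf'⟩ := exists_homeomorph_leaf_linear h'.flow
  refine h.topEquivAt0 h' (H.trans H'.symm) ?_ fun b κ w p => ?_
  · rw [Homeomorph.trans_apply, hzero, H'.symm_apply_eq, hzero']
  · rw [Homeomorph.trans_apply, ← hleaf', H'.apply_symm_apply, hleaf]

/-! ### Smooth changes of coordinates -/

section LocalInverse

variable {E F : Type*} [NormedAddCommGroup E] [NormedSpace ℝ E] [CompleteSpace E]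
  [NormedAddCommGroup F] [NormedSpace ℝ F] {ψ : E → F} {x : E} {s : Set E} {n : WithTop ℕ∞}

lemma eventually_isInvertible_fderiv [CompleteSpace F] (hψ : ContDiff ℝ n ψ) (hn : n ≠ 0)
    (hinv : (fderiv ℝ ψ x).IsInvertible) : ∀ᶠ p in nhds x, (fderiv ℝ ψ p).IsInvertible := by
  obtain ⟨e, he⟩ := hinv
  exact (hψ.continuous_fderiv hn).continuousAt.eventually (he ▸ e.nhds)

lemma exists_openPartialHomeomorph_of_isInvertible_fderiv [CompleteSpace F]
    (hψ : ContDiff ℝ n ψ) (hn : n ≠ 0) (hinv : (fderiv ℝ ψ x).IsInvertible) (hs : s ∈ nhds x) :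
    ∃ G : OpenPartialHomeomorph E F, (G : E → F) = ψ ∧ x ∈ G.source ∧ G.source ⊆ s ∧
      ∀ p ∈ G.source, (fderiv ℝ ψ p).IsInvertible := by
  obtain ⟨W, hW, hWo, hxW⟩ := eventually_nhds_iff.mp
    ((eventually_isInvertible_fderiv hψ hn hinv).and hs)
  obtain ⟨e, he⟩ := hinv
  have hψx : HasFDerivAt ψ (e : E →L[ℝ] F) x := he ▸ (hψ.differentiable hn x).hasFDerivAt
  let G := hψ.contDiffAt.toOpenPartialHomeomorph ψ hψx hn
  have hsource : (G.restrOpen W hWo).source = G.source ∩ W := G.restrOpen_source W hWo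
  refine ⟨G.restrOpen W hWo, rfl, ?_, ?_, ?_⟩ <;> rw [hsource]
  · exact ⟨hψ.contDiffAt.mem_toOpenPartialHomeomorph_source hψx hn, hxW⟩
  · exact fun p hp => (hW p hp.2).2
  · exact fun p hp => (hW p hp.2).1

end LocalInverse

/-- The map `h` sends every integral curve of `ω` contained in `U` onto an integral curve
of `Ω`; only the images of the curves are compared, not their parametrisations. -/
def SendsIntegralCurves (ω Ω : ℝ × ℝ → ℝ × ℝ → ℝ) (h : ℝ × ℝ → ℝ × ℝ) (U : Set (ℝ × ℝ)) :
    Prop :=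
  ∀ γ I, IsIntegralCurveOnBDE ω γ I → MapsTo γ I U →
    ∃ σ J, IsIntegralCurveOnBDE Ω σ J ∧ h '' (γ '' I) = σ '' J

section TopologicalEquivalence

variable {ω Ω Θ : ℝ × ℝ → ℝ × ℝ → ℝ} {h k : ℝ × ℝ → ℝ × ℝ} {U V : Set (ℝ × ℝ)}

lemma SendsIntegralCurves.comp (hh : SendsIntegralCurves ω Ω h U)
    (hk : SendsIntegralCurves Ω Θ k V) : SendsIntegralCurves ω Θ (k ∘ h) (U ∩ h ⁻¹' V) := by
  intro γ I hγ hmaps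
  obtain ⟨σ, J, hσ, himage⟩ := hh γ I hγ fun t ht => (hmaps ht).1
  have hσV : MapsTo σ J V := by
    rw [mapsTo_iff_image_subset, ← himage, image_image]
    exact image_subset_iff.mpr fun t ht => (hmaps ht).2
  obtain ⟨τ, K, hτ, himage'⟩ := hk σ J hσ hσV
  exact ⟨τ, K, hτ, by rw [image_comp, himage, himage']⟩

lemma topEquivAt0_iff_exists_openPartialHomeomorph :
    TopEquivAt0 ω Ω ↔ ∃ G : OpenPartialHomeomorph (ℝ × ℝ) (ℝ × ℝ), 0 ∈ G.source ∧ G 0 = 0 ∧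
      SendsIntegralCurves ω Ω G G.source ∧ SendsIntegralCurves Ω ω G.symm G.target := by
  constructor
  · rintro ⟨U, V, h, k, hU, hV, hU₀, -, h₀, hh, hk, hbij, hinv, hsend, hsend'⟩
    exact ⟨⟨⟨⟨h, k, U, V, hbij.mapsTo, (hbij.symm hinv.symm).mapsTo, hinv.1, hinv.2⟩, hh, hk⟩,
      hU, hV⟩, hU₀, h₀, hsend, hsend'⟩
  · rintro ⟨G, hG₀, h₀, hsend, hsend'⟩
    exact ⟨G.source, G.target, G, G.symm, G.open_source, G.open_target, hG₀,
      h₀ ▸ G.map_source hG₀, h₀, G.continuousOn, G.continuousOn_symm, G.bijOn, G.invOn,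
      hsend, hsend'⟩

lemma TopEquivAt0.symm (hωΩ : TopEquivAt0 ω Ω) : TopEquivAt0 Ω ω := by
  obtain ⟨G, hG₀, h₀, hsend, hsend'⟩ := topEquivAt0_iff_exists_openPartialHomeomorph.mp hωΩ
  refine topEquivAt0_iff_exists_openPartialHomeomorph.mpr
    ⟨G.symm, h₀ ▸ G.map_source hG₀, ?_, hsend', hsend⟩
  simpa only [h₀] using G.left_inv hG₀

lemma TopEquivAt0.trans (hωΩ : TopEquivAt0 ω Ω) (hΩΘ : TopEquivAt0 Ω Θ) : TopEquivAt0 ω Θ := by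
  obtain ⟨G, hG₀, h₀, hG, hG'⟩ := topEquivAt0_iff_exists_openPartialHomeomorph.mp hωΩ
  obtain ⟨K, hK₀, k₀, hK, hK'⟩ := topEquivAt0_iff_exists_openPartialHomeomorph.mp hΩΘ
  refine topEquivAt0_iff_exists_openPartialHomeomorph.mpr ⟨G.trans K, ?_, ?_, ?_, ?_⟩
  · rw [OpenPartialHomeomorph.trans_source]
    exact ⟨hG₀, by rwa [mem_preimage, h₀]⟩
  · simp only [OpenPartialHomeomorph.coe_trans, Function.comp_apply, h₀, k₀]
  · simpa only [OpenPartialHomeomorph.trans_source, OpenPartialHomeomorph.coe_trans]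
      using hG.comp hK
  · simpa only [OpenPartialHomeomorph.trans_target, OpenPartialHomeomorph.coe_trans_symm]
      using hK'.comp hG'

lemma sendsIntegralCurves_of_hasFDerivAt {D : ℝ × ℝ → (ℝ × ℝ) →L[ℝ] (ℝ × ℝ)}
    (hD : ContinuousOn D U) (hderiv : ∀ p ∈ U, HasFDerivAt h (D p) p)
    (hinj : ∀ p ∈ U, Function.Injective (D p))
    (hnull : ∀ p ∈ U, ∀ w, ω p w = 0 → Ω (h p) (D p w) = 0) : SendsIntegralCurves ω Ω h U := by
  rintro γ I ⟨hI, dγ, hdγ, hγ⟩ hmaps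
  have hγc : ContinuousOn γ I := fun t ht => (hγ t ht).1.continuousAt.continuousWithinAt
  refine ⟨h ∘ γ, I, ⟨hI, fun t => D (γ t) (dγ t), (hD.comp hγc hmaps).clm_apply hdγ,
    fun t ht => ⟨(hderiv _ (hmaps ht)).comp_hasDerivAt t (hγ t ht).1, ?_, ?_⟩⟩,
    (image_comp h γ I).symm⟩
  · exact (map_ne_zero_iff _ (hinj _ (hmaps ht))).mpr (hγ t ht).2.1
  · exact hnull _ (hmaps ht) _ (hγ t ht).2.2

lemma topEquivAt0_of_pullback {ψ : ℝ × ℝ → ℝ × ℝ} (hψ : ContDiff ℝ 1 ψ) (h₀ : ψ 0 = 0)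
    (hinv : (fderiv ℝ ψ 0).IsInvertible)
    (hnull : ∀ᶠ p in nhds 0, ∀ w, Ω (ψ p) (fderiv ℝ ψ p w) = 0 ↔ ω p w = 0) :
    TopEquivAt0 ω Ω := by
  obtain ⟨G, hG, hG₀, hsub, hGinv⟩ :=
    exists_openPartialHomeomorph_of_isInvertible_fderiv hψ one_ne_zero hinv hnull
  have hderiv (p) : HasFDerivAt ψ (fderiv ℝ ψ p) p :=
    (hψ.differentiable one_ne_zero p).hasFDerivAt
  have hψ' := hψ.continuous_fderiv one_ne_zero
  refine topEquivAt0_iff_exists_openPartialHomeomorph.mpr ⟨G, hG₀, by rw [hG, h₀], ?_, ?_⟩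
  · rw [hG]
    exact sendsIntegralCurves_of_hasFDerivAt hψ'.continuousOn (fun p _ => hderiv p)
      (fun p hp => (hGinv p hp).injective) fun p hp w => (hsub hp w).mpr
  · have hGinv' (q) (hq : q ∈ G.target) := hGinv _ (G.map_target hq)
    refine sendsIntegralCurves_of_hasFDerivAt
      (D := fun q => (fderiv ℝ ψ (G.symm q)).inverse) (fun q hq => ?_) (fun q hq => ?_)
      (fun q hq => (hGinv' q hq).inverse.injective) fun q hq w hw => ?_
    · obtain ⟨e, he⟩ := hGinv' q hq
      have hinverse : ContinuousAt ContinuousLinearMap.inverse (fderiv ℝ ψ (G.symm q)) :=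
        he ▸ (contDiffAt_map_inverse (𝕜 := ℝ) (n := 0) e).continuousAt
      exact ContinuousAt.comp_continuousWithinAt (f := fun q => fderiv ℝ ψ (G.symm q)) hinverse
        (hψ'.continuousAt.comp_continuousWithinAt (G.continuousOn_symm q hq))
    · obtain ⟨e, he⟩ := hGinv' q hq
      rw [← he, ContinuousLinearMap.inverse_equiv]
      exact G.hasFDerivAt_symm hq (by rw [he, hG]; exact hderiv _)
    · have hψq : ψ (G.symm q) = q := by rw [← hG, G.right_inv hq]
      rw [← hsub (G.map_target hq), hψq, (hGinv' q hq).self_apply_inverse, hw]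

end TopologicalEquivalence

/-! ### Hadamard's lemma and implicit functions -/

section ParametricIntegral

universe u

variable {E F : Type u} [NormedAddCommGroup E] [NormedSpace ℝ E] [FiniteDimensional ℝ E]
  [NormedAddCommGroup F] [NormedSpace ℝ F]

lemma contDiff_intervalIntegral_of_contDiff_uncurry [CompleteSpace F] {n : ℕ} {H : E × ℝ → F}
    (hH : ContDiff ℝ n H) (a b : ℝ) : ContDiff ℝ n fun x => ∫ t in a..b, H (x, t) := by
  induction n generalizing F with
  | zero =>
    rw [Nat.cast_zero, contDiff_zero] at hH ⊢
    exact intervalIntegral.continuous_parametric_intervalIntegral_of_continuous'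
      (f := fun x t => H (x, t)) hH a b
  | succ n ih =>
    have := FiniteDimensional.proper_real E
    rw [Nat.cast_succ] at hH ⊢
    let H' : E × ℝ → E →L[ℝ] F := fun q => (fderiv ℝ H q).comp (ContinuousLinearMap.inl ℝ E ℝ)
    have hH' : ContDiff ℝ n H' := (hH.fderiv_right le_rfl).clm_comp contDiff_const
    have hslice (x : E) : Continuous fun t : ℝ => (x, t) := by fun_prop
    refine contDiff_succ_iff_hasFDerivAt.mpr ⟨fun x => ∫ t in a..b, H' (x, t), ih hH', fun x => ?_⟩
    obtain ⟨M, hM⟩ := ((isCompact_closedBall x 1).prod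
      (isCompact_uIcc (a := a) (b := b))).exists_bound_of_continuousOn hH'.continuous.continuousOn
    refine intervalIntegral.hasFDerivAt_integral_of_dominated_of_fderiv_le
      (F := fun x t => H (x, t)) (F' := fun x t => H' (x, t)) (bound := fun _ => M)
      (Metric.ball_mem_nhds x one_pos) (.of_forall fun y => ?_) ?_ ?_
      (.of_forall fun t ht y hy => ?_) intervalIntegrable_const (.of_forall fun t _ y _ => ?_)
    · exact (hH.continuous.comp (hslice y)).aestronglyMeasurable
    · exact (hH.continuous.comp (hslice x)).intervalIntegrable _ _
    · exact (hH'.continuous.comp (hslice x)).aestronglyMeasurable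
    · exact hM (y, t) ⟨Metric.ball_subset_closedBall hy, uIoc_subset_uIcc ht⟩
    · exact (hH.differentiable (by simp) (y, t)).hasFDerivAt.comp y (hasFDerivAt_prodMk_left y t)

theorem exists_contDiff_eq_add_smul [CompleteSpace F] {f : ℝ × E → F}
    (hf : ContDiff ℝ (⊤ : ℕ∞) f) :
    ∃ g, ContDiff ℝ (⊤ : ℕ∞) g ∧ ∀ p : ℝ × E, f p = f (0, p.2) + p.1 • g p := by
  let H : (ℝ × E) × ℝ → F := fun q => fderiv ℝ f (q.2 * q.1.1, q.1.2) (1, 0)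
  have hH : ContDiff ℝ (⊤ : ℕ∞) H := by
    have hf' : ContDiff ℝ (⊤ : ℕ∞) (fderiv ℝ f) := hf.fderiv_right (by simp)
    exact (hf'.comp (by fun_prop : ContDiff ℝ (⊤ : ℕ∞)
      fun q : (ℝ × E) × ℝ => (q.2 * q.1.1, q.1.2))).clm_apply contDiff_const
  refine ⟨fun p => ∫ t in (0 : ℝ)..1, H (p, t), contDiff_infty.mpr fun n =>
    contDiff_intervalIntegral_of_contDiff_uncurry (hH.of_le (by exact_mod_cast le_top)) 0 1,
    fun p => ?_⟩
  have hderiv (t : ℝ) : HasDerivAt (fun t => f (t * p.1, p.2)) (p.1 • H (p, t)) t := by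
    have hline : HasDerivAt (fun t : ℝ => (t * p.1, p.2)) (p.1 • ((1, 0) : ℝ × E)) t := by
      simpa using ((hasDerivAt_id t).mul_const p.1).prodMk (hasDerivAt_const t p.2)
    exact ((hf.differentiable (by simp) _).hasFDerivAt.comp_hasDerivAt t hline).congr_deriv
      (map_smul _ _ _)
  have hintegral : IntervalIntegrable (fun t => p.1 • H (p, t)) MeasureTheory.volume 0 1 :=
    (continuous_const.smul (hH.continuous.comp (by fun_prop : Continuous fun t : ℝ =>
      (p, t)))).intervalIntegrable _ _
  rw [← intervalIntegral.integral_smul,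
    intervalIntegral.integral_eq_sub_of_hasDerivAt (fun t _ => hderiv t) hintegral]
  simp

end ParametricIntegral

section ImplicitFunction

variable {E : Type*} [NormedAddCommGroup E] [NormedSpace ℝ E] [FiniteDimensional ℝ E]

lemma exists_contDiff_eventuallyEq {F : Type*} [NormedAddCommGroup F] [NormedSpace ℝ F]
    {g : E → F} {x : E} {n : ℕ∞}
    (hg : ∀ᶠ y in nhds x, ContDiffAt ℝ n g y) : ∃ G, ContDiff ℝ n G ∧ G =ᶠ[nhds x] g := by
  obtain ⟨ε, hε, hball⟩ := Metric.mem_nhds_iff.mp hg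
  let χ : ContDiffBump x := ⟨ε / 3, ε / 2, by positivity, by linarith⟩
  refine ⟨fun y => χ y • g y, contDiff_iff_contDiffAt.mpr fun y => ?_, ?_⟩
  · by_cases hy : y ∈ Metric.ball x ε
    · exact χ.contDiff.contDiffAt.smul (hball hy)
    · have hχy : y ∉ tsupport χ := fun h => hy <| by
        rw [χ.tsupport_eq] at h
        exact Metric.closedBall_subset_ball (half_lt_self hε) h
      refine (contDiffAt_const (c := (0 : F))).congr_of_eventuallyEq ?_
      filter_upwards [notMem_tsupport_iff_eventuallyEq.mp hχy] with z hz
      rw [hz, Pi.zero_apply, zero_smul]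
  · filter_upwards [χ.eventuallyEq_one] with y hy
    rw [hy, Pi.one_apply, one_smul]

lemma isInvertible_of_injective {L : E →L[ℝ] E} (hL : Function.Injective L) : L.IsInvertible :=
  ⟨(LinearEquiv.ofInjectiveEndo L.toLinearMap hL).toContinuousLinearEquiv,
    ContinuousLinearMap.ext fun _ => rfl⟩

lemma isInvertible_prod_snd {L : ℝ × E →L[ℝ] ℝ} (hL : L (1, 0) ≠ 0) :
    (L.prod (ContinuousLinearMap.snd ℝ ℝ E)).IsInvertible := by
  refine isInvertible_of_injective ((injective_iff_map_eq_zero _).mpr fun w hw => ?_)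
  obtain ⟨hLw, hw₂⟩ : L w = 0 ∧ w.2 = 0 := Prod.ext_iff.mp hw
  have hw' : w = w.1 • (1, 0) := Prod.ext (by simp) (by simpa using hw₂)
  rw [hw', map_smul, smul_eq_mul, mul_eq_zero_iff_right hL] at hLw
  rw [hw', hLw, zero_smul]

theorem exists_contDiff_implicit {f : ℝ × E → ℝ} (hf : ContDiff ℝ (⊤ : ℕ∞) f) (h₀ : f 0 = 0)
    (hf' : fderiv ℝ f 0 (1, 0) ≠ 0) :
    ∃ s : E → ℝ, ContDiff ℝ (⊤ : ℕ∞) s ∧ s 0 = 0 ∧ ∀ᶠ v in nhds 0, f (s v, v) = 0 := by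
  let Φ : ℝ × E → ℝ × E := fun p => (f p, p.2)
  have hΦ : ContDiff ℝ (⊤ : ℕ∞) Φ := hf.prodMk contDiff_snd
  have hΦ' : (fderiv ℝ Φ 0).IsInvertible := by
    rw [((hf.differentiable (by simp) 0).hasFDerivAt.prodMk hasFDerivAt_snd).fderiv]
    exact isInvertible_prod_snd hf'
  obtain ⟨G, hG, hG₀, -, hGinv⟩ :=
    exists_openPartialHomeomorph_of_isInvertible_fderiv hΦ (by simp) hΦ' univ_mem
  have hGsymm₀ : G.symm 0 = 0 := by
    simpa only [hG, Φ, h₀, Prod.snd_zero, Prod.mk_zero_zero] using G.left_inv hG₀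
  have hG₀' : (0 : ℝ × E) ∈ G.target := by
    simpa only [hG, Φ, h₀, Prod.snd_zero, Prod.mk_zero_zero] using G.map_source hG₀
  have htarget : ∀ᶠ v in nhds (0 : E), ((0 : ℝ), v) ∈ G.target :=
    (by fun_prop : Continuous fun v : E => ((0 : ℝ), v)).continuousAt.eventually
      (G.open_target.mem_nhds hG₀')
  obtain ⟨s, hs, hsG⟩ := exists_contDiff_eventuallyEq (g := fun v : E => (G.symm (0, v)).1)
    (x := 0) (n := ⊤) <| by
    filter_upwards [htarget] with v hv
    obtain ⟨e, he⟩ := hGinv _ (G.map_target hv)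
    have hsymm : ContDiffAt ℝ (⊤ : ℕ∞) G.symm (0, v) := G.contDiffAt_symm hv
      (by rw [he, hG]; exact (hΦ.differentiable (by simp) _).hasFDerivAt)
      (by rw [hG]; exact hΦ.contDiffAt)
    exact (hsymm.comp v (contDiffAt_const.prodMk contDiffAt_id)).fst
  refine ⟨s, hs, hsG.self_of_nhds.trans (congrArg Prod.fst hGsymm₀), ?_⟩
  filter_upwards [hsG, htarget] with v hsv hv
  have hΦv : Φ (G.symm (0, v)) = (0, v) := hG ▸ G.right_inv hv
  have hsymm : (s v, v) = G.symm (0, v) := Prod.ext hsv (congrArg Prod.snd hΦv).symm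
  rw [hsymm]
  exact congrArg Prod.fst hΦv

end ImplicitFunction

/-! ### Normal form of a saddle -/

/-- The function `A` is smooth and vanishes at the origin, where its derivative is `L`. -/
structure HasLinearPartAt0 {E : Type*} [NormedAddCommGroup E] [NormedSpace ℝ E] (A : E → ℝ)
    (L : E →L[ℝ] ℝ) : Prop where
  contDiff : ContDiff ℝ (⊤ : ℕ∞) A
  map_zero : A 0 = 0
  hasFDerivAt : HasFDerivAt A L 0

namespace HasLinearPartAt0

section

variable {E F : Type*} [NormedAddCommGroup E] [NormedSpace ℝ E] [NormedAddCommGroup F]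
  [NormedSpace ℝ F] {A B : E → ℝ} {L M : E →L[ℝ] ℝ}

lemma congr_linearPart (hA : HasLinearPartAt0 A L) (hLM : L = M) : HasLinearPartAt0 A M :=
  hLM ▸ hA

lemma add (hA : HasLinearPartAt0 A L) (hB : HasLinearPartAt0 B M) :
    HasLinearPartAt0 (fun p => A p + B p) (L + M) where
  contDiff := hA.contDiff.add hB.contDiff
  map_zero := by rw [hA.map_zero, hB.map_zero, add_zero]
  hasFDerivAt := hA.hasFDerivAt.add hB.hasFDerivAt

lemma mul_contDiff (hA : HasLinearPartAt0 A L) {g : E → ℝ} (hg : ContDiff ℝ (⊤ : ℕ∞) g) :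
    HasLinearPartAt0 (fun p => A p * g p) (g 0 • L) where
  contDiff := hA.contDiff.mul hg
  map_zero := by rw [hA.map_zero, zero_mul]
  hasFDerivAt := (hA.hasFDerivAt.fun_mul (hg.differentiable (by simp) 0).hasFDerivAt).congr_fderiv
    (by rw [hA.map_zero, zero_smul, zero_add])

lemma comp (hA : HasLinearPartAt0 A L) {ψ : F → E} {ψ' : F →L[ℝ] E}
    (hψ : ContDiff ℝ (⊤ : ℕ∞) ψ) (hψ₀ : ψ 0 = 0) (hψ' : HasFDerivAt ψ ψ' 0) :
    HasLinearPartAt0 (fun p => A (ψ p)) (L.comp ψ') where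
  contDiff := hA.contDiff.comp hψ
  map_zero := by rw [hψ₀, hA.map_zero]
  hasFDerivAt := HasFDerivAt.comp (g := A) 0 (hψ₀.symm ▸ hA.hasFDerivAt) hψ'

end

variable {A : ℝ × ℝ → ℝ} {L : ℝ × ℝ →L[ℝ] ℝ}

lemma comp_swap (hA : HasLinearPartAt0 A L) :
    HasLinearPartAt0 (fun p => A p.swap)
      (L.comp (ContinuousLinearEquiv.prodComm ℝ ℝ ℝ : ℝ × ℝ →L[ℝ] ℝ × ℝ)) :=
  hA.comp (ContinuousLinearEquiv.prodComm ℝ ℝ ℝ).contDiff rfl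
    (ContinuousLinearEquiv.prodComm ℝ ℝ ℝ).hasFDerivAt

lemma eq_of_eq_mul {g : ℝ → ℝ} {v : ℝ × ℝ} {c : ℝ → ℝ × ℝ} (hA : HasLinearPartAt0 A L)
    (hc₀ : c 0 = 0) (hc : HasDerivAt c v 0) (hg : DifferentiableAt ℝ g 0)
    (hAg : ∀ᶠ t in nhds 0, A (c t) = t * g t) : g 0 = L v := by
  have hderiv : HasDerivAt (fun t => t * g t) (g 0) 0 := by
    simpa using (hasDerivAt_id (0 : ℝ)).fun_mul hg.hasDerivAt
  exact (hderiv.congr_of_eventuallyEq hAg).unique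
    (HasFDerivAt.comp_hasDerivAt (l := A) 0 (hc₀.symm ▸ hA.hasFDerivAt) hc)

lemma exists_blowup (hA : HasLinearPartAt0 A L) :
    ∃ G : ℝ × ℝ → ℝ, ContDiff ℝ (⊤ : ℕ∞) G ∧ (∀ s v, A (v * s, v) = v * G (s, v)) ∧
      ∀ s, G (s, 0) = L (s, 1) := by
  have hblowup : ContDiff ℝ (⊤ : ℕ∞) fun q : ℝ × ℝ => A (q.1 * q.2, q.1) :=
    hA.contDiff.comp (by fun_prop : ContDiff ℝ (⊤ : ℕ∞) fun q : ℝ × ℝ => (q.1 * q.2, q.1))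
  obtain ⟨g, hg, hAg⟩ := exists_contDiff_eq_add_smul hblowup
  have hAg' (s v : ℝ) : A (v * s, v) = v * g (v, s) := by
    have := hAg (v, s)
    rwa [zero_mul, Prod.mk_zero_zero, hA.map_zero, zero_add, smul_eq_mul] at this
  have hgswap : ContDiff ℝ (⊤ : ℕ∞) fun p : ℝ × ℝ => g (p.2, p.1) := by fun_prop
  refine ⟨fun p => g (p.2, p.1), hgswap, hAg', fun s => ?_⟩
  refine hA.eq_of_eq_mul (g := fun t => g (t, s)) (c := fun t => (t * s, t)) (by simp) ?_
    (ContDiff.differentiable (by fun_prop) (by simp : ((⊤ : ℕ∞) : WithTop ℕ∞) ≠ 0) 0)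
    (.of_forall (hAg' s))
  simpa using ((hasDerivAt_id (0 : ℝ)).mul_const s).prodMk (hasDerivAt_id 0)

lemma exists_eq_fst_mul (hA : HasLinearPartAt0 A L) (hvanish : ∀ᶠ v in nhds 0, A (0, v) = 0) :
    ∃ α, ContDiff ℝ (⊤ : ℕ∞) α ∧ α 0 = L (1, 0) ∧ ∀ᶠ p in nhds 0, A p = p.1 * α p := by
  obtain ⟨α, hα, hAα⟩ := exists_contDiff_eq_add_smul hA.contDiff
  have hAα' : ∀ᶠ p in nhds (0 : ℝ × ℝ), A p = p.1 * α p := by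
    filter_upwards [continuous_snd.continuousAt.eventually hvanish] with p hp
    rw [hAα, hp, zero_add, smul_eq_mul]
  have haxis : HasDerivAt (fun t : ℝ => (t, (0 : ℝ))) (1, 0) 0 :=
    (hasDerivAt_id 0).prodMk (hasDerivAt_const _ _)
  exact ⟨α, hα, hA.eq_of_eq_mul (g := fun t => α (t, 0)) (c := fun t => (t, 0)) rfl haxis
    ((hα.differentiable (by simp) _).comp 0 haxis.differentiableAt)
    (haxis.continuousAt.eventually hAα'), hAα'⟩

lemma exists_eq_snd_mul (hA : HasLinearPartAt0 A L) (hvanish : ∀ᶠ u in nhds 0, A (u, 0) = 0) :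
    ∃ γ, ContDiff ℝ (⊤ : ℕ∞) γ ∧ γ 0 = L (0, 1) ∧ ∀ᶠ p in nhds 0, A p = p.2 * γ p := by
  obtain ⟨γ, hγ, hγ₀, hAγ⟩ := hA.comp_swap.exists_eq_fst_mul hvanish
  have hswap : ContDiff ℝ (⊤ : ℕ∞) (Prod.swap : ℝ × ℝ → ℝ × ℝ) :=
    (ContinuousLinearEquiv.prodComm ℝ ℝ ℝ).contDiff
  refine ⟨fun p => γ p.swap, hγ.comp hswap, hγ₀, ?_⟩
  exact (continuous_swap.tendsto (0 : ℝ × ℝ)).eventually hAγ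

end HasLinearPartAt0

lemma exists_eq_fst_mul_snd_mul {B : ℝ × ℝ → ℝ} (hB : ContDiff ℝ (⊤ : ℕ∞) B)
    (hfst : ∀ᶠ v in nhds 0, B (0, v) = 0) (hsnd : ∀ᶠ u in nhds 0, B (u, 0) = 0) :
    ∃ β, ContDiff ℝ (⊤ : ℕ∞) β ∧ ∀ᶠ p in nhds 0, B p = p.1 * p.2 * β p := by
  have hswap : ContDiff ℝ (⊤ : ℕ∞) (Prod.swap : ℝ × ℝ → ℝ × ℝ) :=
    (ContinuousLinearEquiv.prodComm ℝ ℝ ℝ).contDiff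
  obtain ⟨g, hg, hBg⟩ := exists_contDiff_eq_add_smul hB
  obtain ⟨β, hβ, hgβ⟩ := exists_contDiff_eq_add_smul (hg.comp hswap)
  refine ⟨fun p => β p.swap, hβ.comp hswap, ?_⟩
  filter_upwards [continuous_snd.continuousAt.eventually hfst,
    continuous_fst.continuousAt.eventually hsnd] with p hp₁ hp₂
  have haxis : p.1 * g (p.1, 0) = 0 := by
    simpa only [hp₂, hfst.self_of_nhds, zero_add, smul_eq_mul, eq_comm] using hBg (p.1, 0)
  have hgp : g p = g (p.1, 0) + p.2 * β p.swap := hgβ p.swap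
  rw [hBg, hp₁, hgp, smul_eq_mul]
  linear_combination haxis

/-- The coefficients of `A dx² + 2B dxdy + C dy²` have the 1-jets `x, 0, y` of the saddle
`x dx² + y dy²`. -/
structure HasSaddleJet (A B C : ℝ × ℝ → ℝ) : Prop where
  left : HasLinearPartAt0 A (ContinuousLinearMap.fst ℝ ℝ ℝ)
  middle : HasLinearPartAt0 B 0
  right : HasLinearPartAt0 C (ContinuousLinearMap.snd ℝ ℝ ℝ)

section NormalForm

variable {A B C : ℝ × ℝ → ℝ}

lemma HasSaddleJet.swap (h : HasSaddleJet A B C) :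
    HasSaddleJet (fun p => C p.swap) (fun p => B p.swap) fun p => A p.swap :=
  ⟨h.right.comp_swap, h.middle.comp_swap, h.left.comp_swap⟩

lemma HasSaddleJet.exists_degenerate_branch (h : HasSaddleJet A B C) :
    ∃ φ κ : ℝ → ℝ, ContDiff ℝ (⊤ : ℕ∞) φ ∧ ContDiff ℝ (⊤ : ℕ∞) κ ∧ φ 0 = 0 ∧ deriv φ 0 = 0 ∧
      κ 0 = 0 ∧ ∀ᶠ v in nhds 0, A (φ v, v) + B (φ v, v) * κ v = 0 ∧
        B (φ v, v) + C (φ v, v) * κ v = 0 := by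
  obtain ⟨A', hA', hAA', hA'₀⟩ := h.left.exists_blowup
  obtain ⟨B', hB', hBB', hB'₀⟩ := h.middle.exists_blowup
  obtain ⟨C', hC', hCC', hC'₀⟩ := h.right.exists_blowup
  let D : ℝ × ℝ → ℝ := fun p => A' p * C' p - B' p ^ 2
  have hD : ContDiff ℝ (⊤ : ℕ∞) D := (hA'.mul hC').sub (hB'.pow 2)
  have hDaxis (s : ℝ) : D (s, 0) = s := by simp [D, hA'₀, hB'₀, hC'₀]
  have hD' : fderiv ℝ D 0 (1, 0) = 1 := by
    have haxis : HasDerivAt (fun s : ℝ => (s, (0 : ℝ))) (1, 0) 0 :=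
      (hasDerivAt_id 0).prodMk (hasDerivAt_const _ _)
    have hderiv := HasFDerivAt.comp_hasDerivAt (l := D) 0
      (hD.differentiable (by simp) _).hasFDerivAt haxis
    exact hderiv.unique ((hasDerivAt_id 0).congr_of_eventuallyEq (.of_forall hDaxis))
  obtain ⟨s, hs, hs₀, hDs⟩ :=
    exists_contDiff_implicit hD (hDaxis 0) (by rw [hD']; exact one_ne_zero)
  have hgraph : ContDiff ℝ (⊤ : ℕ∞) fun v => (s v, v) := hs.prodMk contDiff_id
  have hC'ne : ∀ᶠ v in nhds 0, C' (s v, v) ≠ 0 :=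
    (hC'.comp hgraph).continuous.continuousAt.eventually_ne (by simp [hC'₀])
  obtain ⟨κ, hκ, hκs⟩ := exists_contDiff_eventuallyEq
    (g := fun v => -B' (s v, v) / C' (s v, v)) (x := 0) (n := ⊤) <| by
      filter_upwards [hC'ne] with v hv
      exact (hB'.comp hgraph).contDiffAt.neg.div (hC'.comp hgraph).contDiffAt hv
  refine ⟨fun v => v * s v, κ, contDiff_id.mul hs, hκ, zero_mul _, ?_, ?_, ?_⟩
  · simpa [hs₀] using
      ((hasDerivAt_id (0 : ℝ)).fun_mul (hs.differentiable (by simp) 0).hasDerivAt).deriv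
  · simp [hκs.self_of_nhds, hB'₀]
  · filter_upwards [hDs, hC'ne, hκs] with v hDv hCv hκv
    rw [hAA', hBB', hCC', hκv]
    constructor
    · field_simp
      linear_combination v * hDv
    · field_simp
      ring

/-- A map straightening the curves `(φ v, v)` and `(u, χ u)` to the coordinate axes, with
prescribed transversal slopes `κ` and `l` along them. -/
def straighteningMap (φ κ χ l : ℝ → ℝ) (p : ℝ × ℝ) : ℝ × ℝ :=
  (p.1 + φ p.2 + p.2 * l p.1, p.2 + χ p.1 + p.1 * κ p.2)

lemma hasFDerivAt_straighteningMap {φ κ χ l : ℝ → ℝ} (hφ : Differentiable ℝ φ)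
    (hκ : Differentiable ℝ κ) (hχ : Differentiable ℝ χ) (hl : Differentiable ℝ l) (p : ℝ × ℝ) :
    HasFDerivAt (straighteningMap φ κ χ l)
      (((1 + p.2 * deriv l p.1) • ContinuousLinearMap.fst ℝ ℝ ℝ +
          (deriv φ p.2 + l p.1) • ContinuousLinearMap.snd ℝ ℝ ℝ).prod
        ((deriv χ p.1 + κ p.2) • ContinuousLinearMap.fst ℝ ℝ ℝ +
          (1 + p.1 * deriv κ p.2) • ContinuousLinearMap.snd ℝ ℝ ℝ)) p := by
  have hfst : HasFDerivAt (fun p : ℝ × ℝ => p.1) (ContinuousLinearMap.fst ℝ ℝ ℝ) p :=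
    hasFDerivAt_fst
  have hsnd : HasFDerivAt (fun p : ℝ × ℝ => p.2) (ContinuousLinearMap.snd ℝ ℝ ℝ) p :=
    hasFDerivAt_snd
  refine (((hfst.fun_add ((hφ p.2).hasDerivAt.comp_hasFDerivAt p hsnd)).fun_add
      (hsnd.fun_mul ((hl p.1).hasDerivAt.comp_hasFDerivAt p hfst))).prodMk
    ((hsnd.fun_add ((hχ p.1).hasDerivAt.comp_hasFDerivAt p hfst)).fun_add
      (hfst.fun_mul ((hκ p.2).hasDerivAt.comp_hasFDerivAt p hsnd)))).congr_fderiv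
    (ContinuousLinearMap.ext fun w => Prod.ext ?_ ?_)
  · simp only [Function.comp_apply, ContinuousLinearMap.prod_apply, add_apply,
      smul_apply, ContinuousLinearMap.coe_fst', ContinuousLinearMap.coe_snd',
      smul_eq_mul]
    ring
  · simp only [Function.comp_apply, ContinuousLinearMap.prod_apply, add_apply,
      smul_apply, ContinuousLinearMap.coe_fst', ContinuousLinearMap.coe_snd',
      smul_eq_mul]
    ring

lemma exists_straightening {φ κ χ l : ℝ → ℝ} (hφ : ContDiff ℝ (⊤ : ℕ∞) φ)
    (hκ : ContDiff ℝ (⊤ : ℕ∞) κ) (hχ : ContDiff ℝ (⊤ : ℕ∞) χ) (hl : ContDiff ℝ (⊤ : ℕ∞) l)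
    (hφ₀ : φ 0 = 0) (hφ'₀ : deriv φ 0 = 0) (hκ₀ : κ 0 = 0) (hχ₀ : χ 0 = 0)
    (hχ'₀ : deriv χ 0 = 0) (hl₀ : l 0 = 0) :
    ∃ ψ : ℝ × ℝ → ℝ × ℝ, ContDiff ℝ (⊤ : ℕ∞) ψ ∧ ψ 0 = 0 ∧
      HasFDerivAt ψ (ContinuousLinearMap.id ℝ (ℝ × ℝ)) 0 ∧
      (∀ v, ψ (0, v) = (φ v, v) ∧ ∃ r : ℝ, fderiv ℝ ψ (0, v) (1, 0) = r • (1, κ v)) ∧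
      ∀ u, ψ (u, 0) = (u, χ u) ∧ ∃ r : ℝ, fderiv ℝ ψ (u, 0) (0, 1) = r • (l u, 1) := by
  -- The factors compensate the rescalings `1 + v l'(0)` and `1 + u κ'(0)` of the axis directions.
  let κ' : ℝ → ℝ := fun v => (1 + deriv l 0 * v) * κ v
  let l' : ℝ → ℝ := fun u => (1 + deriv κ 0 * u) * l u
  have hκ' : ContDiff ℝ (⊤ : ℕ∞) κ' := by fun_prop
  have hl' : ContDiff ℝ (⊤ : ℕ∞) l' := by fun_prop
  have hκ'₀ : κ' 0 = 0 := by simp only [κ', hκ₀, mul_zero]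
  have hl'₀ : l' 0 = 0 := by simp only [l', hl₀, mul_zero]
  have hderiv (k : ℝ) {g : ℝ → ℝ} (hg : ContDiff ℝ (⊤ : ℕ∞) g) (hg₀ : g 0 = 0) :
      deriv (fun v => (1 + k * v) * g v) 0 = deriv g 0 := by
    have hfactor : HasDerivAt (fun v : ℝ => 1 + k * v) k 0 := by
      simpa using ((hasDerivAt_id (0 : ℝ)).const_mul k).const_add 1
    simpa [hg₀] using (hfactor.fun_mul (hg.differentiable (by simp) 0).hasDerivAt).deriv
  have hκ'' : deriv κ' 0 = deriv κ 0 := hderiv _ hκ hκ₀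
  have hl'' : deriv l' 0 = deriv l 0 := hderiv _ hl hl₀
  have hψ' := hasFDerivAt_straighteningMap (hφ.differentiable (by simp))
    (hκ'.differentiable (by simp)) (hχ.differentiable (by simp)) (hl'.differentiable (by simp))
  refine ⟨straighteningMap φ κ' χ l', by unfold straighteningMap; fun_prop,
    by simp [straighteningMap, hφ₀, hχ₀], (hψ' 0).congr_fderiv ?_,
    fun v => ⟨by simp [straighteningMap, hχ₀, hl'₀], 1 + deriv l 0 * v, ?_⟩,
    fun u => ⟨by simp [straighteningMap, hφ₀, hκ'₀], 1 + deriv κ 0 * u, ?_⟩⟩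
  · ext <;> simp [hφ'₀, hκ'₀, hχ'₀, hl'₀]
  · rw [(hψ' (0, v)).fderiv]
    simp [hχ'₀, hl'', κ', mul_comm]
  · rw [(hψ' (u, 0)).fderiv]
    simp [hφ'₀, hκ'', l', mul_comm]

/-- The coefficient, for the pair of directions `v, w`, of the pullback by `ψ` of the symmetric
bilinear form of `A dx² + 2B dxdy + C dy²`. -/
def pullbackCoeff (A B C : ℝ × ℝ → ℝ) (ψ : ℝ × ℝ → ℝ × ℝ) (v w p : ℝ × ℝ) : ℝ :=
  A (ψ p) * ((fderiv ℝ ψ p v).1 * (fderiv ℝ ψ p w).1) +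
    B (ψ p) * ((fderiv ℝ ψ p v).1 * (fderiv ℝ ψ p w).2 + (fderiv ℝ ψ p v).2 * (fderiv ℝ ψ p w).1) +
    C (ψ p) * ((fderiv ℝ ψ p v).2 * (fderiv ℝ ψ p w).2)

variable {ψ : ℝ × ℝ → ℝ × ℝ}

lemma pullbackCoeff_comm (v w p : ℝ × ℝ) :
    pullbackCoeff A B C ψ v w p = pullbackCoeff A B C ψ w v p := by
  unfold pullbackCoeff
  ring

lemma bde_fderiv_apply_eq_bde_pullbackCoeff (p w : ℝ × ℝ) :
    BDE C B A (ψ p) (fderiv ℝ ψ p w) = BDE (pullbackCoeff A B C ψ (0, 1) (0, 1))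
      (pullbackCoeff A B C ψ (1, 0) (0, 1)) (pullbackCoeff A B C ψ (1, 0) (1, 0)) p w := by
  have hw : fderiv ℝ ψ p w = w.1 • fderiv ℝ ψ p (1, 0) + w.2 • fderiv ℝ ψ p (0, 1) := by
    rw [← map_smul, ← map_smul, ← map_add]
    simp
  simp only [hw, BDE, pullbackCoeff, Prod.fst_add, Prod.snd_add, Prod.smul_fst, Prod.smul_snd,
    smul_eq_mul]
  ring

lemma pullbackCoeff_eq_zero {n v p : ℝ × ℝ} {r : ℝ} (hAB : A (ψ p) * n.1 + B (ψ p) * n.2 = 0)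
    (hBC : B (ψ p) * n.1 + C (ψ p) * n.2 = 0) (hv : fderiv ℝ ψ p v = r • n) (w : ℝ × ℝ) :
    pullbackCoeff A B C ψ v w p = 0 := by
  simp only [pullbackCoeff, hv, Prod.smul_fst, Prod.smul_snd, smul_eq_mul]
  linear_combination r * (fderiv ℝ ψ p w).1 * hAB + r * (fderiv ℝ ψ p w).2 * hBC

lemma HasSaddleJet.hasLinearPartAt0_pullbackCoeff (h : HasSaddleJet A B C)
    (hψ : ContDiff ℝ (⊤ : ℕ∞) ψ) (hψ₀ : ψ 0 = 0)
    (hψ' : HasFDerivAt ψ (ContinuousLinearMap.id ℝ (ℝ × ℝ)) 0) (v w : ℝ × ℝ) :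
    HasLinearPartAt0 (pullbackCoeff A B C ψ v w)
      ((v.1 * w.1) • ContinuousLinearMap.fst ℝ ℝ ℝ +
        (v.2 * w.2) • ContinuousLinearMap.snd ℝ ℝ ℝ) := by
  have hD (v : ℝ × ℝ) : ContDiff ℝ (⊤ : ℕ∞) fun p => fderiv ℝ ψ p v :=
    (hψ.fderiv_right (by simp)).clm_apply contDiff_const
  have hA := (h.left.comp hψ hψ₀ hψ').mul_contDiff ((hD v).fst.mul (hD w).fst)
  have hB := (h.middle.comp hψ hψ₀ hψ').mul_contDiff
    (((hD v).fst.mul (hD w).snd).add ((hD v).snd.mul (hD w).fst))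
  have hC := (h.right.comp hψ hψ₀ hψ').mul_contDiff ((hD v).snd.mul (hD w).snd)
  refine (hA.add hB).add hC |>.congr_linearPart ?_
  simp [hψ'.fderiv]

theorem HasSaddleJet.exists_pullback_eq_saddleForm (h : HasSaddleJet A B C) :
    ∃ (ψ : ℝ × ℝ → ℝ × ℝ) (α β γ : ℝ × ℝ → ℝ), ContDiff ℝ (⊤ : ℕ∞) ψ ∧ ψ 0 = 0 ∧
      HasFDerivAt ψ (ContinuousLinearMap.id ℝ (ℝ × ℝ)) 0 ∧ ContDiff ℝ (⊤ : ℕ∞) α ∧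
      ContDiff ℝ (⊤ : ℕ∞) β ∧ ContDiff ℝ (⊤ : ℕ∞) γ ∧ α 0 = 1 ∧ γ 0 = 1 ∧
      ∀ᶠ p in nhds 0, ∀ w, BDE C B A (ψ p) (fderiv ℝ ψ p w) = saddleForm α β γ p w := by
  obtain ⟨φ, κ, hφ, hκ, hφ₀, hφ'₀, hκ₀, hker⟩ := h.exists_degenerate_branch
  obtain ⟨χ, l, hχ, hl, hχ₀, hχ'₀, hl₀, hker'⟩ := h.swap.exists_degenerate_branch
  obtain ⟨ψ, hψ, hψ₀, hψ', hψaxis, hψaxis'⟩ :=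
    exists_straightening hφ hκ hχ hl hφ₀ hφ'₀ hκ₀ hχ₀ hχ'₀ hl₀
  have hcoeff := h.hasLinearPartAt0_pullbackCoeff hψ hψ₀ hψ'
  have hvanish : ∀ᶠ v in nhds (0 : ℝ), ∀ w, pullbackCoeff A B C ψ (1, 0) w (0, v) = 0 := by
    filter_upwards [hker] with v hv
    obtain ⟨hψv, r, hr⟩ := hψaxis v
    refine pullbackCoeff_eq_zero ?_ ?_ hr
    · rw [hψv]; linear_combination hv.1
    · rw [hψv]; linear_combination hv.2
  have hvanish' : ∀ᶠ u in nhds (0 : ℝ), ∀ w, pullbackCoeff A B C ψ (0, 1) w (u, 0) = 0 := by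
    filter_upwards [hker'] with u hu
    obtain ⟨hψu, r, hr⟩ := hψaxis' u
    simp only [Prod.swap_prod_mk] at hu
    refine pullbackCoeff_eq_zero ?_ ?_ hr
    · rw [hψu]; linear_combination hu.2
    · rw [hψu]; linear_combination hu.1
  obtain ⟨α, hα, hα₀, hαeq⟩ :=
    (hcoeff (1, 0) (1, 0)).exists_eq_fst_mul (hvanish.mono fun v hv => hv _)
  obtain ⟨β, hβ, hβeq⟩ := exists_eq_fst_mul_snd_mul (hcoeff (1, 0) (0, 1)).contDiff
    (hvanish.mono fun v hv => hv _) (hvanish'.mono fun u hu => pullbackCoeff_comm _ _ _ ▸ hu _)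
  obtain ⟨γ, hγ, hγ₀, hγeq⟩ :=
    (hcoeff (0, 1) (0, 1)).exists_eq_snd_mul (hvanish'.mono fun u hu => hu _)
  refine ⟨ψ, α, β, γ, hψ, hψ₀, hψ', hα, hβ, hγ, by simpa using hα₀, by simpa using hγ₀, ?_⟩
  filter_upwards [hαeq, hβeq, hγeq] with p hαp hβp hγp w
  rw [bde_fderiv_apply_eq_bde_pullbackCoeff]
  simp only [BDE, saddleForm, hαp, hβp, hγp]
  ring

end NormalForm

/-! ### Binary differential equations of saddle type -/

/-- The BDE `ω` becomes, after a smooth change of coordinates and up to a nonzero constant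
factor, a form `x α dx² + 2 x y β dxdy + y γ dy²` with `α 0 = γ 0 = 1`. -/
def HasSaddleNormalForm (ω : ℝ × ℝ → ℝ × ℝ → ℝ) : Prop :=
  ∃ (Ψ : ℝ × ℝ → ℝ × ℝ) (k : ℝ) (α β γ : ℝ × ℝ → ℝ), ContDiff ℝ (⊤ : ℕ∞) Ψ ∧ Ψ 0 = 0 ∧
    (fderiv ℝ Ψ 0).IsInvertible ∧ k ≠ 0 ∧ ContDiff ℝ (⊤ : ℕ∞) α ∧ ContDiff ℝ (⊤ : ℕ∞) β ∧
    ContDiff ℝ (⊤ : ℕ∞) γ ∧ α 0 = 1 ∧ γ 0 = 1 ∧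
    ∀ᶠ p in nhds 0, ∀ w, ω (Ψ p) (fderiv ℝ Ψ p w) = k * saddleForm α β γ p w

lemma HasSaddleJet.hasSaddleNormalForm {A B C : ℝ × ℝ → ℝ} {ω : ℝ × ℝ → ℝ × ℝ → ℝ}
    {L : ℝ × ℝ →L[ℝ] ℝ × ℝ} {k : ℝ} (h : HasSaddleJet A B C) (hL : L.IsInvertible) (hk : k ≠ 0)
    (hω : ∀ p w, ω (L p) (L w) = k * BDE C B A p w) : HasSaddleNormalForm ω := by
  obtain ⟨ψ, α, β, γ, hψ, hψ₀, hψ', hα, hβ, hγ, hα₀, hγ₀, hform⟩ := h.exists_pullback_eq_saddleForm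
  have hderiv (p : ℝ × ℝ) : fderiv ℝ (fun p => L (ψ p)) p = L.comp (fderiv ℝ ψ p) :=
    (L.hasFDerivAt.comp p (hψ.differentiable (by simp) p).hasFDerivAt).fderiv
  refine ⟨fun p => L (ψ p), k, α, β, γ, L.contDiff.comp hψ,
    (congrArg L hψ₀).trans (map_zero L), ?_, hk, hα, hβ, hγ, hα₀, hγ₀, ?_⟩
  · rwa [hderiv, hψ'.fderiv, ContinuousLinearMap.comp_id]
  · filter_upwards [hform] with p hp w
    rw [hderiv, ContinuousLinearMap.comp_apply, hω, hp]

theorem HasSaddleNormalForm.topEquivAt0 {ω Ω : ℝ × ℝ → ℝ × ℝ → ℝ} (hω : HasSaddleNormalForm ω)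
    (hΩ : HasSaddleNormalForm Ω) : TopEquivAt0 ω Ω := by
  have hflows {ω : ℝ × ℝ → ℝ × ℝ → ℝ} (hω : HasSaddleNormalForm ω) :
      ∃ ω', TopEquivAt0 ω' ω ∧ ∃ N F u l, HasSectorFlows ω' N F u l := by
    obtain ⟨Ψ, k, α, β, γ, hΨ, hΨ₀, hinv, hk, hα, hβ, hγ, hα₀, hγ₀, hform⟩ := hω
    refine ⟨saddleForm α β γ, topEquivAt0_of_pullback (hΨ.of_le (by simp)) hΨ₀ hinv ?_,
      exists_hasSectorFlows (hα.of_le (by simp)) (hβ.of_le (by simp)) (hγ.of_le (by simp))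
        hα₀ hγ₀ (.of_forall fun _ => rfl)⟩
    filter_upwards [hform] with p hp w
    rw [hp, mul_eq_zero, or_iff_right hk]
  obtain ⟨ω', hω', _, _, _, _, hflow⟩ := hflows hω
  obtain ⟨Ω', hΩ', _, _, _, _, hflow'⟩ := hflows hΩ
  exact (hω'.symm.trans (hflow.topEquivAt0_of_hasSectorFlows hflow')).trans hΩ'

lemma hasLinearPartAt0_self {E : Type*} [NormedAddCommGroup E] [NormedSpace ℝ E] (L : E →L[ℝ] ℝ) :
    HasLinearPartAt0 L L :=
  ⟨L.contDiff, map_zero L, L.hasFDerivAt⟩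

lemma hasSaddleNormalForm_bde_snd_fst_snd :
    HasSaddleNormalForm (BDE (fun p => p.2) (fun p => p.1) fun p => p.2) := by
  let L : ℝ × ℝ →L[ℝ] ℝ × ℝ := (ContinuousLinearMap.fst ℝ ℝ ℝ - ContinuousLinearMap.snd ℝ ℝ ℝ).prod
    (ContinuousLinearMap.fst ℝ ℝ ℝ + ContinuousLinearMap.snd ℝ ℝ ℝ)
  have hLp (p : ℝ × ℝ) : L p = (p.1 - p.2, p.1 + p.2) := rfl
  have hL : L.IsInvertible := isInvertible_of_injective <| by
    rw [injective_iff_map_eq_zero]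
    intro p hp
    rw [hLp, Prod.mk_eq_zero] at hp
    exact Prod.ext (by simp only [Prod.fst_zero]; linarith) (by simp only [Prod.snd_zero]; linarith)
  have hjet : HasSaddleJet _ _ _ :=
    ⟨hasLinearPartAt0_self _, hasLinearPartAt0_self _, hasLinearPartAt0_self _⟩
  refine hjet.hasSaddleNormalForm hL (four_ne_zero (α := ℝ)) fun p w => ?_
  simp only [BDE, hLp, ContinuousLinearMap.coe_fst', ContinuousLinearMap.coe_snd', zero_apply]
  ring

-- `L` sends the coordinate axes to the tangents `y = ± √3 x` of the discriminant `4y² - 12x²`.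
lemma hasSaddleNormalForm_bde_of_hasLinearPartAt0 {a b c : ℝ × ℝ → ℝ}
    (ha : HasLinearPartAt0 a ((2 : ℝ) • ContinuousLinearMap.fst ℝ ℝ ℝ))
    (hb : HasLinearPartAt0 b ((2 : ℝ) • ContinuousLinearMap.snd ℝ ℝ ℝ))
    (hc : HasLinearPartAt0 c ((6 : ℝ) • ContinuousLinearMap.fst ℝ ℝ ℝ)) :
    HasSaddleNormalForm (BDE a b c) := by
  have h3 : √(3 : ℝ) * √3 = 3 := Real.mul_self_sqrt (by norm_num)
  have h3' : √(3 : ℝ) ≠ 0 := by positivity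
  let L : ℝ × ℝ →L[ℝ] ℝ × ℝ := (ContinuousLinearMap.fst ℝ ℝ ℝ + ContinuousLinearMap.snd ℝ ℝ ℝ).prod
    (√3 • (ContinuousLinearMap.fst ℝ ℝ ℝ - ContinuousLinearMap.snd ℝ ℝ ℝ))
  have hLp (p : ℝ × ℝ) : L p = (p.1 + p.2, √3 * (p.1 - p.2)) := rfl
  have hL : L.IsInvertible := isInvertible_of_injective <| by
    rw [injective_iff_map_eq_zero]
    intro p hp
    rw [hLp, Prod.mk_eq_zero, mul_eq_zero, or_iff_right h3'] at hp
    exact Prod.ext (by simp only [Prod.fst_zero]; linarith) (by simp only [Prod.snd_zero]; linarith)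
  have hcomb (r s t : ℝ) : HasLinearPartAt0 (fun p => a (L p) * r + b (L p) * s + c (L p) * t)
      ((2 * r + 6 * t) • (ContinuousLinearMap.fst ℝ ℝ ℝ).comp L +
        (2 * s) • (ContinuousLinearMap.snd ℝ ℝ ℝ).comp L) := by
    have hcomp {A : ℝ × ℝ → ℝ} {M : ℝ × ℝ →L[ℝ] ℝ} (hA : HasLinearPartAt0 A M) (r : ℝ) :=
      (hA.comp L.contDiff (map_zero L) L.hasFDerivAt).mul_contDiff (contDiff_const (c := r))
    refine (((hcomp ha r).add (hcomp hb s)).add (hcomp hc t)).congr_linearPart ?_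
    ext <;> simp <;> ring
  have hjet : HasSaddleJet _ _ _ :=
    ⟨(hcomb (1 / 8) (√3 / 12) (1 / 24)).congr_linearPart ?_,
      (hcomb (-(1 / 8)) 0 (1 / 24)).congr_linearPart ?_,
      (hcomb (1 / 8) (-(√3 / 12)) (1 / 24)).congr_linearPart ?_⟩
  · refine hjet.hasSaddleNormalForm hL (k := 24) (by norm_num) fun p w => ?_
    simp only [BDE, hLp w]
    linear_combination a (L p) * (w.1 - w.2) ^ 2 * h3
  · ext
    · simp [L]; linear_combination h3 / 6
    · simp [L]; linear_combination -h3 / 6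
  · ext <;> simp [L] <;> norm_num
  · ext
    · simp [L]; linear_combination -h3 / 6
    · simp [L]; linear_combination h3 / 6

/-! ### The discriminant of a saddle -/

/-- The zero set of `δ` near the origin consists of two smooth branches crossing transversally
there. -/
def HasNodeAt0 (δ : ℝ × ℝ → ℝ) : Prop :=
  ∃ U ∈ nhds (0 : ℝ × ℝ), ∃ γ₁ γ₂ : ℝ → ℝ × ℝ,
    ContDiff ℝ (⊤ : ℕ∞) γ₁ ∧ ContDiff ℝ (⊤ : ℕ∞) γ₂ ∧ γ₁ 0 = 0 ∧ γ₂ 0 = 0 ∧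
    LinearIndependent ℝ ![deriv γ₁ 0, deriv γ₂ 0] ∧
    ∀ p ∈ U, (δ p = 0 ↔ ∃ s ∈ Set.Ioo (-1 : ℝ) 1, γ₁ s = p ∨ γ₂ s = p)

lemma exists_mem_Ioo_smul_eq {ε : ℝ} (hε : 0 < ε) {p : ℝ × ℝ} (hp : p ∈ Metric.ball 0 ε)
    (haxis : p.1 = 0 ∨ p.2 = 0) :
    ∃ s ∈ Ioo (-1 : ℝ) 1, s • (0, ε) = p ∨ s • (ε, 0) = p := by
  have hdiv {x : ℝ} (hx : ‖x‖ ≤ ‖p‖) : x / ε ∈ Ioo (-1 : ℝ) 1 := by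
    rw [mem_Ioo, ← abs_lt, abs_div, abs_of_pos hε, div_lt_one hε]
    exact hx.trans_lt (mem_ball_zero_iff.mp hp)
  rcases haxis with h | h
  · exact ⟨p.2 / ε, hdiv (norm_snd_le p), .inl (Prod.ext (by simp [h]) (by simp [hε.ne']))⟩
  · exact ⟨p.1 / ε, hdiv (norm_fst_le p), .inr (Prod.ext (by simp [hε.ne']) (by simp [h]))⟩

theorem hasNodeAt0_of_comp_eq_zero_iff {δ : ℝ × ℝ → ℝ} {Ψ : ℝ × ℝ → ℝ × ℝ}
    (hΨ : ContDiff ℝ (⊤ : ℕ∞) Ψ) (hΨ₀ : Ψ 0 = 0) (hinv : (fderiv ℝ Ψ 0).IsInvertible)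
    (hδ : ∀ᶠ p in nhds 0, δ (Ψ p) = 0 ↔ p.1 = 0 ∨ p.2 = 0) : HasNodeAt0 δ := by
  obtain ⟨G, hG, hG₀, hsub, -⟩ :=
    exists_openPartialHomeomorph_of_isInvertible_fderiv hΨ (by simp) hinv hδ
  obtain ⟨ε, hε, hball⟩ := Metric.mem_nhds_iff.mp (G.open_source.mem_nhds hG₀)
  have hzero (p) (hp : p ∈ Metric.ball 0 ε) : δ (Ψ p) = 0 ↔ p.1 = 0 ∨ p.2 = 0 := hsub (hball hp)
  have hU : Ψ '' Metric.ball 0 ε ∈ nhds (0 : ℝ × ℝ) := by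
    have := G.image_mem_nhds hG₀ (Metric.ball_mem_nhds 0 hε)
    rwa [hG, hΨ₀] at this
  have hbranch (v : ℝ × ℝ) : ContDiff ℝ (⊤ : ℕ∞) fun s : ℝ => Ψ (s • v) :=
    hΨ.comp (contDiff_id.smul contDiff_const)
  have hderiv (v : ℝ × ℝ) : deriv (fun s : ℝ => Ψ (s • v)) 0 = fderiv ℝ Ψ 0 v := by
    simpa [lineDeriv] using (hΨ.differentiable (by simp) 0).lineDeriv_eq_fderiv (v := v)
  have hmem {s : ℝ} (hs : s ∈ Ioo (-1 : ℝ) 1) {v : ℝ × ℝ} (hv : ‖v‖ = ε) :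
      s • v ∈ Metric.ball 0 ε := by
    rw [mem_ball_zero_iff, norm_smul, hv]
    exact mul_lt_of_lt_one_left hε (abs_lt.mpr hs)
  refine ⟨_, hU, fun s => Ψ (s • (0, ε)), fun s => Ψ (s • (ε, 0)), hbranch _, hbranch _,
    by simpa using hΨ₀, by simpa using hΨ₀, ?_, ?_⟩
  · rw [hderiv, hderiv, LinearIndependent.pair_iff]
    intro s t hst
    rw [← map_smul, ← map_smul, ← map_add, map_eq_zero_iff _ hinv.injective] at hst
    simpa [hε.ne', and_comm] using hst
  · rintro _ ⟨p, hp, rfl⟩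
    constructor
    · intro h
      obtain ⟨s, hs, hsp⟩ := exists_mem_Ioo_smul_eq hε hp ((hzero p hp).mp h)
      exact ⟨s, hs, hsp.imp (congrArg Ψ) (congrArg Ψ)⟩
    · rintro ⟨s, hs, h | h⟩ <;>
        rw [← h, hzero _ (hmem hs (by simp [abs_of_pos hε, hε.le]))] <;> simp

lemma det_ne_zero_of_injective {L : ℝ × ℝ →L[ℝ] ℝ × ℝ} (hL : Function.Injective L) :
    (L (1, 0)).1 * (L (0, 1)).2 - (L (1, 0)).2 * (L (0, 1)).1 ≠ 0 := by
  have hLw (w : ℝ × ℝ) : L w = w.1 • L (1, 0) + w.2 • L (0, 1) := by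
    rw [← map_smul, ← map_smul, ← map_add]
    simp
  intro hdet
  have hsnd : ((L (0, 1)).2, -(L (1, 0)).2) = (0 : ℝ × ℝ) := by
    refine (map_eq_zero_iff L hL).mp ?_
    rw [hLw]
    exact Prod.ext (by simp; linear_combination hdet) (by simp; ring)
  have hfst : ((L (0, 1)).1, -(L (1, 0)).1) = (0 : ℝ × ℝ) := by
    refine (map_eq_zero_iff L hL).mp ?_
    rw [hLw]
    exact Prod.ext (by simp; ring) (by simp; linear_combination -hdet)
  rw [Prod.mk_eq_zero, neg_eq_zero] at hsnd hfst
  have hker : L (1, 0) = 0 := Prod.ext hfst.2 hsnd.2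
  simpa using (map_eq_zero_iff L hL).mp hker

lemma pullbackCoeff_sq_sub_mul {A B C : ℝ × ℝ → ℝ} {ψ : ℝ × ℝ → ℝ × ℝ} (v w p : ℝ × ℝ) :
    pullbackCoeff A B C ψ v w p ^ 2 -
        pullbackCoeff A B C ψ v v p * pullbackCoeff A B C ψ w w p =
      (B (ψ p) ^ 2 - A (ψ p) * C (ψ p)) *
        ((fderiv ℝ ψ p v).1 * (fderiv ℝ ψ p w).2 -
          (fderiv ℝ ψ p v).2 * (fderiv ℝ ψ p w).1) ^ 2 := by
  unfold pullbackCoeff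
  ring

lemma discr_eq_of_forall_bde_eq {a b c a' b' c' : ℝ × ℝ → ℝ} {p : ℝ × ℝ}
    (h : ∀ w, BDE a b c p w = BDE a' b' c' p w) :
    b p ^ 2 - c p * a p = b' p ^ 2 - c' p * a' p := by
  have ha := h (0, 1)
  have hc := h (1, 0)
  have habc := h (1, 1)
  simp only [BDE] at ha hc habc
  have ha' : a p = a' p := by linarith
  have hc' : c p = c' p := by linarith
  have hb' : b p = b' p := by linarith
  rw [ha', hb', hc']

theorem HasSaddleNormalForm.hasNodeAt0 {a b c : ℝ × ℝ → ℝ}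
    (h : HasSaddleNormalForm (BDE a b c)) : HasNodeAt0 fun p => b p ^ 2 - c p * a p := by
  obtain ⟨Ψ, k, α, β, γ, hΨ, hΨ₀, hinv, hk, hα, hβ, hγ, hα₀, hγ₀, hform⟩ := h
  refine hasNodeAt0_of_comp_eq_zero_iff hΨ hΨ₀ hinv ?_
  have hcont : Continuous fun p : ℝ × ℝ => p.1 * p.2 * β p ^ 2 - α p * γ p := by
    have := hα.continuous
    have := hβ.continuous
    have := hγ.continuous
    fun_prop
  have hne : ∀ᶠ p in nhds (0 : ℝ × ℝ), p.1 * p.2 * β p ^ 2 - α p * γ p ≠ 0 :=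
    hcont.continuousAt.eventually_ne (by simp [hα₀, hγ₀])
  filter_upwards [hform, hne, eventually_isInvertible_fderiv hΨ (by simp) hinv]
    with p hp hnep hinvp
  have hsaddle (w : ℝ × ℝ) : k * saddleForm α β γ p w =
      BDE (fun p => k * (p.2 * γ p)) (fun p => k * (p.1 * p.2 * β p))
        (fun p => k * (p.1 * α p)) p w := by
    simp only [saddleForm, BDE]
    ring
  have hdiscr := discr_eq_of_forall_bde_eq (p := p) fun w =>
    (bde_fderiv_apply_eq_bde_pullbackCoeff p w).symm.trans ((hp w).trans (hsaddle w))
  have hfactor : (b (Ψ p) ^ 2 - c (Ψ p) * a (Ψ p)) *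
      ((fderiv ℝ Ψ p (1, 0)).1 * (fderiv ℝ Ψ p (0, 1)).2 -
        (fderiv ℝ Ψ p (1, 0)).2 * (fderiv ℝ Ψ p (0, 1)).1) ^ 2 =
      k ^ 2 * (p.1 * p.2) * (p.1 * p.2 * β p ^ 2 - α p * γ p) := by
    rw [← pullbackCoeff_sq_sub_mul, hdiscr]
    ring
  have hdet := pow_ne_zero 2 (det_ne_zero_of_injective hinvp.injective)
  rw [← mul_eq_zero_iff_right hdet, hfactor]
  simp [hk, hnep]

/-! ### Differentiating jets -/

lemma exists_norm_le_of_isBigO_norm_pow {E F : Type*} [SeminormedAddCommGroup E] [Norm F]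
    {g : E → F} {n : ℕ} (h : g =O[nhds 0] fun x => ‖x‖ ^ n) :
    ∃ C > 0, ∃ r > 0, ∀ y, ‖y‖ < r → ∀ s, ‖y‖ ≤ s → ‖g y‖ ≤ C * s ^ n := by
  obtain ⟨C, hC, hbound⟩ := h.exists_pos
  obtain ⟨r, hr, hball⟩ := Metric.eventually_nhds_iff_ball.mp hbound.bound
  refine ⟨C, hC, r, hr, fun y hy s hys => (hball y (mem_ball_zero_iff.mpr hy)).trans ?_⟩
  rw [norm_pow, norm_norm]
  gcongr

lemma eq_zero_of_isLittleO_nhds {α E F : Type*} [TopologicalSpace α] [NormedAddCommGroup E]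
    [NormedAddCommGroup F] {a : α} {g : α → E} {φ : α → F} (h : g =o[nhds a] φ) : g a = 0 :=
  isLittleO_pure.mp (h.mono (pure_le_nhds a))

lemma norm_pow_isBigO_norm_pow {E : Type*} [SeminormedAddCommGroup E] {m n : ℕ} (hmn : m ≤ n) :
    (fun x : E => ‖x‖ ^ n) =O[nhds 0] fun x => ‖x‖ ^ m := by
  refine .of_bound 1 ?_
  filter_upwards [Metric.ball_mem_nhds (0 : E) one_pos] with x hx
  rw [mem_ball_zero_iff] at hx
  rw [norm_pow, norm_pow, one_mul, norm_norm]
  exact pow_le_pow_of_le_one (norm_nonneg _) hx.le hmn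

section VanishingOrder

universe u

variable {E F : Type u} [NormedAddCommGroup E] [NormedSpace ℝ E] [NormedAddCommGroup F]
  [NormedSpace ℝ F] {g : E → F} {n : ℕ}

lemma isBigO_norm_pow_succ_of_fderiv (hg : ContDiff ℝ 1 g) (hg0 : g 0 = 0)
    (h : fderiv ℝ g =O[nhds 0] fun x => ‖x‖ ^ n) : g =O[nhds 0] fun x => ‖x‖ ^ (n + 1) := by
  obtain ⟨C, -, r, hr, hbound⟩ := exists_norm_le_of_isBigO_norm_pow h
  refine .of_bound C ?_
  filter_upwards [Metric.ball_mem_nhds 0 hr] with x hx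
  have hfderiv : ∀ y ∈ Metric.closedBall (0 : E) ‖x‖, ‖fderiv ℝ g y‖ ≤ C * ‖x‖ ^ n := by
    intro y hy
    rw [mem_closedBall_zero_iff] at hy
    exact hbound y (hy.trans_lt (mem_ball_zero_iff.mp hx)) _ hy
  have hmean := (convex_closedBall (0 : E) ‖x‖).norm_image_sub_le_of_norm_fderiv_le
    (fun y _ => hg.differentiable one_ne_zero y) hfderiv (x := 0) (y := x) (by simp) (by simp)
  simpa [hg0, pow_succ, mul_assoc] using hmean

lemma norm_fderiv_apply_le (hg : ContDiff ℝ 2 g) {x u : E} {K : ℝ}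
    (hK : ∀ z ∈ Metric.closedBall x ‖u‖, ‖fderiv ℝ (fderiv ℝ g) z‖ ≤ K) :
    ‖fderiv ℝ g x u‖ ≤ ‖g (x + u)‖ + ‖g x‖ + K * ‖u‖ ^ 2 := by
  have hK0 : 0 ≤ K := (norm_nonneg (fderiv ℝ (fderiv ℝ g) x)).trans
    (hK x (Metric.mem_closedBall_self (norm_nonneg _)))
  have hfderiv : ∀ z ∈ Metric.closedBall x ‖u‖, ‖fderiv ℝ g z - fderiv ℝ g x‖ ≤ K * ‖u‖ := by
    intro z hz
    refine ((convex_closedBall x ‖u‖).norm_image_sub_le_of_norm_fderiv_le (fun y _ =>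
      (hg.fderiv_right (m := 1) le_rfl).differentiable one_ne_zero y) hK
      (Metric.mem_closedBall_self (norm_nonneg _)) hz).trans ?_
    gcongr
    exact mem_closedBall_iff_norm.mp hz
  have hmean := (convex_closedBall x ‖u‖).norm_image_sub_le_of_norm_fderiv_le'
    (fun y _ => hg.differentiable two_ne_zero y) hfderiv
    (Metric.mem_closedBall_self (norm_nonneg _))
    (y := x + u) (by simp)
  rw [add_sub_cancel_left] at hmean
  calc ‖fderiv ℝ g x u‖ = ‖g (x + u) - g x - (g (x + u) - g x - fderiv ℝ g x u)‖ := by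
        rw [sub_sub_cancel]
    _ ≤ ‖g (x + u)‖ + ‖g x‖ + K * ‖u‖ * ‖u‖ :=
        (norm_sub_le _ _).trans (add_le_add (norm_sub_le _ _) hmean)
    _ = ‖g (x + u)‖ + ‖g x‖ + K * ‖u‖ ^ 2 := by ring

lemma norm_fderiv_le_of_norm_le (hg : ContDiff ℝ 2 g) {x : E} (hx : x ≠ 0) {C η ε : ℝ}
    (hC : 0 ≤ C) (hη : 0 ≤ η) (hε : 0 < ε) (hε1 : ε ≤ 1)
    (hgbound : ∀ y, ‖y‖ ≤ 2 * ‖x‖ → ‖g y‖ ≤ η * ‖y‖ ^ (n + 2))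
    (hDbound : ∀ y, ‖y‖ ≤ 2 * ‖x‖ → ‖fderiv ℝ (fderiv ℝ g) y‖ ≤ C * (2 * ‖x‖) ^ n) :
    ‖fderiv ℝ g x‖ ≤ (η * (2 ^ (n + 2) + 1) / ε + C * 2 ^ n * ε) * ‖x‖ ^ (n + 1) := by
  have hx0 : 0 < ‖x‖ := norm_pos_iff.mpr hx
  refine ContinuousLinearMap.opNorm_le_of_unit_norm (by positivity) fun v hv => ?_
  have hu : ‖(ε * ‖x‖) • v‖ = ε * ‖x‖ := by
    rw [norm_smul, hv, mul_one, Real.norm_of_nonneg (by positivity)]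
  have hεx : ε * ‖x‖ ≤ ‖x‖ := mul_le_of_le_one_left hx0.le hε1
  have hxu : ‖x + (ε * ‖x‖) • v‖ ≤ 2 * ‖x‖ := (norm_add_le _ _).trans (by linarith)
  have hmain := norm_fderiv_apply_le hg (x := x) (u := (ε * ‖x‖) • v) fun z hz =>
    hDbound z (by
      have := norm_le_norm_add_norm_sub' z x
      have := mem_closedBall_iff_norm.mp hz
      linarith)
  rw [map_smul, norm_smul, Real.norm_of_nonneg (by positivity), hu] at hmain
  refine le_of_mul_le_mul_left ?_ (mul_pos hε hx0)
  calc ε * ‖x‖ * ‖fderiv ℝ g x v‖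
      ≤ η * (2 * ‖x‖) ^ (n + 2) + η * ‖x‖ ^ (n + 2) + C * (2 * ‖x‖) ^ n * (ε * ‖x‖) ^ 2 := by
        refine hmain.trans (add_le_add_left (add_le_add ?_ (hgbound x (by linarith))) _)
        exact (hgbound _ hxu).trans (by gcongr)
    _ = ε * ‖x‖ * ((η * (2 ^ (n + 2) + 1) / ε + C * 2 ^ n * ε) * ‖x‖ ^ (n + 1)) := by
        field_simp
        ring

-- Differentiate along increments of length `ε‖x‖`: the second-order remainder is then of order
-- `ε‖x‖ ^ (n + 1)`, and the difference quotient is small because `g` is `o(‖x‖ ^ (n + 2))`.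
lemma fderiv_isLittleO_of_isBigO_fderiv_fderiv (hg : ContDiff ℝ 2 g)
    (h : g =o[nhds 0] fun x => ‖x‖ ^ (n + 2))
    (hD : fderiv ℝ (fderiv ℝ g) =O[nhds 0] fun x => ‖x‖ ^ n) :
    fderiv ℝ g =o[nhds 0] fun x => ‖x‖ ^ (n + 1) := by
  obtain ⟨C, hC, r, hr, hDbound⟩ :=
    exists_norm_le_of_isBigO_norm_pow (g := fderiv ℝ (fderiv ℝ g)) hD
  refine isLittleO_iff.mpr fun c hc => ?_
  set ε := min 1 (c / (2 * (C * 2 ^ n)))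
  have hε : 0 < ε := by positivity
  set η := c * ε / (2 * (2 ^ (n + 2) + 1))
  obtain ⟨s, hs, hgbound⟩ := Metric.eventually_nhds_iff_ball.mp (h.def (c := η) (by positivity))
  have hcoeff : η * (2 ^ (n + 2) + 1) / ε + C * 2 ^ n * ε ≤ c := by
    have h1 : η * (2 ^ (n + 2) + 1) / ε = c / 2 := by simp only [η]; field_simp
    have h2 : C * 2 ^ n * ε ≤ c / 2 := by
      refine (mul_le_mul_of_nonneg_left (min_le_right _ _) (by positivity)).trans_eq ?_
      field_simp
    linarith
  filter_upwards [Metric.ball_mem_nhds 0 (half_pos hr), Metric.ball_mem_nhds 0 (half_pos hs)]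
    with x hxr hxs
  rw [mem_ball_zero_iff] at hxr hxs
  rw [norm_pow, norm_norm]
  rcases eq_or_ne x 0 with rfl | hx
  · have : HasFDerivAt g (0 : E →L[ℝ] F) 0 :=
      IsBigO.hasFDerivAt (n := n + 2) (by simpa using h.isBigO) (by omega)
    simp [this.fderiv]
  refine (norm_fderiv_le_of_norm_le hg hx hC.le (η := η) (by positivity) hε (min_le_left _ _)
    (fun y hy => ?_) fun y hy => hDbound y (by linarith) _ hy).trans (by gcongr)
  simpa using hgbound y (mem_ball_zero_iff.mpr (by linarith))

lemma fderiv_zero_eq_zero_of_isLittleO (h : g =o[nhds 0] fun x => ‖x‖) : fderiv ℝ g 0 = 0 := by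
  have hg0 := eq_zero_of_isLittleO_nhds h
  exact (hasFDerivAt_iff_isLittleO.mpr (by simpa [hg0] using h.of_norm_right)).fderiv

mutual

theorem fderiv_isLittleO_norm_pow {F : Type u} [NormedAddCommGroup F] [NormedSpace ℝ F]
    {g : E → F} (hg : ContDiff ℝ (⊤ : ℕ∞) g) :
    ∀ {n : ℕ}, g =o[nhds 0] (fun x => ‖x‖ ^ (n + 1)) → fderiv ℝ g =o[nhds 0] fun x => ‖x‖ ^ n
  | 0, h => by
    have hcont : ContinuousAt (fderiv ℝ g) 0 := (hg.continuous_fderiv (by simp)).continuousAt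
    rw [ContinuousAt, fderiv_zero_eq_zero_of_isLittleO (by simpa using h)] at hcont
    simpa using (isLittleO_one_iff ℝ).mpr hcont
  | 1, h => by
    have hDg : ContDiff ℝ (⊤ : ℕ∞) (fderiv ℝ g) := hg.fderiv_right (by simp)
    refine fderiv_isLittleO_of_isBigO_fderiv_fderiv (contDiff_infty.mp hg 2) h ?_
    simpa using (hDg.continuous_fderiv (by simp)).continuousAt.norm.isBoundedUnder_le.isBigO_one ℝ
  | n + 2, h => by
    have hDg : ContDiff ℝ (⊤ : ℕ∞) (fderiv ℝ g) := hg.fderiv_right (by simp)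
    have hDo := fderiv_isLittleO_norm_pow hg
      (h.trans_isBigO (norm_pow_isBigO_norm_pow (Nat.le_succ (n + 2))))
    exact fderiv_isLittleO_of_isBigO_fderiv_fderiv (contDiff_infty.mp hg 2) h
      (isBigO_norm_pow_succ (hDg.fderiv_right (by simp)) (fderiv_isLittleO_norm_pow hDg hDo))

theorem isBigO_norm_pow_succ {F : Type u} [NormedAddCommGroup F] [NormedSpace ℝ F]
    {g : E → F} (hg : ContDiff ℝ (⊤ : ℕ∞) g) :
    ∀ {n : ℕ}, g =o[nhds 0] (fun x => ‖x‖ ^ n) → g =O[nhds 0] fun x => ‖x‖ ^ (n + 1)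
  | 0, h => by
    have hO := (hg.differentiable (by simp) 0).isBigO_sub
    simpa [eq_zero_of_isLittleO_nhds h] using hO.norm_right
  | n + 1, h =>
    isBigO_norm_pow_succ_of_fderiv (contDiff_infty.mp hg 1) (eq_zero_of_isLittleO_nhds h)
      (isBigO_norm_pow_succ (hg.fderiv_right (by simp)) (fderiv_isLittleO_norm_pow hg h))

end

end VanishingOrder

section PartialDerivatives

variable {g P : ℝ × ℝ → ℝ} {n : ℕ}

lemma pdx_eq_fderiv_apply (hg : Differentiable ℝ g) : pdx g = fun p => fderiv ℝ g p (1, 0) := by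
  funext p
  have hline : HasDerivAt (fun s : ℝ => (s, p.2)) (1, 0) p.1 :=
    (hasDerivAt_id _).prodMk (hasDerivAt_const _ _)
  exact (HasFDerivAt.comp_hasDerivAt (f := fun s : ℝ => (s, p.2)) p.1 (hg p).hasFDerivAt
    hline).deriv

lemma pdy_eq_fderiv_apply (hg : Differentiable ℝ g) : pdy g = fun p => fderiv ℝ g p (0, 1) := by
  funext p
  have hline : HasDerivAt (fun s : ℝ => (p.1, s)) (0, 1) p.2 :=
    (hasDerivAt_const _ _).prodMk (hasDerivAt_id _)
  exact (HasFDerivAt.comp_hasDerivAt (f := fun s : ℝ => (p.1, s)) p.2 (hg p).hasFDerivAt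
    hline).deriv

lemma contDiff_fderiv_apply (hg : ContDiff ℝ (⊤ : ℕ∞) g) (v : ℝ × ℝ) :
    ContDiff ℝ (⊤ : ℕ∞) fun p => fderiv ℝ g p v :=
  (hg.fderiv_right (by simp)).clm_apply contDiff_const

lemma contDiff_pdx (hg : ContDiff ℝ (⊤ : ℕ∞) g) : ContDiff ℝ (⊤ : ℕ∞) (pdx g) :=
  pdx_eq_fderiv_apply (hg.differentiable (by simp)) ▸ contDiff_fderiv_apply hg (1, 0)

lemma contDiff_pdy (hg : ContDiff ℝ (⊤ : ℕ∞) g) : ContDiff ℝ (⊤ : ℕ∞) (pdy g) :=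
  pdy_eq_fderiv_apply (hg.differentiable (by simp)) ▸ contDiff_fderiv_apply hg (0, 1)

namespace HasJetAt0

lemma apply_zero (h : HasJetAt0 g P n) : g 0 = P 0 :=
  sub_eq_zero.mp (eq_zero_of_isLittleO_nhds (g := fun p => g p - P p) h)

lemma fderiv_apply (h : HasJetAt0 g P (n + 1)) (hg : ContDiff ℝ (⊤ : ℕ∞) g)
    (hP : ContDiff ℝ (⊤ : ℕ∞) P) (v : ℝ × ℝ) :
    HasJetAt0 (fun p => fderiv ℝ g p v) (fun p => fderiv ℝ P p v) n := by
  have happly : (fun p => fderiv ℝ g p v - fderiv ℝ P p v) =O[nhds 0]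
      fderiv ℝ fun p => g p - P p := by
    refine .of_bound ‖v‖ (Eventually.of_forall fun p => ?_)
    rw [fderiv_fun_sub (hg.differentiable (by simp) p) (hP.differentiable (by simp) p), mul_comm,
      ← sub_apply]
    exact ContinuousLinearMap.le_opNorm _ _
  exact happly.trans_isLittleO (fderiv_isLittleO_norm_pow (hg.sub hP) h)

lemma pdx (h : HasJetAt0 g P (n + 1)) (hg : ContDiff ℝ (⊤ : ℕ∞) g)
    (hP : ContDiff ℝ (⊤ : ℕ∞) P) : HasJetAt0 (pdx g) (pdx P) n := by
  rw [pdx_eq_fderiv_apply (hg.differentiable (by simp)),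
    pdx_eq_fderiv_apply (hP.differentiable (by simp))]
  exact h.fderiv_apply hg hP (1, 0)

lemma pdy (h : HasJetAt0 g P (n + 1)) (hg : ContDiff ℝ (⊤ : ℕ∞) g)
    (hP : ContDiff ℝ (⊤ : ℕ∞) P) : HasJetAt0 (pdy g) (pdy P) n := by
  rw [pdy_eq_fderiv_apply (hg.differentiable (by simp)),
    pdy_eq_fderiv_apply (hP.differentiable (by simp))]
  exact h.fderiv_apply hg hP (0, 1)

lemma hasLinearPartAt0 {L : ℝ × ℝ →L[ℝ] ℝ} (h : HasJetAt0 g L 1) (hg : ContDiff ℝ (⊤ : ℕ∞) g) :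
    HasLinearPartAt0 g L where
  contDiff := hg
  map_zero := h.apply_zero.trans (map_zero L)
  hasFDerivAt := by
    have hg0 : g 0 = 0 := h.apply_zero.trans (map_zero L)
    refine hasFDerivAt_iff_isLittleO.mpr ?_
    simpa [HasJetAt0, hg0, ← isLittleO_norm_right (g' := fun p : ℝ × ℝ => p)] using h

end HasJetAt0

end PartialDerivatives

lemma HasLinearPartAt0.hasJetAt0_mul {g h : ℝ × ℝ → ℝ} {L M : ℝ × ℝ →L[ℝ] ℝ}
    (hg : HasLinearPartAt0 g L) (hh : HasLinearPartAt0 h M) :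
    HasJetAt0 (fun p => g p * h p) (fun p => L p * M p) 2 := by
  have hgL : (fun p => g p - L p) =o[nhds 0] fun p : ℝ × ℝ => ‖p‖ := by
    simpa [hg.map_zero] using hg.hasFDerivAt.isLittleO.norm_right
  have hhM : (fun p => h p - M p) =o[nhds 0] fun p : ℝ × ℝ => ‖p‖ := by
    simpa [hh.map_zero] using hh.hasFDerivAt.isLittleO.norm_right
  have hhO : h =O[nhds 0] fun p : ℝ × ℝ => ‖p‖ := by
    simpa [hh.map_zero] using hh.hasFDerivAt.isBigO_sub.norm_right
  have hLO : L =O[nhds 0] fun p : ℝ × ℝ => ‖p‖ := (L.isBigO_id _).norm_right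
  refine (((hgL.mul_isBigO hhO).add (hLO.mul_isLittleO hhM)).congr_left fun p => ?_).congr_right
    fun p => (sq _).symm
  ring

/-! ### The flat umbilic with one real root direction -/

/-- The binary cubic `xy² + x³`, which has a single real root direction. -/
def oneRootCubic (p : ℝ × ℝ) : ℝ := p.1 * p.2 ^ 2 + p.1 ^ 3

lemma contDiff_oneRootCubic : ContDiff ℝ (⊤ : ℕ∞) oneRootCubic := by
  unfold oneRootCubic
  fun_prop

lemma pdx_oneRootCubic : pdx oneRootCubic = fun p => p.2 ^ 2 + 3 * p.1 ^ 2 := by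
  funext p
  simp [pdx, oneRootCubic]

lemma pdy_oneRootCubic : pdy oneRootCubic = fun p => 2 * p.1 * p.2 := by
  funext p
  simp [pdy, oneRootCubic, mul_assoc, mul_left_comm]

lemma fxx_oneRootCubic : fxx oneRootCubic = ((6 : ℝ) • .fst ℝ ℝ ℝ : ℝ × ℝ →L[ℝ] ℝ) := by
  funext p
  rw [fxx, pdx_oneRootCubic]
  norm_num [pdx, ← mul_assoc]

lemma fxy_oneRootCubic : fxy oneRootCubic = ((2 : ℝ) • .snd ℝ ℝ ℝ : ℝ × ℝ →L[ℝ] ℝ) := by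
  funext p
  rw [fxy, pdx_oneRootCubic]
  simp [pdy]

lemma fyy_oneRootCubic : fyy oneRootCubic = ((2 : ℝ) • .fst ℝ ℝ ℝ : ℝ × ℝ →L[ℝ] ℝ) := by
  funext p
  rw [fyy, pdy_oneRootCubic]
  simp [pdy]

section

variable {f : ℝ × ℝ → ℝ} (hf : ContDiff ℝ (⊤ : ℕ∞) f)
include hf

lemma contDiff_bdeDiscr : ContDiff ℝ (⊤ : ℕ∞) (bdeDiscr f) :=
  ((contDiff_pdy (contDiff_pdx hf)).pow 2).sub
    ((contDiff_pdx (contDiff_pdx hf)).mul (contDiff_pdy (contDiff_pdy hf)))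

variable (hjet : HasJetAt0 f oneRootCubic 3)
include hjet

lemma hasLinearPartAt0_fxx : HasLinearPartAt0 (fxx f) ((6 : ℝ) • .fst ℝ ℝ ℝ) := by
  have h := (hjet.pdx hf contDiff_oneRootCubic).pdx (contDiff_pdx hf)
    (contDiff_pdx contDiff_oneRootCubic)
  exact HasJetAt0.hasLinearPartAt0 (fxx_oneRootCubic ▸ h) (contDiff_pdx (contDiff_pdx hf))

lemma hasLinearPartAt0_fxy : HasLinearPartAt0 (fxy f) ((2 : ℝ) • .snd ℝ ℝ ℝ) := by
  have h := (hjet.pdx hf contDiff_oneRootCubic).pdy (contDiff_pdx hf)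
    (contDiff_pdx contDiff_oneRootCubic)
  exact HasJetAt0.hasLinearPartAt0 (fxy_oneRootCubic ▸ h) (contDiff_pdy (contDiff_pdx hf))

lemma hasLinearPartAt0_fyy : HasLinearPartAt0 (fyy f) ((2 : ℝ) • .fst ℝ ℝ ℝ) := by
  have h := (hjet.pdy hf contDiff_oneRootCubic).pdy (contDiff_pdy hf)
    (contDiff_pdy contDiff_oneRootCubic)
  exact HasJetAt0.hasLinearPartAt0 (fyy_oneRootCubic ▸ h) (contDiff_pdy (contDiff_pdy hf))

lemma hasSaddleNormalForm_asymBDE : HasSaddleNormalForm (asymBDE f) :=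
  hasSaddleNormalForm_bde_of_hasLinearPartAt0 (hasLinearPartAt0_fyy hf hjet)
    (hasLinearPartAt0_fxy hf hjet) (hasLinearPartAt0_fxx hf hjet)

lemma hasJetAt0_bdeDiscr : HasJetAt0 (bdeDiscr f) (fun p => 4 * p.2 ^ 2 - 12 * p.1 ^ 2) 2 := by
  have hxy := hasLinearPartAt0_fxy hf hjet
  refine ((hxy.hasJetAt0_mul hxy).sub ((hasLinearPartAt0_fxx hf hjet).hasJetAt0_mul
    (hasLinearPartAt0_fyy hf hjet))).congr_left fun p => ?_
  simp only [bdeDiscr, smul_apply, smul_eq_mul, ContinuousLinearMap.coe_fst',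
    ContinuousLinearMap.coe_snd']
  ring

end

section

variable {δ : ℝ × ℝ → ℝ} {a b : ℝ}

lemma pdx_sub_sq : pdx (fun p => a * p.2 ^ 2 - b * p.1 ^ 2) = fun p => -2 * b * p.1 := by
  funext p
  simp [pdx, mul_assoc, mul_left_comm]

lemma pdy_sub_sq : pdy (fun p => a * p.2 ^ 2 - b * p.1 ^ 2) = fun p => 2 * a * p.2 := by
  funext p
  simp [pdy, mul_assoc, mul_left_comm]

variable (hδ : ContDiff ℝ (⊤ : ℕ∞) δ)
  (hjet : HasJetAt0 δ (fun p => a * p.2 ^ 2 - b * p.1 ^ 2) 2)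
include hδ hjet

lemma HasJetAt0.pdx_of_sub_sq : HasJetAt0 (_root_.pdx δ) (fun p => -2 * b * p.1) 1 :=
  pdx_sub_sq (a := a) (b := b) ▸ hjet.pdx hδ (by fun_prop)

lemma HasJetAt0.pdy_of_sub_sq : HasJetAt0 (_root_.pdy δ) (fun p => 2 * a * p.2) 1 :=
  pdy_sub_sq (a := a) (b := b) ▸ hjet.pdy hδ (by fun_prop)

lemma HasJetAt0.pdx_pdx_zero_of_sub_sq : _root_.pdx (_root_.pdx δ) 0 = -2 * b := by
  simpa [_root_.pdx] using
    ((hjet.pdx_of_sub_sq hδ).pdx (contDiff_pdx hδ) (by fun_prop)).apply_zero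

lemma HasJetAt0.pdy_pdy_zero_of_sub_sq : _root_.pdy (_root_.pdy δ) 0 = 2 * a := by
  simpa [_root_.pdy] using
    ((hjet.pdy_of_sub_sq hδ).pdy (contDiff_pdy hδ) (by fun_prop)).apply_zero

end

lemma HasJetAt0.of_add_isLittleO {f P Q : ℝ × ℝ → ℝ} {m n : ℕ}
    (h : HasJetAt0 f (fun p => P p + Q p) n) (hmn : m ≤ n) (hQ : Q =o[nhds 0] fun p => ‖p‖ ^ m) :
    HasJetAt0 f P m :=
  ((h.trans_isBigO (norm_pow_isBigO_norm_pow hmn)).add hQ).congr_left fun p => by ring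

lemma fst_pow_mul_snd_pow_isLittleO {i j m : ℕ} (hm : m < i + j) :
    (fun p : ℝ × ℝ => p.1 ^ i * p.2 ^ j) =o[nhds 0] fun p => ‖p‖ ^ m := by
  refine IsBigO.trans_isLittleO (g := fun p : ℝ × ℝ => ‖p‖ ^ (i + j)) (.of_norm_le fun p => ?_)
    (isLittleO_norm_pow_norm_pow hm)
  rw [norm_mul, norm_pow, norm_pow, pow_add]
  gcongr
  exacts [norm_fst_le p, norm_snd_le p]

lemma HasJetAt0.oneRootCubic_of_quartic {f : ℝ × ℝ → ℝ} {α β : ℝ}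
    (h : HasJetAt0 f
      (fun p => p.1 * p.2 ^ 2 + p.1 ^ 3 + α * p.1 ^ 3 * p.2 + β * p.2 ^ 4) 4) :
    HasJetAt0 f oneRootCubic 3 := by
  have hα := (fst_pow_mul_snd_pow_isLittleO (i := 3) (j := 1) (m := 3) (by simp)).const_mul_left α
  have hβ := (fst_pow_mul_snd_pow_isLittleO (i := 0) (j := 4) (m := 3) (by simp)).const_mul_left β
  simp only [pow_zero, one_mul, pow_one, ← mul_assoc] at hα hβ
  exact (h.of_add_isLittleO (by simp) hβ).of_add_isLittleO le_rfl hα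

theorem stmt7_general (f : ℝ × ℝ → ℝ) (hf : ContDiff ℝ (⊤ : ℕ∞) f)
    (hjet : HasJetAt0 f (fun p => p.1 * p.2 ^ 2 + p.1 ^ 3) 3) :
    bdeDiscr f 0 = 0 ∧
    (pdx (bdeDiscr f) 0, pdy (bdeDiscr f) 0) = (0, 0) ∧
    HasJetAt0 (bdeDiscr f) (fun p => 4 * p.2 ^ 2 - 12 * p.1 ^ 2) 2 ∧
    (∃ v w : ℝ × ℝ,
      pdx (pdx (bdeDiscr f)) 0 * v.1 ^ 2 + 2 * pdy (pdx (bdeDiscr f)) 0 * v.1 * v.2 +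
        pdy (pdy (bdeDiscr f)) 0 * v.2 ^ 2 > 0 ∧
      pdx (pdx (bdeDiscr f)) 0 * w.1 ^ 2 + 2 * pdy (pdx (bdeDiscr f)) 0 * w.1 * w.2 +
        pdy (pdy (bdeDiscr f)) 0 * w.2 ^ 2 < 0) ∧
    HasNodeAt0 (bdeDiscr f) ∧
    TopEquivAt0 (asymBDE f) (BDE (fun p => p.2) (fun p => p.1) (fun p => p.2)) := by
  have hδ := contDiff_bdeDiscr hf
  have hδjet := hasJetAt0_bdeDiscr hf hjet
  have hsaddle := hasSaddleNormalForm_asymBDE hf hjet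
  refine ⟨by simpa using hδjet.apply_zero, ?_, hδjet, ⟨(0, 1), (1, 0), ?_, ?_⟩,
    hsaddle.hasNodeAt0, hsaddle.topEquivAt0 hasSaddleNormalForm_bde_snd_fst_snd⟩
  · simpa using And.intro (hδjet.pdx_of_sub_sq hδ).apply_zero (hδjet.pdy_of_sub_sq hδ).apply_zero
  · simp [hδjet.pdy_pdy_zero_of_sub_sq hδ]
  · simp [hδjet.pdx_pdx_zero_of_sub_sq hδ]

/-- class `Π^f_1` (one real root direction): for smooth `f` with
`j⁴f(0) = xy² + x³ + αx³y + βy⁴`, the discriminant `δ` vanishes to first order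
at `0`, `j²δ(0) = 4y² − 12x²` (so `Hess δ(0)` is indefinite and the parabolic
set has a node at the origin), and the asymptotic BDE of `f` is topologically
equivalent at `0` to the 1-saddle BDE `y dy² + 2x dxdy + y dx² = 0`. -/
theorem stmt7 (α β : ℝ) (f : ℝ × ℝ → ℝ) (hf : ContDiff ℝ (⊤ : ℕ∞) f)
    (hjet : HasJetAt0 f
      (fun p => p.1 * p.2 ^ 2 + p.1 ^ 3 + α * p.1 ^ 3 * p.2 + β * p.2 ^ 4) 4) :
    bdeDiscr f 0 = 0 ∧
    (pdx (bdeDiscr f) 0, pdy (bdeDiscr f) 0) = (0, 0) ∧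
    HasJetAt0 (bdeDiscr f) (fun p => 4 * p.2 ^ 2 - 12 * p.1 ^ 2) 2 ∧
    -- the Hessian of δ at 0 is indefinite
    (∃ v w : ℝ × ℝ,
      pdx (pdx (bdeDiscr f)) 0 * v.1 ^ 2 + 2 * pdy (pdx (bdeDiscr f)) 0 * v.1 * v.2 +
        pdy (pdy (bdeDiscr f)) 0 * v.2 ^ 2 > 0 ∧
      pdx (pdx (bdeDiscr f)) 0 * w.1 ^ 2 + 2 * pdy (pdx (bdeDiscr f)) 0 * w.1 * w.2 +
        pdy (pdy (bdeDiscr f)) 0 * w.2 ^ 2 < 0) ∧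
    -- the parabolic set has a node (two transverse smooth branches) at the origin
    (∃ U ∈ nhds (0 : ℝ × ℝ), ∃ γ₁ γ₂ : ℝ → ℝ × ℝ,
      ContDiff ℝ (⊤ : ℕ∞) γ₁ ∧ ContDiff ℝ (⊤ : ℕ∞) γ₂ ∧ γ₁ 0 = 0 ∧ γ₂ 0 = 0 ∧
      LinearIndependent ℝ ![deriv γ₁ 0, deriv γ₂ 0] ∧
      ∀ p ∈ U, (bdeDiscr f p = 0 ↔ ∃ s ∈ Set.Ioo (-1 : ℝ) 1, γ₁ s = p ∨ γ₂ s = p)) ∧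
    TopEquivAt0 (asymBDE f)
      (BDE (fun p => p.2) (fun p => p.1) (fun p => p.2)) := by
  exact stmt7_general f hf hjet.oneRootCubic_of_quartic
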